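/- For N ∈ ℕ, let A(N) be the number of Gaussian primes 𝔭 = x + yi with |x| ≤ N and |y| ≤ N that are congruent to −1−6i modulo 16, and let B(N) be the total number of Gaussian primes 𝔭 = x + yi with |x| ≤ N and |y| ≤ N. Then the ratio A(N)/B(N) converges to 1/128 as N → ∞. -/

import Mathlib

noncomputable section

/-- The imaginary unit `i` as a Gaussian integer, so `ℤ[i] = ℤ + ℤ·gi`. -/
def gi : GaussianInt := ⟨0, 1⟩

/-- A Gaussian prime congruent to `-1 - 6i` modulo `16`. -/
def GoodPrime (π : GaussianInt) : Prop :=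
  Prime π ∧ (16 : GaussianInt) ∣ (π - (-1 - 6 * gi))

/-- The number of Gaussian primes `x + yi` with `|x| ≤ N`, `|y| ≤ N` that are congruent to
`-1 - 6i` modulo `16`. -/
def Acount (N : ℕ) : ℕ :=
  Set.ncard {z : GaussianInt | Prime z ∧ |z.re| ≤ (N : ℤ) ∧ |z.im| ≤ (N : ℤ) ∧
    (16 : GaussianInt) ∣ (z - (-1 - 6 * gi))}

/-- The total number of Gaussian primes `x + yi` with `|x| ≤ N`, `|y| ≤ N`. -/
def Bcount (N : ℕ) : ℕ :=
  Set.ncard {z : GaussianInt | Prime z ∧ |z.re| ≤ (N : ℤ) ∧ |z.im| ≤ (N : ℤ)}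

/-!
The primes in a residue class are detected by the Hecke characters `z ↦ χ(z) (z/|z|)^k`, where `χ`
is a character modulo `m` and `k` is an integer. When periodic coefficients sum to zero over a
period, the terms of their Dirichlet series can be replaced by differences, which converge to the
left of `re s = 1`; this continues the `L`-function of a Hecke character across that line, after
multiplication by an Euler factor `1 - (α/|α|)^k N(α)^(1-s)` if `χ` is trivial. There is no zero on
the line `re s = 1`: this is the `3`-`4`-`1` inequality, except at `s = 1` for a quadratic `χ` with
`k = 0`, where Landau's lemma is applied to the product with the zeta function, whose coefficients
are nonnegative and at least `1` at squares.

By the Wiener–Ikehara theorem the primes in each reduced class, weighted by `log N(p)` and ordered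
by norm, have the same main term and are equidistributed in direction. Counting in boxes divides the
norm by a continuous function of the direction, so it scales every main term by the same constant.
Removing the logarithm gives each reduced class modulo `m` the density `1 / φ(m)`, and
`φ(16) = φ((1 + i)^8) = 2^8 - 2^7 = 128`.
-/

section WienerIkehara

open Filter Topology MeasureTheory Set Complex

/-- The Fejér kernel `(sin (y / 2) / (y / 2)) ^ 2`, the Fourier transform of the triangle function
`1 - |t|` on `[-1, 1]`. It is not normalised: its integral is `fejerMass`. -/
def fejer (y : ℝ) : ℝ := Real.sinc (y / 2) ^ 2

/-- The total mass of the Fejér kernel. -/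
def fejerMass : ℝ := ∫ y, fejer y

/-- The mass that the Fejér kernel gives to the interval `[-M, M]`. -/
def fejerMassOn (M : ℝ) : ℝ := ∫ y in (-M)..M, fejer y

lemma fejer_nonneg (y : ℝ) : 0 ≤ fejer y := sq_nonneg _

lemma fejer_le_one (y : ℝ) : fejer y ≤ 1 := by
  rw [fejer, sq_le_one_iff_abs_le_one]
  exact Real.abs_sinc_le_one _

@[fun_prop]
lemma continuous_fejer : Continuous fejer := by
  unfold fejer
  fun_prop

lemma fejer_le_inv_one_add_sq (y : ℝ) : fejer y ≤ 5 * (1 + y ^ 2)⁻¹ := by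
  have hdecay : y ^ 2 * fejer y ≤ 4 := by
    rcases eq_or_ne y 0 with rfl | hy
    · norm_num
    · rw [fejer, Real.sinc_of_ne_zero (by simpa using hy), div_pow, div_pow]
      field_simp
      nlinarith [Real.sin_sq_le_one (y / 2)]
  rw [← div_eq_mul_inv, le_div_iff₀ (by positivity)]
  linarith [fejer_le_one y]

lemma integrable_fejer : Integrable fejer := by
  refine (integrable_inv_one_add_sq.const_mul 5).mono' continuous_fejer.aestronglyMeasurable ?_
  filter_upwards with y
  rw [Real.norm_of_nonneg (fejer_nonneg y)]
  exact fejer_le_inv_one_add_sq y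

lemma integral_one_sub_mul_cos (y : ℝ) :
    ∫ t in (0 : ℝ)..1, (1 - t) * Real.cos (t * y) = fejer y / 2 := by
  rcases eq_or_ne y 0 with rfl | hy
  · simp only [mul_zero, Real.cos_zero, mul_one, fejer, zero_div, Real.sinc_zero]
    rw [intervalIntegral.integral_sub (by simp) (by simp)]
    norm_num
  have hderiv : ∀ t ∈ uIcc (0 : ℝ) 1,
      HasDerivAt (fun t ↦ (1 - t) * (Real.sin (t * y) / y) - Real.cos (t * y) / y ^ 2)
        ((1 - t) * Real.cos (t * y)) t := by
    intro t _
    have hlin : HasDerivAt (fun t : ℝ ↦ t * y) y t := by simpa using (hasDerivAt_id t).mul_const y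
    have hprod := ((hasDerivAt_id t).const_sub 1).mul (hlin.sin.div_const y)
    refine (hprod.sub (hlin.cos.div_const (y ^ 2))).congr_deriv ?_
    simp only [id]
    field_simp
    ring
  have hhalf : Real.cos y = 1 - 2 * Real.sin (y / 2) ^ 2 := by
    rw [← Real.cos_sq_add_sin_sq (y / 2), ← mul_div_cancel₀ y two_ne_zero, Real.cos_two_mul]
    grind [Real.cos_sq_add_sin_sq (y / 2)]
  rw [intervalIntegral.integral_eq_sub_of_hasDerivAt hderiv
    (Continuous.intervalIntegrable (by fun_prop) _ _), fejer, Real.sinc_of_ne_zero (by simpa)]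
  simp only [one_mul, zero_mul, Real.sin_zero, Real.cos_zero, sub_self, zero_div, hhalf]
  field_simp
  ring

lemma integral_triangle_mul_exp (y : ℝ) :
    ∫ t in (-1 : ℝ)..1, ((1 - |t| : ℝ) : ℂ) * cexp (t * y * I) = fejer y := by
  have hcont : Continuous fun t : ℝ ↦ ((1 - |t| : ℝ) : ℂ) * cexp (t * y * I) := by fun_prop
  have hreflect : ∫ t in (-1 : ℝ)..0, ((1 - |t| : ℝ) : ℂ) * cexp (t * y * I)
      = ∫ t in (0 : ℝ)..1, ((1 - |t| : ℝ) : ℂ) * cexp (-(t * y * I)) := by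
    have := intervalIntegral.integral_comp_neg (a := (0 : ℝ)) (b := 1)
      (fun t : ℝ ↦ ((1 - |t| : ℝ) : ℂ) * cexp (t * y * I))
    rw [neg_zero] at this
    rw [← this]
    simp
  have hcos : ∀ t ∈ uIcc (0 : ℝ) 1,
      ((1 - |t| : ℝ) : ℂ) * cexp (-(t * y * I)) + ((1 - |t| : ℝ) : ℂ) * cexp (t * y * I)
      = ((2 * ((1 - t) * Real.cos (t * y)) : ℝ) : ℂ) := by
    intro t ht
    rw [uIcc_of_le zero_le_one] at ht
    rw [abs_of_nonneg ht.1]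
    push_cast
    rw [Complex.cos, show -((t : ℂ) * y) * I = -(t * y * I) by ring]
    ring
  rw [← intervalIntegral.integral_add_adjacent_intervals (hcont.intervalIntegrable _ 0)
    (hcont.intervalIntegrable 0 _), hreflect,
    ← intervalIntegral.integral_add (Continuous.intervalIntegrable (by fun_prop) _ _)
    (Continuous.intervalIntegrable (by fun_prop) _ _), intervalIntegral.integral_congr hcos,
    intervalIntegral.integral_ofReal, intervalIntegral.integral_const_mul,
    integral_one_sub_mul_cos]
  congr 1
  ring

lemma tendsto_fejerMassOn : Tendsto fejerMassOn atTop (𝓝 fejerMass) :=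
  intervalIntegral_tendsto_integral integrable_fejer tendsto_neg_atTop_atBot tendsto_id

lemma fejerMass_pos : 0 < fejerMass :=
  integral_pos_of_integrable_nonneg_nonzero (x := 0) continuous_fejer integrable_fejer
    fejer_nonneg (by simp [fejer])

variable {l : ℝ}

lemma integral_fejer_dilate (hl : 0 < l) (u : ℝ) :
    ∫ y, fejer (l * (y - u)) = fejerMass / l := by
  rw [integral_sub_right_eq_self (fun y ↦ fejer (l * y)) u, Measure.integral_comp_mul_left,
    abs_of_pos (by positivity), smul_eq_mul, fejerMass, inv_mul_eq_div]

lemma integral_fejer_dilate_window (hl : 0 < l) (u δ : ℝ) :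
    ∫ y in (u - δ)..(u + δ), fejer (l * (y - u)) = fejerMassOn (l * δ) / l := by
  rw [intervalIntegral.integral_comp_sub_right (fun y ↦ fejer (l * y)) u,
    intervalIntegral.integral_comp_mul_left _ hl.ne', fejerMassOn, smul_eq_mul,
    add_sub_cancel_left, sub_sub_cancel_left, mul_neg, inv_mul_eq_div]

lemma integrable_fejer_dilate (hl : 0 < l) (u : ℝ) : Integrable fun y ↦ fejer (l * (y - u)) :=
  (integrable_fejer.comp_mul_left' hl.ne').comp_sub_right u

lemma tendsto_setIntegral_fejer_dilate (hl : 0 < l) :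
    Tendsto (fun u ↦ ∫ y in Ioi (0 : ℝ), fejer (l * (y - u))) atTop (𝓝 (fejerMass / l)) := by
  have hlower : Tendsto (fun u ↦ fejerMassOn (l * u) / l) atTop (𝓝 (fejerMass / l)) :=
    (tendsto_fejerMassOn.comp (tendsto_id.const_mul_atTop hl)).div_const l
  refine tendsto_of_tendsto_of_tendsto_of_le_of_le' hlower tendsto_const_nhds ?_ ?_
  · filter_upwards [eventually_ge_atTop 0] with u hu
    have hsub : Ioc (u - u) (u + u) ⊆ Ioi 0 := fun y hy ↦ by simpa using hy.1
    rw [← integral_fejer_dilate_window hl, intervalIntegral.integral_of_le (by linarith)]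
    exact setIntegral_mono_set (integrable_fejer_dilate hl u).integrableOn
      (ae_of_all _ fun y ↦ fejer_nonneg _) hsub.eventuallyLE
  · filter_upwards with u
    rw [← integral_fejer_dilate hl u]
    exact setIntegral_le_integral (integrable_fejer_dilate hl u)
      (ae_of_all _ fun y ↦ fejer_nonneg _)

/-- The oscillatory integral of a function `Γ` on the vertical segment `ε + i [-l, l]` against the
triangle weight and the frequency `l * u`. -/
def fejerOscillation (Γ : ℂ → ℂ) (l ε u : ℝ) : ℂ :=
  ∫ t in (-1 : ℝ)..1, ((1 - |t| : ℝ) : ℂ) * cexp (-(l * t * u * I)) * Γ (ε - l * t * I)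

lemma norm_triangle_mul_exp_le {t : ℝ} (ht : t ∈ Ioc (-1 : ℝ) 1) (r : ℝ) :
    ‖((1 - |t| : ℝ) : ℂ) * cexp (r * I)‖ ≤ 1 := by
  have ht1 : |t| ≤ 1 := abs_le.mpr ⟨ht.1.le, ht.2⟩
  rw [norm_mul, norm_exp_ofReal_mul_I, mul_one, norm_real, Real.norm_of_nonneg (by linarith)]
  linarith [abs_nonneg t]

lemma integral_mul_fejer_eq (g : ℝ → ℂ) (hg : Integrable g) (l u : ℝ) :
    ∫ y, g y * (fejer (l * (y - u)) : ℂ) = ∫ t in (-1 : ℝ)..1,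
      ((1 - |t| : ℝ) : ℂ) * cexp (-(l * t * u * I)) * ∫ y, g y * cexp (l * t * y * I) := by
  have hbound : ∀ᵐ p ∂((volume : Measure ℝ).prod (volume.restrict (Ioc (-1 : ℝ) 1))),
      ‖((1 - |p.2| : ℝ) : ℂ) * cexp (((p.2 * (l * (p.1 - u)) : ℝ) : ℂ) * I)‖ ≤ 1 := by
    filter_upwards [Measure.quasiMeasurePreserving_snd.ae (ae_restrict_mem measurableSet_Ioc)]
      with p hp
    exact norm_triangle_mul_exp_le hp _
  have hinteg : Integrable (Function.uncurry fun (y t : ℝ) ↦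
      g y * (((1 - |t| : ℝ) : ℂ) * cexp (t * ((l * (y - u) : ℝ) : ℂ) * I)))
      (volume.prod (volume.restrict (Ioc (-1 : ℝ) 1))) := by
    refine ((Integrable.mul_prod hg (integrable_const (1 : ℂ))).bdd_mul
      (Continuous.aestronglyMeasurable (by fun_prop)) hbound).congr (ae_of_all _ fun p ↦ ?_)
    simp only [Function.uncurry]
    push_cast
    ring_nf
  simp_rw [← integral_triangle_mul_exp,
    intervalIntegral.integral_of_le (show (-1 : ℝ) ≤ 1 by norm_num), ← integral_const_mul]
  rw [integral_integral_swap hinteg]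
  congr 1 with t
  congr 1 with y
  rw [show (t : ℂ) * ((l * (y - u) : ℝ) : ℂ) * I = -(l * t * u * I) + l * t * y * I by
    push_cast; ring, Complex.exp_add]
  ring

lemma integral_laplace_mul_fejer {D : ℝ → ℝ} {Γ : ℂ → ℂ} {ε : ℝ} (hε : 0 < ε)
    (hD : Integrable fun y ↦ D y * Real.exp (-ε * y))
    (hΓ : ∀ s : ℂ, 0 < s.re → ∫ y, (D y : ℂ) * cexp (-s * y) = Γ s) (l u : ℝ) :
    ∫ y, D y * Real.exp (-ε * y) * fejer (l * (y - u)) = (fejerOscillation Γ l ε u).re := by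
  have hcomplex : fejerOscillation Γ l ε u =
      ((∫ y, D y * Real.exp (-ε * y) * fejer (l * (y - u)) : ℝ) : ℂ) := by
    rw [← integral_complex_ofReal]
    simp_rw [ofReal_mul (D _ * _)]
    rw [integral_mul_fejer_eq (fun y ↦ ((D y * Real.exp (-ε * y) : ℝ) : ℂ)) hD.ofReal,
      fejerOscillation]
    congr 1 with t
    rw [← hΓ _ (by simpa using hε)]
    congr 2 with y
    rw [show -((ε : ℂ) - l * t * I) * y = (-ε * y : ℂ) + l * t * y * I by ring, Complex.exp_add]
    push_cast
    ring
  rw [hcomplex, ofReal_re]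

section Oscillation

variable {Γ : ℂ → ℂ}

lemma tendsto_fejerOscillation_zero (hΓ : ContinuousOn Γ {s | 0 ≤ s.re}) (l u : ℝ) :
    Tendsto (fun ε ↦ fejerOscillation Γ l ε u) (𝓝[>] 0) (𝓝 (fejerOscillation Γ l 0 u)) := by
  have hline (t : ℝ) : Continuous fun ε : ℝ ↦ (ε : ℂ) - l * t * I := by fun_prop
  have hcompact : IsCompact
      ((fun p : ℝ × ℝ ↦ (p.1 : ℂ) - l * p.2 * I) '' (Icc 0 1 ×ˢ Icc (-1) 1)) :=
    (isCompact_Icc.prod isCompact_Icc).image (by fun_prop)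
  obtain ⟨C, hC⟩ := hcompact.exists_bound_of_continuousOn (hΓ.mono (by
    rintro _ ⟨p, hp, rfl⟩
    simpa using hp.1.1))
  refine intervalIntegral.tendsto_integral_filter_of_dominated_convergence (fun _ ↦ C) ?_ ?_
    intervalIntegrable_const ?_
  · filter_upwards [self_mem_nhdsWithin] with ε (hε : 0 < ε)
    have : Continuous fun t : ℝ ↦ Γ (ε - l * t * I) :=
      hΓ.comp_continuous (by fun_prop) fun t ↦ by simpa using hε.le
    exact (Continuous.mul (by fun_prop) this).aestronglyMeasurable
  · filter_upwards [Ioc_mem_nhdsGT one_pos] with ε hε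
    refine ae_of_all _ fun t ht ↦ ?_
    rw [uIoc_of_le (by norm_num)] at ht
    have hΓC := hC _ ⟨(ε, t), ⟨⟨hε.1.le, hε.2⟩, ⟨ht.1.le, ht.2⟩⟩, rfl⟩
    rw [norm_mul, show -((l : ℂ) * t * u * I) = ((-(l * t * u) : ℝ) : ℂ) * I by push_cast; ring]
    exact (mul_le_of_le_one_left (norm_nonneg _) (norm_triangle_mul_exp_le ht _)).trans hΓC
  · refine ae_of_all _ fun t _ ↦ Tendsto.const_mul _ ?_
    refine (hΓ ((0 : ℝ) - l * t * I) (by simp)).tendsto.comp (tendsto_nhdsWithin_iff.mpr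
      ⟨((hline t).tendsto 0).mono_left nhdsWithin_le_nhds, ?_⟩)
    filter_upwards [self_mem_nhdsWithin] with ε (hε : 0 < ε)
    simpa using hε.le

lemma tendsto_fejerOscillation_atTop (Γ : ℂ → ℂ) (hl : 0 < l) :
    Tendsto (fun u ↦ fejerOscillation Γ l 0 u) atTop (𝓝 0) := by
  have hRiemannLebesgue := Real.tendsto_integral_exp_smul_cocompact
    ((Ioc (-1 : ℝ) 1).indicator fun t : ℝ ↦ ((1 - |t| : ℝ) : ℂ) * Γ (((0 : ℝ) : ℂ) - l * t * I))
  have hfreq : Tendsto (fun u : ℝ ↦ l / (2 * Real.pi) * u) atTop (cocompact ℝ) :=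
    (tendsto_id.const_mul_atTop (by positivity)).mono_right atTop_le_cocompact
  refine (hRiemannLebesgue.comp hfreq).congr fun u ↦ ?_
  simp only [Function.comp_apply]
  rw [fejerOscillation, intervalIntegral.integral_of_le (by norm_num),
    ← integral_indicator measurableSet_Ioc]
  congr 1 with t
  by_cases ht : t ∈ Ioc (-1 : ℝ) 1
  · rw [indicator_of_mem ht, indicator_of_mem ht, Circle.smul_def, Real.fourierChar_apply,
      smul_eq_mul, show ((2 * Real.pi * -(t * (l / (2 * Real.pi) * u)) : ℝ) : ℂ) * I
        = -(l * t * u * I) by push_cast; field_simp]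
    ring
  · simp [indicator_of_notMem ht]

end Oscillation

lemma exp_neg_mul_le_one {ε y : ℝ} (hε : 0 < ε) (hy : 0 ≤ y) : Real.exp (-ε * y) ≤ 1 := by
  rw [Real.exp_le_one_iff, neg_mul, neg_nonpos]
  positivity

lemma tendsto_mul_exp_neg_mul_zero (b y : ℝ) :
    Tendsto (fun ε : ℝ ↦ b * Real.exp (-ε * y)) (𝓝[>] 0) (𝓝 b) := by
  have hcont : Continuous fun ε : ℝ ↦ b * Real.exp (-ε * y) := by fun_prop
  simpa using (hcont.tendsto 0).mono_left nhdsWithin_le_nhds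

lemma tendsto_integral_mul_exp_neg_mul {g : ℝ → ℝ} (hg : Integrable g)
    (hneg : ∀ y < 0, g y = 0) :
    Tendsto (fun ε ↦ ∫ y, g y * Real.exp (-ε * y)) (𝓝[>] 0) (𝓝 (∫ y, g y)) := by
  refine tendsto_integral_filter_of_dominated_convergence (fun y ↦ ‖g y‖) ?_ ?_ hg.norm
    (ae_of_all _ fun y ↦ tendsto_mul_exp_neg_mul_zero _ _)
  · filter_upwards with ε
    exact hg.aestronglyMeasurable.mul (Continuous.aestronglyMeasurable (by fun_prop))
  · filter_upwards [self_mem_nhdsWithin] with ε (hε : 0 < ε)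
    refine ae_of_all _ fun y ↦ ?_
    rcases lt_or_ge y 0 with hy | hy
    · simp [hneg y hy]
    · rw [norm_mul, Real.norm_of_nonneg (Real.exp_pos _).le]
      exact mul_le_of_le_one_right (norm_nonneg _) (exp_neg_mul_le_one hε hy)

lemma integrable_of_tendsto_integral_mul_exp_neg_mul {g : ℝ → ℝ} {L : ℝ} (hg : ∀ y, 0 ≤ g y)
    (hinteg : ∀ ε > 0, Integrable fun y ↦ g y * Real.exp (-ε * y))
    (hlim : Tendsto (fun ε ↦ ∫ y, g y * Real.exp (-ε * y)) (𝓝[>] 0) (𝓝 L)) :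
    Integrable g := by
  let ε : ℕ → ℝ := fun n ↦ 1 / ((n : ℝ) + 1)
  have hε (n : ℕ) : 0 < ε n := by positivity
  have hε0 : Tendsto ε atTop (𝓝[>] 0) :=
    tendsto_nhdsWithin_iff.mpr ⟨tendsto_one_div_add_atTop_nhds_zero_nat, .of_forall hε⟩
  have hlintegral : Tendsto (fun n ↦ ∫⁻ y, ‖g y * Real.exp (-ε n * y)‖ₑ) atTop
      (𝓝 (ENNReal.ofReal L)) := by
    refine ((ENNReal.continuous_ofReal.tendsto _).comp (hlim.comp hε0)).congr fun n ↦ ?_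
    have hnonneg (y : ℝ) : 0 ≤ g y * Real.exp (-ε n * y) := mul_nonneg (hg y) (Real.exp_pos _).le
    simp only [Function.comp_apply]
    rw [ofReal_integral_eq_lintegral_ofReal (hinteg _ (hε n)) (ae_of_all _ hnonneg)]
    exact lintegral_congr fun y ↦ (Real.enorm_of_nonneg (hnonneg y)).symm
  refine integrable_of_tendsto (ae_of_all _ fun y ↦ ?_)
    (fun n ↦ (hinteg _ (hε n)).aestronglyMeasurable)
    (hlintegral.liminf_eq.trans_ne ENNReal.ofReal_ne_top)
  exact (tendsto_mul_exp_neg_mul_zero _ _).comp hε0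

section Averages

variable {B : ℝ → ℝ} {c : ℝ} {Γ : ℂ → ℂ} {l : ℝ}

lemma integrable_mul_exp_mul_fejer {ε : ℝ} (hinteg : Integrable fun y ↦ B y * Real.exp (-ε * y))
    (l u : ℝ) : Integrable fun y ↦ B y * fejer (l * (y - u)) * Real.exp (-ε * y) := by
  refine (hinteg.mul_bdd (c := 1) (g := fun y ↦ fejer (l * (y - u)))
    (Continuous.aestronglyMeasurable (by fun_prop)) (ae_of_all _ fun y ↦ ?_)).congr
    (ae_of_all _ fun y ↦ mul_right_comm _ _ _)
  rw [Real.norm_of_nonneg (fejer_nonneg _)]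
  exact fejer_le_one _

lemma integrable_indicator_exp {ε : ℝ} (hε : 0 < ε) :
    Integrable fun y ↦ (Ioi (0 : ℝ)).indicator 1 y * Real.exp (-ε * y) := by
  refine ((integrable_indicator_iff measurableSet_Ioi).mpr
    (integrableOn_exp_mul_Ioi (neg_neg_iff_pos.mpr hε) 0)).congr (ae_of_all _ fun y ↦ ?_)
  by_cases hy : y ∈ Ioi (0 : ℝ) <;> simp [hy]

lemma integral_indicator_mul_cexp {s : ℂ} (hs : 0 < s.re) :
    ∫ y : ℝ, ((Ioi (0 : ℝ)).indicator 1 y : ℝ) * cexp (-s * y) = 1 / s := by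
  have hind (y : ℝ) : ((Ioi (0 : ℝ)).indicator 1 y : ℝ) * cexp (-s * y) =
      (Ioi (0 : ℝ)).indicator (fun y : ℝ ↦ cexp (-s * y)) y := by
    by_cases hy : y ∈ Ioi (0 : ℝ) <;> simp [hy]
  simp_rw [hind]
  rw [integral_indicator measurableSet_Ioi, integral_exp_mul_complex_Ioi (by simpa using hs)]
  simp

lemma integrable_mul_cexp {s : ℂ} (hinteg : Integrable fun y ↦ B y * Real.exp (-s.re * y)) :
    Integrable fun y : ℝ ↦ (B y : ℂ) * cexp (-s * y) := by
  refine (hinteg.ofReal.bdd_mul (c := 1) (f := fun y : ℝ ↦ cexp ((-s.im * y : ℝ) * I))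
    (Continuous.aestronglyMeasurable (by fun_prop)) (ae_of_all _ fun y ↦ ?_)).congr
    (ae_of_all _ fun y ↦ ?_)
  · rw [norm_exp_ofReal_mul_I]
  · have hsplit : -s * y = (-s.im * y : ℝ) * I + (-s.re * y : ℝ) := by
      conv_lhs => rw [← re_add_im s]
      push_cast
      ring
    simp only [coe_algebraMap, ofReal_mul, ofReal_exp]
    rw [hsplit, Complex.exp_add]
    push_cast
    ring

variable (hinteg : ∀ ε > 0, Integrable fun y ↦ B y * Real.exp (-ε * y))
  (hlap : ∀ s : ℂ, 0 < s.re → ∫ y, (B y : ℂ) * cexp (-s * y) = Γ s + c / s)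

include hinteg hlap

lemma integral_mul_fejer_mul_exp {ε : ℝ} (hε : 0 < ε) (l u : ℝ) :
    ∫ y, B y * fejer (l * (y - u)) * Real.exp (-ε * y) =
      c * (∫ y, (Ioi (0 : ℝ)).indicator (fun y ↦ fejer (l * (y - u))) y * Real.exp (-ε * y))
        + (fejerOscillation Γ l ε u).re := by
  let D : ℝ → ℝ := fun y ↦ B y - c * (Ioi (0 : ℝ)).indicator 1 y
  have hindInt := integrable_indicator_exp hε
  have hD : Integrable fun y ↦ D y * Real.exp (-ε * y) :=
    ((hinteg ε hε).sub (hindInt.const_mul c)).congr (ae_of_all _ fun y ↦ by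
      simp only [D, Pi.sub_apply]
      ring)
  have hDlap (s : ℂ) (hs : 0 < s.re) : ∫ y, (D y : ℂ) * cexp (-s * y) = Γ s := by
    simp only [D, ofReal_sub, ofReal_mul, sub_mul, mul_assoc]
    rw [integral_sub (integrable_mul_cexp (hinteg _ hs))
      ((integrable_mul_cexp (integrable_indicator_exp hs)).const_mul _), integral_const_mul,
      integral_indicator_mul_cexp hs, hlap s hs]
    ring
  rw [← integral_laplace_mul_fejer hε hD hDlap, ← integral_const_mul, ← integral_add]
  · congr 1 with y
    by_cases hy : y ∈ Ioi (0 : ℝ) <;> simp [hy, D] <;> ring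
  · refine ((integrable_mul_exp_mul_fejer hindInt l u).const_mul c).congr (ae_of_all _ fun y ↦ ?_)
    by_cases hy : y ∈ Ioi (0 : ℝ) <;> simp [hy]
  · exact (integrable_mul_exp_mul_fejer hD l u).congr (ae_of_all _ fun y ↦ mul_right_comm _ _ _)

variable (hB : ∀ y, 0 ≤ B y) (hneg : ∀ y < 0, B y = 0) (hΓ : ContinuousOn Γ {s | 0 ≤ s.re})

include hΓ in
lemma tendsto_integral_mul_fejer_mul_exp (hl : 0 < l) (u : ℝ) :
    Tendsto (fun ε ↦ ∫ y, B y * fejer (l * (y - u)) * Real.exp (-ε * y)) (𝓝[>] 0)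
      (𝓝 (c * (∫ y in Ioi (0 : ℝ), fejer (l * (y - u))) + (fejerOscillation Γ l 0 u).re)) := by
  have hmain := tendsto_integral_mul_exp_neg_mul
    ((integrable_fejer_dilate hl u).indicator (measurableSet_Ioi (a := 0)))
    fun y hy ↦ indicator_of_notMem (by simpa using hy.le) _
  rw [integral_indicator measurableSet_Ioi] at hmain
  refine ((hmain.const_mul c).add ((continuous_re.tendsto _).comp
    (tendsto_fejerOscillation_zero hΓ l u))).congr' ?_
  filter_upwards [self_mem_nhdsWithin] with ε hε
  exact (integral_mul_fejer_mul_exp hinteg hlap hε l u).symm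

include hB hΓ in
lemma integrable_mul_fejer_of_laplace (hl : 0 < l) (u : ℝ) :
    Integrable fun y ↦ B y * fejer (l * (y - u)) :=
  integrable_of_tendsto_integral_mul_exp_neg_mul (fun y ↦ mul_nonneg (hB y) (fejer_nonneg _))
    (fun ε hε ↦ integrable_mul_exp_mul_fejer (hinteg ε hε) l u)
    (tendsto_integral_mul_fejer_mul_exp hinteg hlap hΓ hl u)

include hB hneg hΓ in
lemma tendsto_integral_mul_fejer_of_laplace (hl : 0 < l) :
    Tendsto (fun u ↦ ∫ y, B y * fejer (l * (y - u))) atTop (𝓝 (c * (fejerMass / l))) := by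
  have hosc : Tendsto (fun u ↦ (fejerOscillation Γ l 0 u).re) atTop (𝓝 0) := by
    simpa [Function.comp_def] using
      (continuous_re.tendsto _).comp (tendsto_fejerOscillation_atTop Γ hl)
  rw [← add_zero (c * _)]
  refine (((tendsto_setIntegral_fejer_dilate hl).const_mul c).add hosc).congr fun u ↦ ?_
  refine tendsto_nhds_unique (tendsto_integral_mul_fejer_mul_exp hinteg hlap hΓ hl u)
    (tendsto_integral_mul_exp_neg_mul (integrable_mul_fejer_of_laplace hinteg hlap hB hΓ hl u) ?_)
  exact fun y hy ↦ by rw [hneg y hy, zero_mul]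

end Averages

section Tauberian

variable {B : ℝ → ℝ} (hB : ∀ y, 0 ≤ B y) (hmono : Monotone fun y ↦ Real.exp y * B y) {l δ : ℝ}

include hmono in
lemma le_exp_mul_of_monotone {u v : ℝ} (huv : u ≤ v) : B u ≤ Real.exp (v - u) * B v := by
  have h := hmono huv
  rw [Real.exp_sub, div_mul_eq_mul_div, le_div_iff₀ (Real.exp_pos _), mul_comm]
  exact h

include hB hmono in
lemma mul_fejerMassOn_le_average (hl : 0 < l) (hδ : 0 < δ) (v : ℝ)
    (hinteg : Integrable fun y ↦ B y * fejer (l * (y - (v + δ)))) :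
    B v * Real.exp (-(2 * δ)) * fejerMassOn (l * δ) ≤
      l * ∫ y, B y * fejer (l * (y - (v + δ))) := by
  rw [← div_le_iff₀' hl, mul_div_assoc, ← integral_fejer_dilate_window hl (v + δ),
    intervalIntegral.integral_of_le (by linarith), ← integral_const_mul]
  refine (setIntegral_mono_on ((integrable_fejer_dilate hl _).integrableOn.const_mul _)
    hinteg.integrableOn measurableSet_Ioc fun y hy ↦ ?_).trans
    (setIntegral_le_integral hinteg (ae_of_all _ fun y ↦ mul_nonneg (hB y) (fejer_nonneg _)))
  refine mul_le_mul_of_nonneg_right ?_ (fejer_nonneg _)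
  rw [Real.exp_neg, ← div_eq_mul_inv, div_le_iff₀' (Real.exp_pos _)]
  refine (le_exp_mul_of_monotone hmono (by linarith [hy.1])).trans
    (mul_le_mul_of_nonneg_right (Real.exp_le_exp.mpr ?_) (hB y))
  linarith [hy.2]

include hB hmono in
lemma average_le_mul_fejerMassOn {M : ℝ} (hM : ∀ y, B y ≤ M) (hl : 0 < l) (hδ : 0 < δ) (u : ℝ)
    (hinteg : Integrable fun y ↦ B y * fejer (l * (y - u))) :
    l * ∫ y, B y * fejer (l * (y - u)) ≤
      M * (fejerMass - fejerMassOn (l * δ)) +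
        B (u + δ) * Real.exp (2 * δ) * fejerMassOn (l * δ) := by
  have hfejer := integrable_fejer_dilate hl u
  have hwindow := (hfejer.indicator (measurableSet_Ioc (a := u - δ) (b := u + δ))).const_mul
    (B (u + δ) * Real.exp (2 * δ) - M)
  have hpoint (y : ℝ) : B y * fejer (l * (y - u)) ≤ M * fejer (l * (y - u)) +
      (B (u + δ) * Real.exp (2 * δ) - M) *
        (Ioc (u - δ) (u + δ)).indicator (fun y ↦ fejer (l * (y - u))) y := by
    by_cases hy : y ∈ Ioc (u - δ) (u + δ)
    · have hexp : Real.exp (u + δ - y) ≤ Real.exp (2 * δ) :=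
        Real.exp_le_exp.mpr (by linarith [hy.1])
      rw [indicator_of_mem hy, ← add_mul, add_sub_cancel, mul_comm (B (u + δ))]
      exact mul_le_mul_of_nonneg_right ((le_exp_mul_of_monotone hmono hy.2).trans
        (mul_le_mul_of_nonneg_right hexp (hB _))) (fejer_nonneg _)
    · rw [indicator_of_notMem hy, mul_zero, add_zero]
      exact mul_le_mul_of_nonneg_right (hM y) (fejer_nonneg _)
  have hle := integral_mono hinteg ((hfejer.const_mul M).add hwindow) hpoint
  simp only [Pi.add_apply] at hle
  rw [integral_add (hfejer.const_mul M) hwindow, integral_const_mul, integral_const_mul,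
    integral_indicator measurableSet_Ioc, ← intervalIntegral.integral_of_le (by linarith),
    integral_fejer_dilate hl, integral_fejer_dilate_window hl] at hle
  refine (mul_le_mul_of_nonneg_left hle hl.le).trans_eq ?_
  field_simp
  ring

variable {c : ℝ} (hinteg : ∀ l > 0, ∀ u, Integrable fun y ↦ B y * fejer (l * (y - u)))
  (hlim : ∀ l > 0, Tendsto (fun u ↦ l * ∫ y, B y * fejer (l * (y - u))) atTop
    (𝓝 (c * fejerMass)))

lemma tendsto_fejerMassOn_inv : Tendsto (fun δ : ℝ ↦ fejerMassOn δ⁻¹) (𝓝[>] 0) (𝓝 fejerMass) :=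
  tendsto_fejerMassOn.comp tendsto_inv_nhdsGT_zero

lemma tendsto_mul_exp_mul_fejerMassOn (b r : ℝ) :
    Tendsto (fun δ : ℝ ↦ b * Real.exp (r * δ) * fejerMassOn δ⁻¹) (𝓝[>] 0) (𝓝 (b * fejerMass)) := by
  have hexp : Continuous fun δ : ℝ ↦ b * Real.exp (r * δ) := by fun_prop
  simpa using ((hexp.tendsto 0).mono_left nhdsWithin_le_nhds).mul tendsto_fejerMassOn_inv

include hB hmono hinteg hlim

lemma eventually_lt_of_tendsto_average {b : ℝ} (hb : c < b) : ∀ᶠ u in atTop, B u < b := by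
  have hgap : c * fejerMass < b * fejerMass := mul_lt_mul_of_pos_right hb fejerMass_pos
  obtain ⟨δ, ⟨hlarge, hmass⟩, (hδ : 0 < δ)⟩ :=
    (((tendsto_mul_exp_mul_fejerMassOn b (-2)).eventually (lt_mem_nhds hgap)).and
      (tendsto_fejerMassOn_inv.eventually (lt_mem_nhds fejerMass_pos))).and
      self_mem_nhdsWithin |>.exists
  have hl : 0 < (δ ^ 2)⁻¹ := by positivity
  filter_upwards [((hlim _ hl).comp (tendsto_atTop_add_const_right atTop δ tendsto_id)).eventually
    (gt_mem_nhds hlarge)] with v hv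
  have hle := (mul_fejerMassOn_le_average hB hmono hl hδ v (hinteg _ hl _)).trans_lt hv
  rw [show (δ ^ 2)⁻¹ * δ = δ⁻¹ by field_simp, mul_assoc, mul_assoc, neg_mul] at hle
  exact lt_of_mul_lt_mul_right hle (by positivity)

lemma eventually_gt_of_tendsto_average {M : ℝ} (hM : ∀ y, B y ≤ M) {b : ℝ} (hb : b < c) :
    ∀ᶠ u in atTop, b < B u := by
  have hgap : M * (fejerMass - fejerMass) + b * fejerMass < c * fejerMass := by
    simpa using mul_lt_mul_of_pos_right hb fejerMass_pos
  obtain ⟨δ, ⟨hsmall, hmass⟩, (hδ : 0 < δ)⟩ :=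
    ((((tendsto_fejerMassOn_inv.const_sub _).const_mul M).add
      (tendsto_mul_exp_mul_fejerMassOn b 2)).eventually (gt_mem_nhds hgap)).and
      (tendsto_fejerMassOn_inv.eventually (lt_mem_nhds fejerMass_pos)) |>.and
      self_mem_nhdsWithin |>.exists
  have hl : 0 < (δ ^ 2)⁻¹ := by positivity
  have hshift : ∀ᶠ u in atTop, b < B (u + δ) := by
    filter_upwards [(hlim _ hl).eventually (lt_mem_nhds hsmall)] with u hu
    have hlt := hu.trans_le (average_le_mul_fejerMassOn hB hmono hM hl hδ u (hinteg _ hl u))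
    rw [show (δ ^ 2)⁻¹ * δ = δ⁻¹ by field_simp, add_lt_add_iff_left, mul_assoc, mul_assoc] at hlt
    exact lt_of_mul_lt_mul_right hlt (by positivity)
  filter_upwards [(tendsto_atTop_add_const_right atTop (-δ) tendsto_id).eventually hshift] with u hu
  simpa using hu

theorem tendsto_of_tendsto_average (hneg : ∀ y < 0, B y = 0) : Tendsto B atTop (𝓝 c) := by
  have hupper := fun b hb ↦ eventually_lt_of_tendsto_average hB hmono hinteg hlim (b := b) hb
  obtain ⟨U, hU⟩ := eventually_atTop.mp (hupper (c + 1) (by linarith))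
  have hbounded : ∀ y, B y ≤ max (c + 1) (Real.exp |U| * B U) := by
    intro y
    rcases le_or_gt U y with hUy | hyU
    · exact (hU y hUy).le.trans (le_max_left _ _)
    refine le_trans ?_ (le_max_right _ _)
    rcases lt_or_ge y 0 with hy | hy
    · rw [hneg y hy]
      exact mul_nonneg (Real.exp_pos _).le (hB _)
    · refine (le_exp_mul_of_monotone hmono hyU.le).trans
        (mul_le_mul_of_nonneg_right (Real.exp_le_exp.mpr ?_) (hB _))
      linarith [le_abs_self U]
  exact tendsto_order.mpr
    ⟨fun b hb ↦ eventually_gt_of_tendsto_average hB hmono hinteg hlim hbounded hb, hupper⟩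

end Tauberian

/-- The generalised Dirichlet series `∑ a i * (x i) ^ (-s)` with frequencies `x i`. -/
def dirichletSum {ι : Type*} (a : ι → ℂ) (x : ι → ℝ) (s : ℂ) : ℂ := ∑' i, a i * (x i : ℂ) ^ (-s)

/-- The summatory function `∑_{x i ≤ X} a i` of the coefficients of a Dirichlet series. -/
def summatory {ι E : Type*} [AddCommMonoid E] [TopologicalSpace E] (a : ι → E) (x : ι → ℝ)
    (X : ℝ) : E :=
  ∑' i, if x i ≤ X then a i else 0

/-- The function `F` on the half plane `1 < re s` extends continuously to `1 ≤ re s`. -/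
def ExtendsToBoundary (F : ℂ → ℂ) : Prop :=
  ∃ Γ : ℂ → ℂ, ContinuousOn Γ {s | 1 ≤ s.re} ∧ EqOn F Γ {s | 1 < s.re}

section Summatory

variable {ι : Type*} {a x : ι → ℝ}

lemma norm_ofReal_cpow_neg {y : ℝ} (hy : 0 < y) (s : ℂ) : ‖(y : ℂ) ^ (-s)‖ = y ^ (-s.re) := by
  rw [norm_cpow_eq_rpow_re_of_pos hy, neg_re]

lemma ite_le_rpow_mul (ha : ∀ i, 0 ≤ a i) (hx : ∀ i, 1 ≤ x i) {σ : ℝ} (hσ : 0 ≤ σ) (X : ℝ)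
    (hX : 0 ≤ X) (i : ι) : (if x i ≤ X then a i else 0) ≤ a i * x i ^ (-σ) * X ^ σ := by
  have hx0 : 0 < x i := one_pos.trans_le (hx i)
  split_ifs with hi
  · rw [mul_assoc, Real.rpow_neg hx0.le, ← div_eq_inv_mul]
    exact le_mul_of_one_le_right (ha i)
      ((one_le_div (by positivity)).mpr (Real.rpow_le_rpow hx0.le hi hσ))
  · have := ha i
    positivity

variable (ha : ∀ i, 0 ≤ a i) (hx : ∀ i, 1 ≤ x i)
  (hs : ∀ σ : ℝ, 1 < σ → Summable fun i ↦ a i * x i ^ (-σ))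

include hx in
lemma summatory_eq_zero {X : ℝ} (hX : X < 1) : summatory a x X = 0 := by
  have hterm (i : ι) : (if x i ≤ X then a i else 0) = 0 :=
    if_neg (not_le.mpr (hX.trans_le (hx i)))
  simp only [summatory, hterm, tsum_zero]

include ha

lemma ite_le_nonneg (X : ℝ) (i : ι) : 0 ≤ if x i ≤ X then a i else 0 := by
  split_ifs
  · exact ha i
  · rfl

lemma summatory_nonneg (X : ℝ) : 0 ≤ summatory a x X := tsum_nonneg (ite_le_nonneg ha X)

include hx hs

lemma summable_ite_le (X : ℝ) : Summable fun i ↦ if x i ≤ X then a i else 0 := by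
  rcases lt_or_ge X 0 with hX | hX
  · exact summable_zero.congr fun i ↦ (if_neg (by linarith [hx i])).symm
  · exact .of_nonneg_of_le (ite_le_nonneg ha X) (ite_le_rpow_mul ha hx zero_le_two X hX)
      ((hs 2 one_lt_two).mul_right _)

lemma monotone_summatory : Monotone (summatory a x) := by
  intro X Y hXY
  refine (summable_ite_le ha hx hs X).tsum_le_tsum (fun i ↦ ?_) (summable_ite_le ha hx hs Y)
  by_cases hi : x i ≤ X
  · rw [if_pos hi, if_pos (hi.trans hXY)]
  · rw [if_neg hi]
    exact ite_le_nonneg ha Y i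

lemma summatory_le_rpow_mul {σ : ℝ} (hσ : 1 < σ) {X : ℝ} (hX : 0 ≤ X) :
    summatory a x X ≤ (∑' i, a i * x i ^ (-σ)) * X ^ σ := by
  rw [← tsum_mul_right]
  exact (summable_ite_le ha hx hs X).tsum_le_tsum (ite_le_rpow_mul ha hx (by linarith) X hX)
    ((hs σ hσ).mul_right _)

lemma integrable_summatory_mul_exp {ε : ℝ} (hε : 0 < ε) :
    Integrable fun y ↦ Real.exp (-y) * summatory a x (Real.exp y) * Real.exp (-ε * y) := by
  have hmeas : Measurable fun y ↦ summatory a x (Real.exp y) :=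
    ((monotone_summatory ha hx hs).comp Real.exp_monotone).measurable
  have hbound := (integrable_indicator_exp (half_pos hε)).const_mul
    (∑' i, a i * x i ^ (-(1 + ε / 2)))
  refine hbound.mono' (Measurable.aestronglyMeasurable (by fun_prop)) ?_
  filter_upwards [compl_mem_ae_iff.mpr (measure_singleton (0 : ℝ))] with y hy
  rw [Real.norm_of_nonneg (by have := summatory_nonneg (x := x) ha (Real.exp y); positivity)]
  rcases (show y ≠ 0 from hy).lt_or_gt with hy | hy
  · rw [summatory_eq_zero hx (Real.exp_lt_one_iff.mpr hy),
      indicator_of_notMem (by simpa using hy.le)]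
    simp
  · rw [indicator_of_mem (by simpa using hy)]
    calc Real.exp (-y) * summatory a x (Real.exp y) * Real.exp (-ε * y)
        ≤ Real.exp (-y) * ((∑' i, a i * x i ^ (-(1 + ε / 2))) * Real.exp y ^ (1 + ε / 2))
          * Real.exp (-ε * y) := by
          gcongr
          exact summatory_le_rpow_mul ha hx hs (by linarith) (Real.exp_pos _).le
      _ = (∑' i, a i * x i ^ (-(1 + ε / 2))) *
          (Real.exp (-y) * Real.exp (y * (1 + ε / 2)) * Real.exp (-ε * y)) := by
          rw [← Real.exp_mul]
          ring
      _ = _ := by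
          rw [← Real.exp_add, ← Real.exp_add, Pi.one_apply, one_mul]
          ring_nf

end Summatory

section Laplace

lemma integral_indicator_Ici_cexp {s : ℂ} (hs : 0 < s.re) {x : ℝ} (hx : 0 < x) :
    ∫ y, (Ici (Real.log x)).indicator (fun y : ℝ ↦ cexp (-s * y)) y = (x : ℂ) ^ (-s) / s := by
  rw [integral_indicator measurableSet_Ici, integral_Ici_eq_integral_Ioi,
    integral_exp_mul_complex_Ioi (by simpa using hs), neg_div_neg_eq, ofReal_log hx.le,
    cpow_def_of_ne_zero (by exact_mod_cast hx.ne'), mul_comm]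

lemma integrable_indicator_Ici_cexp {s : ℂ} (hs : 0 < s.re) (b : ℝ) :
    Integrable ((Ici b).indicator fun y : ℝ ↦ cexp (-s * y)) := by
  rw [integrable_indicator_iff measurableSet_Ici, integrableOn_Ici_iff_integrableOn_Ioi]
  exact integrableOn_exp_mul_complex_Ioi (by simpa using hs) _

lemma integral_norm_indicator_Ici_cexp {s : ℂ} (hs : 0 < s.re) {x : ℝ} (hx : 0 < x) :
    ∫ y, ‖(Ici (Real.log x)).indicator (fun y : ℝ ↦ cexp (-s * y)) y‖ = x ^ (-s.re) / s.re := by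
  simp only [norm_indicator_eq_indicator_norm, norm_exp, mul_re, neg_re, neg_im, ofReal_re,
    ofReal_im, mul_zero, sub_zero]
  rw [integral_indicator measurableSet_Ici, integral_Ici_eq_integral_Ioi,
    integral_exp_mul_Ioi (by simpa using hs), neg_div_neg_eq, Real.rpow_def_of_pos hx, mul_comm]

variable {ι : Type*} [Countable ι] {a x : ι → ℝ}

lemma integral_summatory_mul_cexp (ha : ∀ i, 0 ≤ a i) (hx : ∀ i, 1 ≤ x i)
    (hs : ∀ σ : ℝ, 1 < σ → Summable fun i ↦ a i * x i ^ (-σ)) {s : ℂ} (hsre : 1 < s.re) :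
    ∫ y, ((summatory a x (Real.exp y) : ℝ) : ℂ) * cexp (-s * y) =
      dirichletSum (fun i ↦ a i) x s / s := by
  have hx0 (i) : 0 < x i := one_pos.trans_le (hx i)
  have hs0 : 0 < s.re := one_pos.trans hsre
  let φ (i : ι) (y : ℝ) : ℂ :=
    a i * (Ici (Real.log (x i))).indicator (fun y : ℝ ↦ cexp (-s * y)) y
  have hsum := hasSum_integral_of_summable_integral_norm (F := φ)
    (fun i ↦ (integrable_indicator_Ici_cexp hs0 _).const_mul _) (by
      simp only [φ, norm_mul, norm_real, Real.norm_of_nonneg (ha _), integral_const_mul,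
        integral_norm_indicator_Ici_cexp hs0 (hx0 _), ← mul_div_assoc]
      exact (hs _ hsre).div_const _)
  have hterm (y : ℝ) :
      ∑' i, φ i y = ((summatory a x (Real.exp y) : ℝ) : ℂ) * cexp (-s * y) := by
    rw [summatory, ofReal_tsum, ← tsum_mul_right]
    refine tsum_congr fun i ↦ ?_
    simp only [φ, indicator_apply, mem_Ici, Real.log_le_iff_le_exp (hx0 i)]
    split_ifs <;> simp
  simp only [hterm, φ, integral_const_mul, integral_indicator_Ici_cexp hs0 (hx0 _),
    ← mul_div_assoc] at hsum
  rw [← hsum.tsum_eq, tsum_div_const, dirichletSum]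

lemma laplace_exp_neg_mul_summatory (ha : ∀ i, 0 ≤ a i) (hx : ∀ i, 1 ≤ x i)
    (hs : ∀ σ : ℝ, 1 < σ → Summable fun i ↦ a i * x i ^ (-σ)) {s : ℂ} (hsre : 0 < s.re) :
    ∫ y, ((Real.exp (-y) * summatory a x (Real.exp y) : ℝ) : ℂ) * cexp (-s * y) =
      dirichletSum (fun i ↦ a i) x (1 + s) / (1 + s) := by
  rw [← integral_summatory_mul_cexp ha hx hs (by simpa using hsre)]
  congr 1 with y
  rw [show -(1 + s) * (y : ℂ) = -y + -s * y by ring, Complex.exp_add]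
  push_cast
  ring

theorem wiener_ikehara (ha : ∀ i, 0 ≤ a i) (hx : ∀ i, 1 ≤ x i)
    (hs : ∀ σ : ℝ, 1 < σ → Summable fun i ↦ a i * x i ^ (-σ)) {c : ℝ}
    (h : ExtendsToBoundary fun s ↦ dirichletSum (fun i ↦ a i) x s - c / (s - 1)) :
    Tendsto (fun X ↦ summatory a x X / X) atTop (𝓝 c) := by
  obtain ⟨G, hGcont, hG⟩ := h
  let B : ℝ → ℝ := fun y ↦ Real.exp (-y) * summatory a x (Real.exp y)
  have hB (y) : 0 ≤ B y := mul_nonneg (Real.exp_pos _).le (summatory_nonneg ha _)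
  have hneg : ∀ y < 0, B y = 0 := fun y hy ↦ by
    simp only [B, summatory_eq_zero hx (Real.exp_lt_one_iff.mpr hy), mul_zero]
  have hmono : Monotone fun y ↦ Real.exp y * B y := by
    simp only [B, ← mul_assoc, ← Real.exp_add, add_neg_cancel, Real.exp_zero, one_mul]
    exact (monotone_summatory ha hx hs).comp Real.exp_monotone
  have hinteg : ∀ ε > 0, Integrable fun y ↦ B y * Real.exp (-ε * y) :=
    fun ε hε ↦ integrable_summatory_mul_exp ha hx hs hε
  have hne {s : ℂ} (hs : 0 ≤ s.re) : 1 + s ≠ 0 := fun h0 ↦ by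
    have := congrArg re h0
    simp only [add_re, one_re, zero_re] at this
    linarith
  let Γ : ℂ → ℂ := fun s ↦ (G (1 + s) - c) / (1 + s)
  have hΓ : ContinuousOn Γ {s | 0 ≤ s.re} := by
    refine ((hGcont.comp (by fun_prop) fun s hs ↦ ?_).sub continuousOn_const).div (by fun_prop)
      fun s hs ↦ hne hs
    simpa using hs
  have hlap (s : ℂ) (hsre : 0 < s.re) : ∫ y, (B y : ℂ) * cexp (-s * y) = Γ s + c / s := by
    have hs1 : 1 < (1 + s).re := by simpa using hsre
    have hs0 : s ≠ 0 := fun h0 ↦ by simp [h0] at hsre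
    simp only [B, Γ, laplace_exp_neg_mul_summatory ha hx hs hsre, ← hG hs1, add_sub_cancel_left]
    field_simp [hne hsre.le]
    ring
  have hlim : Tendsto B atTop (𝓝 c) := by
    refine tendsto_of_tendsto_average hB hmono
      (fun l hl u ↦ integrable_mul_fejer_of_laplace hinteg hlap hB hΓ hl u) (fun l hl ↦ ?_) hneg
    have := (tendsto_integral_mul_fejer_of_laplace hinteg hlap hB hneg hΓ hl).const_mul l
    rwa [show l * (c * (fejerMass / l)) = c * fejerMass by field_simp] at this
  refine (hlim.comp Real.tendsto_log_atTop).congr' ?_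
  filter_upwards [eventually_gt_atTop 0] with X hX
  simp only [Function.comp_apply, B, Real.exp_neg, Real.exp_log hX, inv_mul_eq_div]

end Laplace

section Boundary

lemma isOpen_one_lt_re : IsOpen {s : ℂ | 1 < s.re} := isOpen_lt continuous_const continuous_re

lemma extendsToBoundary_of_tendsto {F : ℂ → ℂ} (hF : ContinuousOn F {s | 1 < s.re})
    (h : ∀ s₀ : ℂ, s₀.re = 1 → ∃ L, Tendsto F (𝓝[{s | 1 < s.re}] s₀) (𝓝 L)) :
    ExtendsToBoundary F := by
  refine ⟨extendFrom {s | 1 < s.re} F, continuousOn_extendFrom ?_ fun s hs ↦ ?_,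
    fun s hs ↦ (extendFrom_eq (subset_closure hs) (hF s hs)).symm⟩
  · rw [closure_setOfPred_lt_re]
  · rcases eq_or_lt_of_le (show 1 ≤ s.re from hs) with hs | hs
    · exact h s hs.symm
    · exact ⟨F s, hF s hs⟩

namespace ExtendsToBoundary

variable {F G : ℂ → ℂ}

lemma congr (hF : ExtendsToBoundary F) (h : EqOn F G {s | 1 < s.re}) : ExtendsToBoundary G := by
  obtain ⟨Γ, hΓ, hFΓ⟩ := hF
  exact ⟨Γ, hΓ, h.symm.trans hFΓ⟩

lemma add (hF : ExtendsToBoundary F) (hG : ExtendsToBoundary G) :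
    ExtendsToBoundary fun s ↦ F s + G s := by
  obtain ⟨Γ, hΓ, hFΓ⟩ := hF
  obtain ⟨Δ, hΔ, hGΔ⟩ := hG
  exact ⟨fun s ↦ Γ s + Δ s, hΓ.add hΔ, fun s hs ↦ congrArg₂ _ (hFΓ hs) (hGΔ hs)⟩

lemma const_mul (c : ℂ) (hF : ExtendsToBoundary F) : ExtendsToBoundary fun s ↦ c * F s := by
  obtain ⟨Γ, hΓ, hFΓ⟩ := hF
  exact ⟨fun s ↦ c * Γ s, continuousOn_const.mul hΓ, fun s hs ↦ congrArg _ (hFΓ hs)⟩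

lemma conj (hF : ExtendsToBoundary F) :
    ExtendsToBoundary fun s ↦ starRingEnd ℂ (F (starRingEnd ℂ s)) := by
  obtain ⟨Γ, hΓ, hFΓ⟩ := hF
  refine ⟨fun s ↦ starRingEnd ℂ (Γ (starRingEnd ℂ s)), continuous_conj.comp_continuousOn
    (hΓ.comp continuous_conj.continuousOn fun s hs ↦ by simpa using hs), fun s hs ↦ ?_⟩
  exact congrArg _ (hFΓ (by simpa using hs))

end ExtendsToBoundary

end Boundary

section ComplexCoefficients

variable {ι : Type*} {a x : ι → ℝ} {b : ι → ℂ}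

lemma summable_mul_cpow_neg (hx : ∀ i, 1 ≤ x i)
    (hs : ∀ σ : ℝ, 1 < σ → Summable fun i ↦ a i * x i ^ (-σ)) (hb : ∀ i, ‖b i‖ ≤ a i) {s : ℂ}
    (hsre : 1 < s.re) : Summable fun i ↦ b i * (x i : ℂ) ^ (-s) := by
  refine .of_norm_bounded (hs _ hsre) fun i ↦ ?_
  have hx0 : 0 < x i := one_pos.trans_le (hx i)
  rw [norm_mul, norm_ofReal_cpow_neg hx0]
  exact mul_le_mul_of_nonneg_right (hb i) (Real.rpow_nonneg hx0.le _)

lemma conj_dirichletSum_conj (hx : ∀ i, 1 ≤ x i) (b : ι → ℂ) (s : ℂ) :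
    starRingEnd ℂ (dirichletSum b x (starRingEnd ℂ s)) =
      dirichletSum (fun i ↦ starRingEnd ℂ (b i)) x s := by
  rw [dirichletSum, conj_tsum]
  refine tsum_congr fun i ↦ ?_
  have harg : arg (x i : ℂ) ≠ Real.pi := by
    rw [arg_ofReal_of_nonneg (zero_le_one.trans (hx i))]
    exact Real.pi_ne_zero.symm
  rw [map_mul, ← map_neg, cpow_conj _ _ harg, conj_ofReal, RingHomCompTriple.comp_apply]
  rfl

variable (hx : ∀ i, 1 ≤ x i) (hs : ∀ σ : ℝ, 1 < σ → Summable fun i ↦ a i * x i ^ (-σ))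
  (hb : ∀ i, ‖b i‖ ≤ a i)

include hx hs hb

lemma dirichletSum_add_re {s : ℂ} (hsre : 1 < s.re) :
    dirichletSum (fun i ↦ ((a i + (b i).re : ℝ) : ℂ)) x s =
      dirichletSum (fun i ↦ a i) x s +
        (1 / 2) * (dirichletSum b x s + starRingEnd ℂ (dirichletSum b x (starRingEnd ℂ s))) := by
  have ha (i) : ‖(a i : ℂ)‖ ≤ a i := by
    rw [norm_real, Real.norm_of_nonneg ((norm_nonneg _).trans (hb i))]
  have hconj (i) : ‖starRingEnd ℂ (b i)‖ ≤ a i := by simpa using hb i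
  have hsumm_a := summable_mul_cpow_neg hx hs ha hsre
  have hsumm_b := summable_mul_cpow_neg hx hs hb hsre
  have hsumm_conj := summable_mul_cpow_neg hx hs hconj hsre
  rw [conj_dirichletSum_conj hx]
  simp only [dirichletSum]
  rw [← hsumm_b.tsum_add hsumm_conj, ← tsum_mul_left,
    ← hsumm_a.tsum_add ((hsumm_b.add hsumm_conj).mul_left _)]
  refine tsum_congr fun i ↦ ?_
  push_cast
  rw [re_eq_add_conj]
  ring

variable [Countable ι] {c : ℝ} {d : ℂ}
  (ha : ExtendsToBoundary fun s ↦ dirichletSum (fun i ↦ a i) x s - c / (s - 1))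

include ha

lemma tendsto_summatory_re
    (hd : ExtendsToBoundary fun s ↦ dirichletSum b x s - d / (s - 1)) :
    Tendsto (fun X ↦ summatory (fun i ↦ (b i).re) x X / X) atTop (𝓝 d.re) := by
  have ha0 (i) : 0 ≤ a i := (norm_nonneg _).trans (hb i)
  have hre (i) : |(b i).re| ≤ a i := (abs_re_le_norm _).trans (hb i)
  have hab0 (i) : 0 ≤ a i + (b i).re := by linarith [neg_abs_le (b i).re, hre i]
  have hab : ∀ σ : ℝ, 1 < σ → Summable fun i ↦ (a i + (b i).re) * x i ^ (-σ) := fun σ hσ ↦ by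
    have hpow (i) : 0 ≤ x i ^ (-σ) := Real.rpow_nonneg (zero_le_one.trans (hx i)) _
    refine .of_nonneg_of_le (fun i ↦ mul_nonneg (hab0 i) (hpow i)) (fun i ↦ ?_)
      ((hs σ hσ).mul_left 2)
    rw [← mul_assoc]
    exact mul_le_mul_of_nonneg_right (by linarith [le_abs_self (b i).re, hre i]) (hpow i)
  have hext : ExtendsToBoundary fun s ↦
      dirichletSum (fun i ↦ ((a i + (b i).re : ℝ) : ℂ)) x s - (c + d.re : ℝ) / (s - 1) := by
    refine (ha.add ((hd.add hd.conj).const_mul (1 / 2))).congr fun s hsre ↦ ?_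
    simp only [dirichletSum_add_re hx hs hb hsre, map_sub, map_div₀, map_one, conj_conj]
    push_cast
    rw [re_eq_add_conj d]
    ring
  have hlim := (wiener_ikehara hab0 hx hab hext).sub (wiener_ikehara ha0 hx hs ha)
  rw [add_sub_cancel_left] at hlim
  refine hlim.congr fun X ↦ ?_
  rw [← sub_div, summatory, summatory, ← (summable_ite_le hab0 hx hab X).tsum_sub
    (summable_ite_le ha0 hx hs X), summatory]
  congr 2 with i
  split_ifs <;> ring

theorem wiener_ikehara_complex
    (hd : ExtendsToBoundary fun s ↦ dirichletSum b x s - d / (s - 1)) :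
    Tendsto (fun X : ℝ ↦ summatory b x X / X) atTop (𝓝 d) := by
  have ha0 (i) : 0 ≤ a i := (norm_nonneg _).trans (hb i)
  have hsumm (X : ℝ) : Summable fun i ↦ if x i ≤ X then b i else 0 :=
    .of_norm_bounded (summable_ite_le ha0 hx hs X) fun i ↦ by
      split_ifs
      · exact hb i
      · simp
  have hrot : ExtendsToBoundary fun s ↦ dirichletSum (fun i ↦ -I * b i) x s - -I * d / (s - 1) :=
    (hd.const_mul (-I)).congr fun s _ ↦ by
      simp only [dirichletSum, mul_assoc, tsum_mul_left]
      ring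
  have hre := tendsto_summatory_re hx hs hb ha hd
  have him := tendsto_summatory_re hx hs (b := fun i ↦ -I * b i) (by simpa using hb) ha hrot
  rw [← re_add_im d, show d.im = (-I * d).re by simp]
  refine ((continuous_ofReal.tendsto _).comp hre |>.add
    (((continuous_ofReal.tendsto _).comp him).mul_const I)).congr fun X ↦ ?_
  have hsplit : summatory b x X = (summatory (fun i ↦ (b i).re) x X : ℝ) +
      (summatory (fun i ↦ (-I * b i).re) x X : ℝ) * I := by
    have hre_tsum := re_tsum (hsumm X)
    have him_tsum := im_tsum (hsumm X)
    simp only [apply_ite re, apply_ite im, zero_re, zero_im] at hre_tsum him_tsum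
    rw [← re_add_im (summatory b x X)]
    simp [summatory, hre_tsum, him_tsum]
  simp only [Function.comp_apply]
  rw [hsplit]
  push_cast
  ring

end ComplexCoefficients

end WienerIkehara

section LogarithmicDerivative

open Filter Topology Set Complex

section DirichletSum

variable {ι : Type*}

lemma summable_mul_log_mul_rpow {a x : ι → ℝ} (ha : ∀ i, 0 ≤ a i) (hx : ∀ i, a i = 0 ∨ 1 ≤ x i)
    (hs : ∀ σ : ℝ, 1 < σ → Summable fun i ↦ a i * x i ^ (-σ)) {σ : ℝ} (hσ : 1 < σ) :
    Summable fun i ↦ a i * Real.log (x i) * x i ^ (-σ) := by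
  have hσ' : 0 < (σ - 1) / 2 := by linarith
  refine .of_nonneg_of_le (fun i ↦ ?_) (fun i ↦ ?_)
    ((hs ((1 + σ) / 2) (by linarith)).mul_left ((σ - 1) / 2)⁻¹)
  · rcases hx i with hi | hi
    · simp [hi]
    · have := Real.log_nonneg hi
      have := ha i
      positivity
  · rcases hx i with hi | hi
    · simp [hi]
    · have hx0 : 0 < x i := one_pos.trans_le hi
      calc a i * Real.log (x i) * x i ^ (-σ)
          ≤ a i * (x i ^ ((σ - 1) / 2) / ((σ - 1) / 2)) * x i ^ (-σ) := by
            gcongr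
            · exact ha i
            · exact Real.log_le_rpow_div hx0.le hσ'
        _ = ((σ - 1) / 2)⁻¹ * (a i * (x i ^ ((σ - 1) / 2) * x i ^ (-σ))) := by ring
        _ = ((σ - 1) / 2)⁻¹ * (a i * x i ^ (-((1 + σ) / 2))) := by
            rw [← Real.rpow_add hx0]
            ring_nf

variable {a : ι → ℂ} {x : ι → ℝ} (hx : ∀ i, a i = 0 ∨ 1 ≤ x i)

include hx

lemma norm_mul_cpow_neg (s : ℂ) (i : ι) :
    ‖a i * (x i : ℂ) ^ (-s)‖ = ‖a i‖ * x i ^ (-s.re) := by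
  rcases hx i with hi | hi
  · simp [hi]
  · rw [norm_mul, norm_ofReal_cpow_neg (one_pos.trans_le hi)]

lemma norm_mul_log_mul_cpow_neg (s : ℂ) (i : ι) :
    ‖a i * Real.log (x i) * (x i : ℂ) ^ (-s)‖ = ‖a i‖ * Real.log (x i) * x i ^ (-s.re) := by
  rcases hx i with hi | hi
  · simp [hi]
  · rw [norm_mul, norm_mul, norm_ofReal_cpow_neg (one_pos.trans_le hi), norm_real,
      Real.norm_of_nonneg (Real.log_nonneg hi)]

lemma hasDerivAt_mul_cpow_neg (i : ι) (s : ℂ) :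
    HasDerivAt (fun s ↦ a i * (x i : ℂ) ^ (-s)) (-(a i * Real.log (x i) * (x i : ℂ) ^ (-s))) s := by
  rcases hx i with hi | hi
  · simp only [hi, zero_mul, neg_zero]
    exact hasDerivAt_const _ _
  · have hx0 : (x i : ℂ) ≠ 0 := by exact_mod_cast (one_pos.trans_le hi).ne'
    refine (((hasDerivAt_neg s).const_cpow (Or.inl hx0)).const_mul (a i)).congr_deriv ?_
    rw [ofReal_log (zero_le_one.trans hi)]
    ring

theorem hasDerivAt_dirichletSum (hs : ∀ σ : ℝ, 1 < σ → Summable fun i ↦ ‖a i‖ * x i ^ (-σ))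
    {s : ℂ} (hsre : 1 < s.re) :
    HasDerivAt (dirichletSum a x) (-∑' i, a i * Real.log (x i) * (x i : ℂ) ^ (-s)) s := by
  obtain ⟨σ, hσ, hσs⟩ := exists_between hsre
  have hlog := summable_mul_log_mul_rpow (fun i ↦ norm_nonneg (a i)) (by simpa using hx) hs hσ
  rw [← tsum_neg]
  refine hasDerivAt_tsum_of_isPreconnected hlog (isOpen_lt continuous_const continuous_re)
    (convex_halfSpace_re_gt σ).isPreconnected (fun i y _ ↦ hasDerivAt_mul_cpow_neg hx i y)
    (fun i y hy ↦ ?_) hσs ?_ hσs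
  · rw [norm_neg, norm_mul_log_mul_cpow_neg hx]
    rcases hx i with hi | hi
    · simp [hi]
    · have := Real.log_nonneg hi
      have : σ ≤ y.re := le_of_lt hy
      gcongr
  · exact .of_norm ((hs s.re hsre).congr fun i ↦ (norm_mul_cpow_neg hx s i).symm)

end DirichletSum

section GaussNorm

/-- The norm `x² + y²` of a Gaussian integer `x + yi`, as a real number. -/
def gaussNorm : GaussianInt →*₀ ℝ :=
  Complex.normSq.comp GaussianInt.toComplex.toMonoidWithZeroHom

/-- The Gaussian primes; associated primes are different elements. -/
abbrev GaussPrime : Type := {p : GaussianInt // Prime p}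

lemma gaussNorm_eq_intCast_norm (z : GaussianInt) : gaussNorm z = (z.norm : ℝ) :=
  (GaussianInt.intCast_real_norm z).symm

lemma gaussNorm_eq_sq_norm (z : GaussianInt) : gaussNorm z = ‖GaussianInt.toComplex z‖ ^ 2 :=
  normSq_eq_norm_sq _

lemma gaussNorm_eq (z : GaussianInt) : gaussNorm z = (z.re : ℝ) ^ 2 + (z.im : ℝ) ^ 2 := by
  rw [gaussNorm_eq_intCast_norm, Zsqrtd.norm_def]
  push_cast
  ring

lemma gaussNorm_nonneg (z : GaussianInt) : 0 ≤ gaussNorm z := normSq_nonneg _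

lemma one_le_gaussNorm {z : GaussianInt} (hz : z ≠ 0) : 1 ≤ gaussNorm z := by
  rw [gaussNorm_eq_intCast_norm]
  exact_mod_cast GaussianInt.norm_pos.mpr hz

lemma gaussNorm_pos {z : GaussianInt} (hz : z ≠ 0) : 0 < gaussNorm z :=
  one_pos.trans_le (one_le_gaussNorm hz)

lemma gaussNorm_eq_one_iff {z : GaussianInt} : gaussNorm z = 1 ↔ IsUnit z := by
  rw [gaussNorm_eq_intCast_norm, ← Zsqrtd.norm_eq_one_iff' (by norm_num)]
  exact_mod_cast Iff.rfl

lemma two_le_gaussNorm_prime (p : GaussPrime) : 2 ≤ gaussNorm p := by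
  have hne : gaussNorm p ≠ 1 := mt gaussNorm_eq_one_iff.mp p.2.not_isUnit
  have hge := one_le_gaussNorm p.2.ne_zero
  rw [gaussNorm_eq_intCast_norm] at hne hge ⊢
  norm_cast at hne hge ⊢
  omega

lemma one_le_gaussNorm_prime (p : GaussPrime) : 1 ≤ gaussNorm p := one_le_gaussNorm p.2.ne_zero

lemma log_gaussNorm_prime_nonneg (p : GaussPrime) : 0 ≤ Real.log (gaussNorm p) :=
  Real.log_nonneg (one_le_gaussNorm_prime p)

lemma gaussNorm_eq_of_associated {z w : GaussianInt} (h : Associated z w) :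
    gaussNorm z = gaussNorm w := by
  obtain ⟨u, rfl⟩ := h
  rw [map_mul, gaussNorm_eq_one_iff.mpr u.isUnit, mul_one]

/-- The coordinates of a Gaussian integer. -/
def gaussEquivFin : (Fin 2 → ℤ) ≃ GaussianInt where
  toFun v := ⟨v 0, v 1⟩
  invFun z := ![z.re, z.im]
  left_inv v := by ext i; fin_cases i <;> rfl
  right_inv z := rfl

instance : Countable GaussianInt := gaussEquivFin.symm.injective.countable

lemma finite_gaussNorm_le (B : ℝ) : {z : GaussianInt | gaussNorm z ≤ B}.Finite := by
  obtain ⟨n, hn⟩ := exists_nat_ge B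
  refine ((Set.finite_Icc (fun _ ↦ -(n : ℤ)) (fun _ ↦ (n : ℤ))).image gaussEquivFin).subset
    fun z hz ↦ ⟨gaussEquivFin.symm z, ?_, gaussEquivFin.apply_symm_apply z⟩
  have hsq : z.re ^ 2 + z.im ^ 2 ≤ n := by
    have := (show gaussNorm z ≤ B from hz).trans hn
    rw [gaussNorm_eq] at this
    exact_mod_cast this
  have hcoord (t : ℤ) (ht : t ^ 2 ≤ n) : -(n : ℤ) ≤ t ∧ t ≤ n := by
    constructor <;> nlinarith [Int.le_self_sq t, Int.le_self_sq (-t)]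
  have hre := hcoord z.re (by nlinarith)
  have him := hcoord z.im (by nlinarith)
  simp only [gaussEquivFin, Set.mem_Icc, Pi.le_def, Fin.forall_fin_two]
  exact ⟨⟨hre.1, him.1⟩, hre.2, him.2⟩

instance : Finite GaussianIntˣ := by
  have hfin := (finite_gaussNorm_le 1).to_subtype
  exact Finite.of_injective
    (fun u : GaussianIntˣ ↦ (⟨u, (gaussNorm_eq_one_iff.mpr u.isUnit).le⟩ :
      {z : GaussianInt | gaussNorm z ≤ 1})) fun u v h ↦ Units.ext (congrArg Subtype.val h)

lemma norm_sq_le_gaussNorm (v : Fin 2 → ℤ) : ‖v‖ ^ 2 ≤ gaussNorm (gaussEquivFin v) := by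
  have hle : ‖v‖ ≤ √(gaussNorm (gaussEquivFin v)) := by
    refine (pi_norm_le_iff_of_nonneg (Real.sqrt_nonneg _)).mpr fun i ↦ Real.le_sqrt_of_sq_le ?_
    have hnorm : gaussNorm (gaussEquivFin v) = (v 0 : ℝ) ^ 2 + (v 1 : ℝ) ^ 2 := gaussNorm_eq _
    rw [hnorm, Int.norm_eq_abs, sq_abs]
    fin_cases i <;> simp [sq_nonneg]
  calc ‖v‖ ^ 2 ≤ √(gaussNorm (gaussEquivFin v)) ^ 2 := by gcongr
    _ = _ := Real.sq_sqrt (gaussNorm_nonneg _)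

theorem summable_gaussNorm_rpow {σ : ℝ} (hσ : 1 < σ) :
    Summable fun z : GaussianInt ↦ gaussNorm z ^ (-σ) := by
  rw [← gaussEquivFin.summable_iff]
  refine .of_nonneg_of_le (fun v ↦ Real.rpow_nonneg (gaussNorm_nonneg _) _) (fun v ↦ ?_)
    (EisensteinSeries.summable_one_div_norm_rpow (k := 2 * σ) (by linarith))
  rcases eq_or_ne v 0 with rfl | hv
  · have h0 : gaussEquivFin 0 = 0 := rfl
    simp [h0, Real.zero_rpow (by linarith : -σ ≠ 0), Real.zero_rpow (by linarith : -(2 * σ) ≠ 0)]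
  · have hpos : 0 < ‖v‖ := norm_pos_iff.mpr hv
    calc gaussNorm (gaussEquivFin v) ^ (-σ) ≤ (‖v‖ ^ 2) ^ (-σ) :=
          Real.rpow_le_rpow_of_nonpos (by positivity) (norm_sq_le_gaussNorm v) (by linarith)
      _ = ‖v‖ ^ (-(2 * σ)) := by
          rw [← Real.rpow_natCast, ← Real.rpow_mul hpos.le]
          push_cast
          ring_nf

lemma summable_log_mul_gaussNorm_rpow {σ : ℝ} (hσ : 1 < σ) :
    Summable fun p : GaussPrime ↦ Real.log (gaussNorm p) * gaussNorm p ^ (-σ) := by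
  simpa using summable_mul_log_mul_rpow (a := fun _ : GaussPrime ↦ (1 : ℝ))
    (fun _ ↦ zero_le_one) (fun p ↦ Or.inr (one_le_gaussNorm_prime p))
    (fun σ hσ ↦ by
      simpa [Function.comp_def] using
        (summable_gaussNorm_rpow hσ).comp_injective Subtype.val_injective) hσ

lemma ofReal_gaussNorm_mul_cpow (z w : GaussianInt) (s : ℂ) :
    (gaussNorm (z * w) : ℂ) ^ s = (gaussNorm z : ℂ) ^ s * (gaussNorm w : ℂ) ^ s := by
  rw [map_mul, ofReal_mul, mul_cpow_ofReal_nonneg (gaussNorm_nonneg _) (gaussNorm_nonneg _)]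

end GaussNorm

section Multiplicity

lemma hasSum_multiplicity_prime {q : GaussianInt} (hq : Prime q) :
    HasSum (fun p : GaussPrime ↦ (multiplicity p.1 q : ℝ) * Real.log (gaussNorm p))
      (Nat.card GaussianIntˣ * Real.log (gaussNorm q)) := by
  have := Fintype.ofFinite GaussianIntˣ
  let assoc (u : GaussianIntˣ) : GaussPrime := ⟨u * q, (prime_isUnit_mul u.isUnit).mpr hq⟩
  have hassoc : Function.Injective assoc := fun u v h ↦
    Units.ext (mul_right_cancel₀ hq.ne_zero (congrArg Subtype.val h))
  have hval (u) : (multiplicity (assoc u).1 q : ℝ) * Real.log (gaussNorm (assoc u)) =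
      Real.log (gaussNorm q) := by
    have h : Associated (assoc u).1 q := associated_unit_mul_left q _ u.isUnit
    rw [multiplicity_eq_of_associated_left h.symm, multiplicity_self, gaussNorm_eq_of_associated h,
      Nat.cast_one, one_mul]
  rw [← hassoc.hasSum_iff]
  · simp only [Function.comp_def, hval]
    simpa using hasSum_fintype fun _ : GaussianIntˣ ↦ Real.log (gaussNorm q)
  · intro p hp
    have hdvd : ¬ p.1 ∣ q := fun hdvd ↦ by
      obtain ⟨u, hu⟩ := (p.2.associated_of_dvd hq hdvd).symm
      exact hp ⟨u, Subtype.ext ((mul_comm _ _).trans hu)⟩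
    simp [multiplicity_eq_zero.mpr hdvd]

lemma hasSum_multiplicity {z : GaussianInt} (hz : z ≠ 0) :
    HasSum (fun p : GaussPrime ↦ (multiplicity p.1 z : ℝ) * Real.log (gaussNorm p))
      (Nat.card GaussianIntˣ * Real.log (gaussNorm z)) := by
  induction z using UniqueFactorizationMonoid.induction_on_prime with
  | h₁ => exact absurd rfl hz
  | h₂ x hx =>
    have hmult (p : GaussPrime) : multiplicity p.1 x = 0 :=
      multiplicity_eq_zero.mpr fun h ↦ p.2.not_isUnit (isUnit_of_dvd_unit h hx)
    simp [hmult, gaussNorm_eq_one_iff.mpr hx, hasSum_zero]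
  | h₃ a q ha hq ih =>
    rw [map_mul, Real.log_mul (gaussNorm_pos hq.ne_zero).ne' (gaussNorm_pos ha).ne', mul_add]
    convert (hasSum_multiplicity_prime hq).add (ih ha) using 2 with p
    rw [multiplicity_mul p.2 (FiniteMultiplicity.of_not_isUnit p.2.not_isUnit hz)]
    push_cast
    ring

open scoped Classical in
lemma hasSum_ite_pow_dvd {z : GaussianInt} (hz : z ≠ 0) (p : GaussPrime) :
    HasSum (fun n : ℕ ↦ if p.1 ^ (n + 1) ∣ z then (1 : ℝ) else 0) (multiplicity p.1 z) := by
  have hfin : FiniteMultiplicity p.1 z := .of_not_isUnit p.2.not_isUnit hz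
  have hdvd (n : ℕ) : p.1 ^ (n + 1) ∣ z ↔ n ∈ Finset.range (multiplicity p.1 z) := by
    rw [hfin.pow_dvd_iff_le_multiplicity, Finset.mem_range, Nat.succ_le_iff]
  have hsum := hasSum_sum_of_ne_finset_zero (L := SummationFilter.unconditional ℕ)
    (f := fun n : ℕ ↦ if p.1 ^ (n + 1) ∣ z then (1 : ℝ) else 0)
    fun n hn ↦ if_neg (mt (hdvd n).mp hn)
  rwa [Finset.sum_congr rfl fun n hn ↦ if_pos ((hdvd n).mpr hn), Finset.sum_const,
    Finset.card_range, nsmul_one] at hsum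

open scoped Classical in
/-- The identity `log N = Λ * 1`; every prime ideal is counted once for each of its generators. -/
theorem hasSum_ite_pow_dvd_log {z : GaussianInt} (hz : z ≠ 0) :
    HasSum (fun q : GaussPrime × ℕ ↦
        if q.1.1 ^ (q.2 + 1) ∣ z then Real.log (gaussNorm q.1) else 0)
      (Nat.card GaussianIntˣ * Real.log (gaussNorm z)) := by
  have hnonneg (q : GaussPrime × ℕ) :
      0 ≤ if q.1.1 ^ (q.2 + 1) ∣ z then Real.log (gaussNorm q.1) else 0 := by
    split_ifs
    · exact log_gaussNorm_prime_nonneg q.1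
    · rfl
  have hfiber (p : GaussPrime) :
      HasSum (fun n : ℕ ↦ if p.1 ^ (n + 1) ∣ z then Real.log (gaussNorm p) else 0)
        (multiplicity p.1 z * Real.log (gaussNorm p)) :=
    ((hasSum_ite_pow_dvd hz p).mul_right _).congr_fun fun n ↦ by simp
  have hsummable : Summable fun q : GaussPrime × ℕ ↦
      if q.1.1 ^ (q.2 + 1) ∣ z then Real.log (gaussNorm q.1) else 0 :=
    (summable_prod_of_nonneg hnonneg).mpr ⟨fun p ↦ (hfiber p).summable,
      (hasSum_multiplicity hz).summable.congr fun p ↦ (hfiber p).tsum_eq.symm⟩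
  rw [(hasSum_multiplicity hz).unique (hsummable.hasSum.prod_fiberwise hfiber)]
  exact hsummable.hasSum

end Multiplicity

section CompletelyMultiplicative

lemma tsum_ite_dvd {𝕜 : Type*} [NormedField 𝕜] (g : GaussianInt →*₀ 𝕜) {d : GaussianInt}
    [DecidablePred (d ∣ ·)] (hd : d ≠ 0) (c : 𝕜) :
    ∑' z, (if d ∣ z then c else 0) * g z = c * g d * ∑' z, g z := by
  rw [← (mul_right_injective₀ hd).tsum_eq, ← tsum_mul_left]
  · exact tsum_congr fun w ↦ by rw [if_pos (dvd_mul_right d w), map_mul, mul_assoc]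
  · intro z hz
    by_contra hnot
    have hdvd : ¬ d ∣ z := fun ⟨w, hw⟩ ↦ hnot ⟨w, hw.symm⟩
    simp [hdvd] at hz

open scoped Classical in
theorem card_units_mul_tsum_log_mul (g : GaussianInt →*₀ ℂ)
    (hg : Summable fun z ↦ Real.log (gaussNorm z) * ‖g z‖) :
    Nat.card GaussianIntˣ * ∑' z, Real.log (gaussNorm z) * g z =
      (∑' z, g z) * ∑' q : GaussPrime × ℕ, Real.log (gaussNorm q.1) * g q.1 ^ (q.2 + 1) := by
  let w (z : GaussianInt) (q : GaussPrime × ℕ) : ℝ :=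
    if q.1.1 ^ (q.2 + 1) ∣ z then Real.log (gaussNorm q.1) else 0
  have hw (z q) : 0 ≤ w z q := by
    simp only [w]
    split_ifs
    · exact log_gaussNorm_prime_nonneg q.1
    · rfl
  have hrow (z) : HasSum (fun q ↦ (w z q : ℂ) * g z)
      (Nat.card GaussianIntˣ * (Real.log (gaussNorm z) * g z)) := by
    rcases eq_or_ne z 0 with rfl | hz
    · simp [hasSum_zero]
    · simpa [mul_assoc] using (hasSum_ofReal.mpr (hasSum_ite_pow_dvd_log hz)).mul_right (g z)
  have hrow_norm (z) : HasSum (fun q ↦ ‖(w z q : ℂ) * g z‖)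
      (Nat.card GaussianIntˣ * (Real.log (gaussNorm z) * ‖g z‖)) := by
    simp only [norm_mul, norm_real, Real.norm_of_nonneg (hw _ _)]
    rcases eq_or_ne z 0 with rfl | hz
    · simp [hasSum_zero]
    · simpa only [mul_assoc] using (hasSum_ite_pow_dvd_log hz).mul_right ‖g z‖
  have hsummable : Summable (Function.uncurry fun z q ↦ (w z q : ℂ) * g z) :=
    .of_norm ((summable_prod_of_nonneg fun _ ↦ norm_nonneg _).mpr
      ⟨fun z ↦ (hrow_norm z).summable, (hg.mul_left _).congr fun z ↦ (hrow_norm z).tsum_eq.symm⟩)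
  have hcolumn (q : GaussPrime × ℕ) : ∑' z, (w z q : ℂ) * g z =
      (∑' z, g z) * (Real.log (gaussNorm q.1) * g q.1 ^ (q.2 + 1)) := by
    have := tsum_ite_dvd g (pow_ne_zero (q.2 + 1) q.1.2.ne_zero) (Real.log (gaussNorm q.1) : ℂ)
    rw [map_pow] at this
    rw [mul_comm (∑' z, g z), ← this]
    exact tsum_congr fun z ↦ by simp only [w, ofReal_zero, apply_ite ofReal]
  rw [← tsum_mul_left, ← tsum_mul_left]
  calc ∑' z, Nat.card GaussianIntˣ * (Real.log (gaussNorm z) * g z)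
      = ∑' z, ∑' q, (w z q : ℂ) * g z := tsum_congr fun z ↦ (hrow z).tsum_eq.symm
    _ = ∑' q, ∑' z, (w z q : ℂ) * g z := hsummable.tsum_comm.symm
    _ = _ := tsum_congr hcolumn

end CompletelyMultiplicative

section LFunction

/-- The `L`-series `∑ f z / N(z) ^ s` over all Gaussian integers, so that every ideal is counted
once for each of its generators. -/
def gaussLSeries (f : GaussianInt → ℂ) : ℂ → ℂ := dirichletSum f gaussNorm

/-- The sum `∑ f p * log N(p) / N(p) ^ s` over the Gaussian primes. -/
def primeSum (f : GaussianInt → ℂ) : ℂ → ℂ :=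
  dirichletSum (fun p : GaussPrime ↦ f p * Real.log (gaussNorm p)) fun p ↦ gaussNorm p

/-- The contribution of the proper prime powers to the logarithmic derivative of
`gaussLSeries f`. -/
def primePowerSum (f : GaussianInt → ℂ) (s : ℂ) : ℂ :=
  ∑' q : GaussPrime × ℕ,
    Real.log (gaussNorm q.1) * (f q.1 * (gaussNorm q.1 : ℂ) ^ (-s)) ^ (q.2 + 2)

lemma eq_zero_or_one_le_gaussNorm {f : GaussianInt → ℂ} (hf0 : f 0 = 0) (z : GaussianInt) :
    f z = 0 ∨ 1 ≤ gaussNorm z := by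
  rcases eq_or_ne z 0 with rfl | hz
  · exact Or.inl hf0
  · exact Or.inr (one_le_gaussNorm hz)

lemma summable_norm_mul_gaussNorm_rpow {f : GaussianInt → ℂ} {C : ℝ} (hf : ∀ z, ‖f z‖ ≤ C)
    {σ : ℝ} (hσ : 1 < σ) : Summable fun z ↦ ‖f z‖ * gaussNorm z ^ (-σ) :=
  .of_nonneg_of_le (fun z ↦ mul_nonneg (norm_nonneg _) (Real.rpow_nonneg (gaussNorm_nonneg z) _))
    (fun z ↦ mul_le_mul_of_nonneg_right (hf z) (Real.rpow_nonneg (gaussNorm_nonneg z) _))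
    ((summable_gaussNorm_rpow hσ).mul_left C)

lemma hasDerivAt_gaussLSeries {f : GaussianInt → ℂ} (hf0 : f 0 = 0) {C : ℝ}
    (hf : ∀ z, ‖f z‖ ≤ C) {s : ℂ} (hs : 1 < s.re) :
    HasDerivAt (gaussLSeries f)
      (-∑' z, f z * Real.log (gaussNorm z) * (gaussNorm z : ℂ) ^ (-s)) s :=
  hasDerivAt_dirichletSum (eq_zero_or_one_le_gaussNorm hf0)
    (fun _ hσ ↦ summable_norm_mul_gaussNorm_rpow hf hσ) hs

section PrimeSum

variable {f : GaussianInt → ℂ} (hf : ∀ z, ‖f z‖ ≤ 1)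

include hf

lemma norm_mul_log_le (p : GaussPrime) :
    ‖f p * Real.log (gaussNorm p)‖ ≤ Real.log (gaussNorm p) := by
  rw [norm_mul, norm_real, Real.norm_of_nonneg (log_gaussNorm_prime_nonneg p)]
  exact mul_le_of_le_one_left (log_gaussNorm_prime_nonneg p) (hf p)

lemma summable_primeSum {s : ℂ} (hs : 1 < s.re) :
    Summable fun p : GaussPrime ↦
      f p * Real.log (gaussNorm p) * (gaussNorm p : ℂ) ^ (-s) :=
  summable_mul_cpow_neg one_le_gaussNorm_prime (fun _ ↦ summable_log_mul_gaussNorm_rpow)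
    (norm_mul_log_le hf) hs

lemma continuousOn_primeSum : ContinuousOn (primeSum f) {s | 1 < s.re} := fun _ hs ↦
  (hasDerivAt_dirichletSum (fun p ↦ Or.inr (one_le_gaussNorm_prime p)) (fun _ hσ ↦
    .of_nonneg_of_le
      (fun p ↦ mul_nonneg (norm_nonneg _) (Real.rpow_nonneg (gaussNorm_nonneg p) _))
      (fun p ↦ mul_le_mul_of_nonneg_right (norm_mul_log_le hf p)
        (Real.rpow_nonneg (gaussNorm_nonneg p) _))
      (summable_log_mul_gaussNorm_rpow hσ)) hs).continuousAt.continuousWithinAt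

lemma norm_mul_cpow_prime_le (p : GaussPrime) (s : ℂ) :
    ‖f p * (gaussNorm p : ℂ) ^ (-s)‖ ≤ gaussNorm p ^ (-s.re) := by
  rw [norm_mul, norm_ofReal_cpow_neg (gaussNorm_pos p.2.ne_zero)]
  exact mul_le_of_le_one_left (Real.rpow_nonneg (gaussNorm_nonneg _) _) (hf p)

lemma norm_mul_cpow_prime_le_half (p : GaussPrime) {s : ℂ} (hs : 1 ≤ s.re) :
    ‖f p * (gaussNorm p : ℂ) ^ (-s)‖ ≤ 1 / 2 :=
  calc ‖f p * (gaussNorm p : ℂ) ^ (-s)‖ ≤ gaussNorm p ^ (-s.re) := norm_mul_cpow_prime_le hf p s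
    _ ≤ gaussNorm p ^ (-1 : ℝ) :=
        Real.rpow_le_rpow_of_exponent_le (one_le_gaussNorm_prime p) (by linarith)
    _ ≤ 1 / 2 := by
        rw [Real.rpow_neg_one, one_div]
        exact inv_anti₀ two_pos (two_le_gaussNorm_prime p)

lemma norm_primePower_le (q : GaussPrime × ℕ) (j : ℕ) {s : ℂ} (hs : 1 ≤ s.re) :
    ‖(Real.log (gaussNorm q.1) : ℂ) * (f q.1 * (gaussNorm q.1 : ℂ) ^ (-s)) ^ (q.2 + j)‖ ≤
      Real.log (gaussNorm q.1) * gaussNorm q.1 ^ (-(j * s.re)) * (1 / 2) ^ q.2 := by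
  have hlog := log_gaussNorm_prime_nonneg q.1
  have hpow : gaussNorm q.1 ^ (-(j * s.re)) = (gaussNorm q.1 ^ (-s.re)) ^ j := by
    rw [← Real.rpow_natCast, ← Real.rpow_mul (gaussNorm_nonneg _)]
    ring_nf
  rw [norm_mul, norm_pow, norm_real, Real.norm_of_nonneg hlog, mul_assoc, pow_add, mul_comm
    (_ ^ q.2), hpow]
  gcongr
  · exact pow_nonneg (Real.rpow_nonneg (gaussNorm_nonneg _) _) _
  · exact norm_mul_cpow_prime_le hf q.1 s
  · exact norm_mul_cpow_prime_le_half hf q.1 hs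

omit hf in
lemma summable_primePower_bound {σ : ℝ} (hσ : 1 < σ) :
    Summable fun q : GaussPrime × ℕ ↦
      Real.log (gaussNorm q.1) * gaussNorm q.1 ^ (-σ) * (1 / 2 : ℝ) ^ q.2 :=
  (summable_log_mul_gaussNorm_rpow hσ).mul_of_nonneg
    (summable_geometric_of_lt_one (by norm_num) (by norm_num))
    (fun p ↦ mul_nonneg (log_gaussNorm_prime_nonneg p) (Real.rpow_nonneg (gaussNorm_nonneg _) _))
    fun n ↦ by positivity

lemma norm_primePower_two_le (q : GaussPrime × ℕ) {s : ℂ} (hs : 1 ≤ s.re) :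
    ‖(Real.log (gaussNorm q.1) : ℂ) * (f q.1 * (gaussNorm q.1 : ℂ) ^ (-s)) ^ (q.2 + 2)‖ ≤
      Real.log (gaussNorm q.1) * gaussNorm q.1 ^ (-2 : ℝ) * (1 / 2) ^ q.2 := by
  refine (norm_primePower_le hf q 2 hs).trans ?_
  have := log_gaussNorm_prime_nonneg q.1
  gcongr
  · exact one_le_gaussNorm_prime q.1
  · push_cast
    linarith

lemma tendsto_primePowerSum (s₀ : ℂ) :
    Tendsto (primePowerSum f) (𝓝[{s | 1 < s.re}] s₀) (𝓝 (primePowerSum f s₀)) := by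
  refine tendsto_tsum_of_dominated_convergence (summable_primePower_bound one_lt_two)
    (fun q ↦ ?_) ?_
  · have hne : (gaussNorm q.1 : ℂ) ≠ 0 := by exact_mod_cast (gaussNorm_pos q.1.2.ne_zero).ne'
    have hcpow : Continuous fun s : ℂ ↦ (gaussNorm q.1 : ℂ) ^ (-s) :=
      continuous_neg.const_cpow (Or.inl hne)
    have hterm : Continuous fun s : ℂ ↦ (Real.log (gaussNorm q.1) : ℂ) *
        (f q.1 * (gaussNorm q.1 : ℂ) ^ (-s)) ^ (q.2 + 2) := by fun_prop
    exact (hterm.tendsto s₀).mono_left nhdsWithin_le_nhds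
  · filter_upwards [self_mem_nhdsWithin] with s hs q
    exact norm_primePower_two_le hf q (le_of_lt hs)

lemma tsum_primePower_eq {s : ℂ} (hs : 1 < s.re) :
    ∑' q : GaussPrime × ℕ,
        Real.log (gaussNorm q.1) * (f q.1 * (gaussNorm q.1 : ℂ) ^ (-s)) ^ (q.2 + 1) =
      primeSum f s + primePowerSum f s := by
  have hsumm₁ := Summable.of_norm_bounded
    (summable_primePower_bound (σ := (1 : ℕ) * s.re) (by simpa using hs))
    fun q ↦ norm_primePower_le hf q 1 hs.le
  have hsumm₂ := Summable.of_norm_bounded (summable_primePower_bound one_lt_two)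
    fun q ↦ norm_primePower_two_le hf q hs.le
  rw [primePowerSum, primeSum, dirichletSum, hsumm₁.tsum_prod, hsumm₂.tsum_prod,
    ← (summable_primeSum hf hs).tsum_add hsumm₂.prod]
  refine tsum_congr fun p ↦ ?_
  rw [(hsumm₁.prod_factor p).tsum_eq_zero_add]
  ring_nf

end PrimeSum

/-- The completely multiplicative summand of `gaussLSeries f s`. -/
def lSeriesTerm (f : GaussianInt →*₀ ℂ) (s : ℂ) : GaussianInt →*₀ ℂ where
  toFun z := f z * (gaussNorm z : ℂ) ^ (-s)
  map_zero' := by simp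
  map_one' := by simp
  map_mul' z w := by
    rw [map_mul, ofReal_gaussNorm_mul_cpow]
    ring

lemma lSeriesTerm_apply (f : GaussianInt →*₀ ℂ) (s : ℂ) (z : GaussianInt) :
    lSeriesTerm f s z = f z * (gaussNorm z : ℂ) ^ (-s) := rfl

theorem card_units_mul_deriv_gaussLSeries (f : GaussianInt →*₀ ℂ) (hf : ∀ z, ‖f z‖ ≤ 1) {s : ℂ}
    (hs : 1 < s.re) :
    Nat.card GaussianIntˣ * deriv (gaussLSeries f) s =
      -(gaussLSeries f s * (primeSum f s + primePowerSum f s)) := by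
  have hlog := summable_mul_log_mul_rpow (fun z ↦ norm_nonneg (f z))
    (by simpa using eq_zero_or_one_le_gaussNorm (map_zero f))
    (fun _ ↦ summable_norm_mul_gaussNorm_rpow hf) hs
  have key := card_units_mul_tsum_log_mul (lSeriesTerm f s) (hlog.congr fun z ↦ by
    rw [show ‖lSeriesTerm f s z‖ = _ from
      norm_mul_cpow_neg (eq_zero_or_one_le_gaussNorm (map_zero f)) s z]
    ring)
  rw [(hasDerivAt_gaussLSeries (map_zero f) hf hs).deriv, mul_neg, ← tsum_primePower_eq hf hs]
  refine congrArg Neg.neg (Eq.trans ?_ key)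
  congr 1
  exact tsum_congr fun z ↦ by rw [lSeriesTerm_apply]; ring

lemma primeSum_eq_zero {f : GaussianInt →*₀ ℂ} {u : GaussianIntˣ} (hu : f u ≠ 1) (s : ℂ) :
    primeSum f s = 0 := by
  let rotate : GaussPrime ≃ GaussPrime :=
    (Units.mulLeft u).subtypeEquiv fun p ↦ (prime_isUnit_mul u.isUnit).symm
  have hrotate : primeSum f s = f u * primeSum f s := by
    conv_lhs => rw [primeSum, dirichletSum, ← rotate.tsum_eq]
    rw [primeSum, dirichletSum, ← tsum_mul_left]
    refine tsum_congr fun p ↦ ?_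
    have hval : (rotate p : GaussianInt) = u * p := rfl
    rw [hval, map_mul, map_mul, gaussNorm_eq_one_iff.mpr u.isUnit, one_mul]
    ring
  by_contra h0
  exact hu (mul_right_cancel₀ h0 (hrotate.symm.trans (one_mul _).symm))

end LFunction

end LogarithmicDerivative

section Continuation

open Filter Topology Set Complex
open GaussianInt (toComplex)

section Estimates

lemma norm_pow_sub_pow_le {a b : ℂ} (ha : ‖a‖ = 1) (hb : ‖b‖ = 1) (n : ℕ) :
    ‖a ^ n - b ^ n‖ ≤ n * ‖a - b‖ := by
  induction n with
  | zero => simp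
  | succ n ih =>
    calc ‖a ^ (n + 1) - b ^ (n + 1)‖ = ‖a ^ n * (a - b) + (a ^ n - b ^ n) * b‖ := by ring_nf
      _ ≤ ‖a ^ n * (a - b)‖ + ‖(a ^ n - b ^ n) * b‖ := norm_add_le _ _
      _ = ‖a - b‖ + ‖a ^ n - b ^ n‖ := by simp [ha, hb]
      _ ≤ (n + 1 : ℕ) * ‖a - b‖ := by push_cast; linarith

lemma norm_zpow_sub_zpow_le {a b : ℂ} (ha : ‖a‖ = 1) (hb : ‖b‖ = 1) (k : ℤ) :
    ‖a ^ k - b ^ k‖ ≤ |(k : ℝ)| * ‖a - b‖ := by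
  obtain ⟨n, rfl | rfl⟩ := k.eq_nat_or_neg
  · simpa using norm_pow_sub_pow_le ha hb n
  · have ha0 : a ≠ 0 := norm_ne_zero_iff.mp (by simp [ha])
    have hb0 : b ≠ 0 := norm_ne_zero_iff.mp (by simp [hb])
    have hinv : ‖a⁻¹ - b⁻¹‖ = ‖a - b‖ := by
      rw [inv_sub_inv ha0 hb0, norm_div, norm_mul, ha, hb, norm_sub_rev, mul_one, div_one]
    simpa [hinv] using
      norm_pow_sub_pow_le (a := a⁻¹) (b := b⁻¹) (by simp [ha]) (by simp [hb]) n

lemma norm_unit_sub_unit_le {z r : ℂ} (hz : z ≠ 0) (hzr : z + r ≠ 0) :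
    ‖(z + r) / ‖z + r‖ - z / ‖z‖‖ ≤ 2 * ‖r‖ / ‖z‖ := by
  have hz' : (‖z‖ : ℂ) ≠ 0 := by simpa using hz
  have hzr' : (‖z + r‖ : ℂ) ≠ 0 := by simpa using hzr
  have hsplit : (z + r) / ‖z + r‖ - z / ‖z‖ =
      ((z + r) / ‖z + r‖ * (‖z‖ - ‖z + r‖ : ℝ) + r) / ‖z‖ := by
    push_cast
    field_simp
    ring
  have hunit : ‖(z + r) / (‖z + r‖ : ℂ)‖ = 1 := by
    rw [norm_div, norm_real, norm_norm, div_self (norm_ne_zero_iff.mpr hzr)]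
  have hdiff : |‖z‖ - ‖z + r‖| ≤ ‖r‖ := by simpa using abs_norm_sub_norm_le z (z + r)
  rw [hsplit, norm_div, norm_real, norm_norm]
  gcongr
  calc _ ≤ ‖(z + r) / (‖z + r‖ : ℂ) * (‖z‖ - ‖z + r‖ : ℝ)‖ + ‖r‖ := norm_add_le _ _
    _ = |‖z‖ - ‖z + r‖| + ‖r‖ := by rw [norm_mul, hunit, one_mul, norm_real, Real.norm_eq_abs]
    _ ≤ 2 * ‖r‖ := by linarith

variable {a b r : ℝ} {s : ℂ}

lemma hasDerivAt_ofReal_cpow_neg (ha : 0 < a) (s : ℂ) :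
    HasDerivAt (fun x : ℝ ↦ (x : ℂ) ^ (-s)) (-s * (a : ℂ) ^ (-(s + 1))) a := by
  have := ((hasDerivAt_id (a : ℂ)).cpow_const (c := -s) (Or.inl (by simpa using ha))).comp_ofReal
  simpa [neg_add, sub_eq_add_neg, add_comm] using this

lemma norm_cpow_neg_sub_cpow_neg_le (hr : 0 < r) (ha : r ≤ a) (hb : r ≤ b) (hs : 0 ≤ s.re) :
    ‖(a : ℂ) ^ (-s) - (b : ℂ) ^ (-s)‖ ≤ ‖s‖ * r ^ (-(s.re + 1)) * |a - b| := by
  refine (convex_Ici r).norm_image_sub_le_of_norm_hasDerivWithin_le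
    (fun x hx ↦ (hasDerivAt_ofReal_cpow_neg (hr.trans_le hx) s).hasDerivWithinAt)
    (fun x hx ↦ ?_) hb ha
  rw [norm_mul, norm_neg, norm_ofReal_cpow_neg (hr.trans_le hx), add_re, one_re]
  gcongr ‖s‖ * ?_
  exact Real.rpow_le_rpow_of_nonpos hr hx (by linarith)

lemma norm_cpow_neg_add_cpow_neg_sub_le {l : ℝ} (hr : 0 < r) (hadd : r ≤ b + l)
    (hsub : r ≤ b - l) (hs : 0 ≤ s.re) :
    ‖((b + l : ℝ) : ℂ) ^ (-s) + ((b - l : ℝ) : ℂ) ^ (-s) - 2 * (b : ℂ) ^ (-s)‖ ≤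
      ‖s‖ * (‖s + 1‖ * r ^ (-(s.re + 2)) * |l|) * |l| := by
  wlog hl : 0 ≤ l generalizing l
  · have := this (l := -l) (by linarith) (by linarith) (by linarith)
    rw [abs_neg, sub_neg_eq_add, ← sub_eq_add_neg] at this
    rwa [add_comm (((b + l : ℝ) : ℂ) ^ (-s))]
  have hderiv (x : ℝ) (hx : r ≤ x) :
      HasDerivAt (fun x : ℝ ↦ ((x + l : ℝ) : ℂ) ^ (-s) - (x : ℂ) ^ (-s))
        (-s * (((x + l : ℝ) : ℂ) ^ (-(s + 1)) - (x : ℂ) ^ (-(s + 1)))) x := by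
    have h₁ := (hasDerivAt_ofReal_cpow_neg (a := x + l) (by linarith) s).comp_add_const x l
    exact (h₁.sub (hasDerivAt_ofReal_cpow_neg (hr.trans_le hx) s)).congr_deriv (by ring)
  have hmvt := (convex_Ici r).norm_image_sub_le_of_norm_hasDerivWithin_le
    (C := ‖s‖ * (‖s + 1‖ * r ^ (-(s.re + 2)) * |l|))
    (fun x hx ↦ (hderiv x hx).hasDerivWithinAt) (fun x hx ↦ ?_) hsub
    (show r ≤ b by linarith)
  · rw [sub_sub_cancel, Real.norm_eq_abs, sub_add_cancel] at hmvt
    refine le_of_eq_of_le (congrArg _ ?_) hmvt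
    ring
  · have := norm_cpow_neg_sub_cpow_neg_le (a := x + l) (b := x) (s := s + 1) hr
      (by have : r ≤ x := hx; linarith) hx (by simp; linarith)
    rw [norm_mul, norm_neg]
    gcongr ‖s‖ * ?_
    simpa [add_assoc, one_add_one_eq_two] using this

lemma div_four_rpow_neg (ha : 0 ≤ a) (σ : ℝ) : (a / 4) ^ (-σ) = 4 ^ σ * a ^ (-σ) := by
  rw [Real.div_rpow ha (by norm_num), Real.rpow_neg (by norm_num : (0 : ℝ) ≤ 4), div_inv_eq_mul,
    mul_comm]

lemma norm_symmetric_cpow_neg_sub_le {l : ℝ} (ha : 0 < a) (hb : 0 ≤ b)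
    (hl : l ^ 2 ≤ 4 * (a * b)) (hadd : a / 4 ≤ a + b + l) (hsub : a / 4 ≤ a + b - l)
    (hs : 0 ≤ s.re) :
    ‖((a + b + l : ℝ) : ℂ) ^ (-s) + ((a + b - l : ℝ) : ℂ) ^ (-s) - 2 * (a : ℂ) ^ (-s)‖ ≤
      ‖s‖ * (‖s + 1‖ * 4 ^ (s.re + 3) + 2) * b * a ^ (-(s.re + 1)) := by
  have hsecond := norm_cpow_neg_add_cpow_neg_sub_le (by positivity) hadd hsub hs
  have hfirst := norm_cpow_neg_sub_cpow_neg_le (a := a + b) (s := s) ha (by linarith) le_rfl hs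
  rw [add_sub_cancel_left, abs_of_nonneg hb] at hfirst
  have hpow : (a / 4) ^ (-(s.re + 2)) = 4 ^ (s.re + 2) * a ^ (-(s.re + 1)) / a := by
    rw [div_four_rpow_neg ha.le, mul_div_assoc, ← Real.rpow_sub_one ha.ne']
    ring_nf
  set x : ℂ := ((a + b : ℝ) : ℂ) ^ (-s)
  calc _ = ‖(((a + b + l : ℝ) : ℂ) ^ (-s) + ((a + b - l : ℝ) : ℂ) ^ (-s) - 2 * x) +
          2 * (x - (a : ℂ) ^ (-s))‖ := by ring_nf
    _ ≤ ‖s‖ * (‖s + 1‖ * (a / 4) ^ (-(s.re + 2)) * |l|) * |l| +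
        2 * (‖s‖ * a ^ (-(s.re + 1)) * b) := by
        refine (norm_add_le _ _).trans (add_le_add hsecond ?_)
        rw [norm_mul, Complex.norm_ofNat]
        gcongr
    _ = ‖s‖ * (‖s + 1‖ * (a / 4) ^ (-(s.re + 2))) * l ^ 2 +
        2 * (‖s‖ * a ^ (-(s.re + 1)) * b) := by
        rw [← sq_abs l]
        ring
    _ ≤ ‖s‖ * (‖s + 1‖ * (a / 4) ^ (-(s.re + 2))) * (4 * (a * b)) +
        2 * (‖s‖ * a ^ (-(s.re + 1)) * b) := by gcongr
    _ = _ := by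
        rw [hpow, show s.re + 3 = s.re + 2 + 1 by ring, Real.rpow_add_one (by norm_num) (s.re + 2)]
        field_simp

end Estimates

section Angular

/-- The angular character `z ↦ (z / |z|) ^ k`, extended by `0` at `0`. -/
def angular (k : ℤ) : GaussianInt →*₀ ℂ where
  toFun z := if z = 0 then 0 else (toComplex z / ‖toComplex z‖) ^ k
  map_zero' := if_pos rfl
  map_one' := by simp
  map_mul' z w := by
    rcases eq_or_ne z 0 with rfl | hz
    · simp
    rcases eq_or_ne w 0 with rfl | hw
    · simp
    rw [if_neg (mul_ne_zero hz hw), if_neg hz, if_neg hw, ← mul_zpow, map_mul, norm_mul,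
      ofReal_mul, div_mul_div_comm]

variable {k : ℤ} {z r : GaussianInt} {s : ℂ}

lemma angular_of_ne_zero (k : ℤ) (hz : z ≠ 0) :
    angular k z = (toComplex z / ‖toComplex z‖) ^ k := if_neg hz

lemma norm_toComplex_div_norm (hz : z ≠ 0) : ‖toComplex z / (‖toComplex z‖ : ℂ)‖ = 1 := by
  have : ‖toComplex z‖ ≠ 0 := by simpa using hz
  rw [norm_div, norm_real, norm_norm, div_self this]

lemma norm_angular (k : ℤ) (hz : z ≠ 0) : ‖angular k z‖ = 1 := by
  rw [angular_of_ne_zero k hz, norm_zpow, norm_toComplex_div_norm hz, one_zpow]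

lemma norm_angular_le (k : ℤ) (z : GaussianInt) : ‖angular k z‖ ≤ 1 := by
  rcases eq_or_ne z 0 with rfl | hz
  · simp
  · exact (norm_angular k hz).le

lemma norm_angular_add_sub_angular_le (k : ℤ) (hz : z ≠ 0) (hzr : z + r ≠ 0) :
    ‖angular k (z + r) - angular k z‖ ≤ |(k : ℝ)| * (2 * ‖toComplex r‖ / ‖toComplex z‖) := by
  rw [angular_of_ne_zero k hz, angular_of_ne_zero k hzr]
  refine (norm_zpow_sub_zpow_le (norm_toComplex_div_norm hzr) (norm_toComplex_div_norm hz)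
    k).trans ?_
  rw [map_add]
  gcongr
  exact norm_unit_sub_unit_le (by simpa using hz) (by simpa [← map_add] using hzr)

/-- The general term of the `L`-series of `angular k`. -/
def angularTerm (k : ℤ) (s : ℂ) (z : GaussianInt) : ℂ := angular k z * (gaussNorm z : ℂ) ^ (-s)

lemma differentiable_angularTerm (k : ℤ) (z : GaussianInt) :
    Differentiable ℂ fun s ↦ angularTerm k s z := fun s ↦
  (hasDerivAt_mul_cpow_neg (eq_zero_or_one_le_gaussNorm (map_zero (angular k))) z
    s).differentiableAt

lemma angularTerm_zero_index (hz : z ≠ 0) (s : ℂ) :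
    angularTerm 0 s z = (gaussNorm z : ℂ) ^ (-s) := by
  rw [angularTerm, angular_of_ne_zero 0 hz, zpow_zero, one_mul]

section SmallShift

variable (hr : 2 * ‖toComplex r‖ ≤ ‖toComplex z‖)
include hr

lemma gaussNorm_div_four_le : gaussNorm z / 4 ≤ gaussNorm (z + r) := by
  have h : ‖toComplex z‖ ≤ ‖toComplex (z + r)‖ + ‖toComplex r‖ := by
    simpa [map_add] using norm_sub_le (toComplex (z + r)) (toComplex r)
  rw [gaussNorm_eq_sq_norm, gaussNorm_eq_sq_norm]
  nlinarith [norm_nonneg (toComplex z), norm_nonneg (toComplex r)]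

lemma abs_gaussNorm_add_sub_le :
    |gaussNorm (z + r) - gaussNorm z| ≤ 3 * ‖toComplex r‖ * ‖toComplex z‖ := by
  have hadd : ‖toComplex (z + r)‖ ≤ ‖toComplex z‖ + ‖toComplex r‖ := by
    simpa [map_add] using norm_add_le (toComplex z) (toComplex r)
  have hsub : |‖toComplex (z + r)‖ - ‖toComplex z‖| ≤ ‖toComplex r‖ := by
    simpa [map_add] using abs_norm_sub_norm_le (toComplex (z + r)) (toComplex z)
  rw [gaussNorm_eq_sq_norm, gaussNorm_eq_sq_norm, sq_sub_sq, abs_mul,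
    abs_of_nonneg (by positivity)]
  calc _ ≤ (3 * ‖toComplex z‖) * ‖toComplex r‖ := by
        gcongr
        linarith [norm_nonneg (toComplex r)]
    _ = _ := by ring

variable (hz : z ≠ 0)
include hz

lemma add_ne_zero_of_two_mul_norm_le : z + r ≠ 0 := fun h ↦ by
  have := gaussNorm_div_four_le hr
  rw [h, map_zero] at this
  linarith [gaussNorm_pos hz]

lemma norm_angularTerm_add_sub_le (hs : 0 ≤ s.re) :
    ‖angularTerm k s (z + r) - angularTerm k s z‖ ≤
      (2 * |(k : ℝ)| + 12 * ‖s‖) * ‖toComplex r‖ * 4 ^ s.re *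
        gaussNorm z ^ (-(s.re + 1 / 2)) := by
  have hzr := add_ne_zero_of_two_mul_norm_le hr hz
  have hN := gaussNorm_pos hz
  have hquarter := gaussNorm_div_four_le hr
  have hangle : ‖(angular k (z + r) - angular k z) * (gaussNorm (z + r) : ℂ) ^ (-s)‖ ≤
      |(k : ℝ)| * (2 * ‖toComplex r‖ / ‖toComplex z‖) * (gaussNorm z / 4) ^ (-s.re) := by
    rw [norm_mul, norm_ofReal_cpow_neg (gaussNorm_pos hzr)]
    exact mul_le_mul (norm_angular_add_sub_angular_le k hz hzr)
      (Real.rpow_le_rpow_of_nonpos (by positivity) hquarter (by linarith))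
      (Real.rpow_nonneg (gaussNorm_nonneg _) _) (by positivity)
  have hradius : ‖angular k z * ((gaussNorm (z + r) : ℂ) ^ (-s) - (gaussNorm z : ℂ) ^ (-s))‖ ≤
      ‖s‖ * (gaussNorm z / 4) ^ (-(s.re + 1)) * (3 * ‖toComplex r‖ * ‖toComplex z‖) := by
    rw [norm_mul, norm_angular k hz, one_mul]
    refine (norm_cpow_neg_sub_cpow_neg_le (by positivity) hquarter (by linarith) hs).trans ?_
    gcongr
    exact abs_gaussNorm_add_sub_le hr
  have hnorm : 0 < ‖toComplex z‖ := by simpa using hz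
  have hpow (n : ℕ) : gaussNorm z ^ (-(s.re + n / 2)) =
      gaussNorm z ^ (-s.re) / ‖toComplex z‖ ^ n := by
    rw [neg_add, Real.rpow_add hN, Real.rpow_neg hN.le (n / 2), div_eq_mul_inv (_ ^ _),
      gaussNorm_eq_sq_norm, ← Real.rpow_natCast (_) 2, ← Real.rpow_mul hnorm.le _ (n / 2)]
    simp [mul_div_cancel₀]
  calc ‖angularTerm k s (z + r) - angularTerm k s z‖ = ‖(angular k (z + r) - angular k z) *
          (gaussNorm (z + r) : ℂ) ^ (-s) +
          angular k z * ((gaussNorm (z + r) : ℂ) ^ (-s) - (gaussNorm z : ℂ) ^ (-s))‖ := by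
        rw [angularTerm, angularTerm]
        ring_nf
    _ ≤ _ := (norm_add_le _ _).trans (add_le_add hangle hradius)
    _ = _ := by
        have h₁ := hpow 1
        have h₂ := hpow 2
        norm_num only [Nat.cast_one, Nat.cast_ofNat, div_self] at h₁ h₂
        rw [div_four_rpow_neg hN.le, div_four_rpow_neg hN.le, h₁, h₂,
          Real.rpow_add (by norm_num), Real.rpow_one]
        field_simp
        ring

lemma norm_angularTerm_add_add_sub_le (hs : 0 ≤ s.re) :
    ‖angularTerm 0 s (z + r) + angularTerm 0 s (z - r) - 2 * angularTerm 0 s z‖ ≤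
      ‖s‖ * (‖s + 1‖ * 4 ^ (s.re + 3) + 2) * gaussNorm r * gaussNorm z ^ (-(s.re + 1)) := by
  have hr' : 2 * ‖toComplex (-r)‖ ≤ ‖toComplex z‖ := by simpa using hr
  set l : ℝ := 2 * ((z.re : ℝ) * r.re + z.im * r.im) with hl
  have hadd : gaussNorm (z + r) = gaussNorm z + gaussNorm r + l := by
    simp only [gaussNorm_eq, Zsqrtd.re_add, Zsqrtd.im_add]
    push_cast
    ring
  have hsub : gaussNorm (z - r) = gaussNorm z + gaussNorm r - l := by
    simp only [gaussNorm_eq, Zsqrtd.re_sub, Zsqrtd.im_sub]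
    push_cast
    ring
  have hlsq : l ^ 2 ≤ 4 * (gaussNorm z * gaussNorm r) := by
    simp only [gaussNorm_eq, hl]
    nlinarith [sq_nonneg ((z.re : ℝ) * r.im - z.im * r.re)]
  have hzr' : z - r ≠ 0 := sub_eq_add_neg z r ▸ add_ne_zero_of_two_mul_norm_le hr' hz
  rw [angularTerm_zero_index hz, angularTerm_zero_index hzr',
    angularTerm_zero_index (add_ne_zero_of_two_mul_norm_le hr hz), hadd, hsub]
  refine norm_symmetric_cpow_neg_sub_le (gaussNorm_pos hz) (gaussNorm_nonneg r) hlsq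
    (hadd ▸ gaussNorm_div_four_le hr) ?_ hs
  simpa only [← sub_eq_add_neg, hsub] using gaussNorm_div_four_le hr'

end SmallShift

end Angular

section Residues

/-- The residue ring of the Gaussian integers modulo `m`. -/
abbrev Residue (m : GaussianInt) : Type := GaussianInt ⧸ Ideal.span {m}

/-- Reduction of Gaussian integers modulo `m`. -/
abbrev residue (m : GaussianInt) : GaussianInt →+* Residue m := Ideal.Quotient.mk _

variable {m z w : GaussianInt}

lemma residue_eq_iff_dvd : residue m z = residue m w ↔ m ∣ z - w :=
  Ideal.Quotient.eq.trans Ideal.mem_span_singleton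

lemma residue_eq_zero_iff_dvd : residue m z = 0 ↔ m ∣ z :=
  Ideal.Quotient.eq_zero_iff_mem.trans Ideal.mem_span_singleton

lemma residue_mul_add (m z w : GaussianInt) : residue m (m * z + w) = residue m w :=
  residue_eq_iff_dvd.mpr ⟨z, by ring⟩

lemma residue_out (q : Residue m) : residue m q.out = q := Quotient.out_eq q

/-- The integral basis `1, i` of the Gaussian integers. -/
def gaussBasis : Module.Basis (Fin 2) ℤ GaussianInt :=
  .ofEquivFun
    { toFun := fun z ↦ ![z.re, z.im]
      invFun := fun v ↦ ⟨v 0, v 1⟩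
      map_add' := fun z w ↦ by ext i; fin_cases i <;> simp
      map_smul' := fun n z ↦ by ext i; fin_cases i <;> simp
      left_inv := fun z ↦ by simp
      right_inv := fun v ↦ by ext i; fin_cases i <;> simp }

instance : Module.Free ℤ GaussianInt := .of_basis gaussBasis

instance : Module.Finite ℤ GaussianInt := .of_basis gaussBasis

lemma algebraNorm_eq_norm (z : GaussianInt) : Algebra.norm ℤ z = z.norm := by
  have h₀ : gaussBasis 0 = 1 := by ext <;> simp [gaussBasis]
  have h₁ : gaussBasis 1 = ⟨0, 1⟩ := by ext <;> simp [gaussBasis]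
  rw [Algebra.norm_eq_matrix_det gaussBasis, Matrix.det_fin_two]
  simp only [Algebra.leftMulMatrix_apply, LinearMap.toMatrix_apply, h₀, h₁]
  simp [gaussBasis, Zsqrtd.norm_def]

lemma card_residue (m : GaussianInt) : (Nat.card (Residue m) : ℝ) = gaussNorm m := by
  have h : Nat.card (Residue m) = m.norm.natAbs := by
    rw [← algebraNorm_eq_norm, ← Ideal.absNorm_span_singleton]
    rfl
  rw [h, gaussNorm_eq_intCast_norm, GaussianInt.natCast_natAbs_norm]

lemma finite_residue (hm : m ≠ 0) : Finite (Residue m) := by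
  refine Nat.finite_of_card_ne_zero fun h ↦ (gaussNorm_pos hm).ne' ?_
  rw [← card_residue, h, Nat.cast_zero]

/-- Division with remainder by `m`, the remainder being the chosen representative of a residue
class. -/
def divResidue (hm : m ≠ 0) : GaussianInt × Residue m ≃ GaussianInt :=
  .ofBijective (fun q ↦ m * q.1 + q.2.out) <| by
    constructor
    · rintro ⟨z, q⟩ ⟨w, q'⟩ h
      have hq : q = q' := by simpa [residue_mul_add, residue_out] using congrArg (residue m) h
      subst hq
      simpa [hm] using h
    · intro z
      obtain ⟨w, hw⟩ := residue_eq_iff_dvd.mp (residue_out (residue m z)).symm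
      exact ⟨(w, residue m z), by linear_combination -hw⟩

end Residues

/-- `F`, given by its values for `1 < Re s`, continues holomorphically to `σ₀ < Re s`. -/
def ContinuesTo (σ₀ : ℝ) (F : ℂ → ℂ) : Prop :=
  ∃ D : ℂ → ℂ, DifferentiableOn ℂ D {s | σ₀ < s.re} ∧ EqOn F D {s | 1 < s.re}

lemma differentiableOn_tsum_of_eventually_le {F : GaussianInt → ℂ → ℂ} {σ₀ : ℝ}
    (hF : ∀ z, Differentiable ℂ (F z))
    (hb : ∀ σ R : ℝ, σ₀ < σ → ∃ C : ℝ, ∀ᶠ z in cofinite, ∀ s : ℂ, σ ≤ s.re → ‖s‖ ≤ R →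
      ‖F z s‖ ≤ C * gaussNorm z ^ (-(σ - σ₀ + 1))) :
    DifferentiableOn ℂ (fun s ↦ ∑' z, F z s) {s | σ₀ < s.re} := by
  have hopen : IsOpen {s : ℂ | σ₀ < s.re} := isOpen_lt continuous_const continuous_re
  have hlim : TendstoLocallyUniformlyOn (fun (t : Finset GaussianInt) s ↦ ∑ z ∈ t, F z s)
      (fun s ↦ ∑' z, F z s) atTop {s | σ₀ < s.re} := by
    refine (tendstoLocallyUniformlyOn_iff_forall_isCompact hopen).mpr fun K hK hKc ↦ ?_
    obtain ⟨R, hR⟩ := hKc.isBounded.exists_norm_le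
    obtain ⟨σ, hσ, hσK⟩ : ∃ σ, σ₀ < σ ∧ ∀ s ∈ K, σ ≤ s.re := by
      rcases K.eq_empty_or_nonempty with rfl | hne
      · exact ⟨σ₀ + 1, by simp⟩
      · obtain ⟨s, hs, hmin⟩ := hKc.exists_isMinOn hne continuous_re.continuousOn
        exact ⟨s.re, hK hs, fun t ht ↦ hmin ht⟩
    obtain ⟨C, hC⟩ := hb σ R hσ
    refine tendstoUniformlyOn_tsum_of_cofinite_eventually
      ((summable_gaussNorm_rpow (σ := σ - σ₀ + 1) (by linarith)).mul_left C) ?_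
    filter_upwards [hC] with z hz s hs using hz s (hσK s hs) (hR s hs)
  exact hlim.differentiableOn
    (.of_forall fun t ↦ (Differentiable.fun_sum fun z _ ↦ hF z).differentiableOn) hopen

lemma summable_gaussLSeries {f : GaussianInt → ℂ} (hf0 : f 0 = 0) {C : ℝ} (hf : ∀ z, ‖f z‖ ≤ C)
    {s : ℂ} (hs : 1 < s.re) : Summable fun z ↦ f z * (gaussNorm z : ℂ) ^ (-s) :=
  .of_norm ((summable_norm_mul_gaussNorm_rpow hf hs).congr fun z ↦
    (norm_mul_cpow_neg (eq_zero_or_one_le_gaussNorm hf0) s z).symm)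

lemma tendsto_gaussNorm_cofinite : Tendsto gaussNorm cofinite atTop :=
  tendsto_atTop.mpr fun B ↦ by
    filter_upwards [(finite_gaussNorm_le B).compl_mem_cofinite] with z hz
    exact (not_le.mp (show ¬gaussNorm z ≤ B from hz)).le

lemma gaussNorm_mul_rpow_neg_le {m z : GaussianInt} (hm : m ≠ 0) (hz : z ≠ 0) {β β' : ℝ}
    (hβ : 0 ≤ β) (h : β ≤ β') : gaussNorm (m * z) ^ (-β') ≤ gaussNorm z ^ (-β) := by
  have hle : gaussNorm z ≤ gaussNorm (m * z) := by
    rw [map_mul]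
    exact le_mul_of_one_le_left (gaussNorm_nonneg z) (one_le_gaussNorm hm)
  calc gaussNorm (m * z) ^ (-β') ≤ gaussNorm (m * z) ^ (-β) :=
        Real.rpow_le_rpow_of_exponent_le (one_le_gaussNorm (mul_ne_zero hm hz)) (neg_le_neg h)
    _ ≤ gaussNorm z ^ (-β) :=
        Real.rpow_le_rpow_of_nonpos (gaussNorm_pos hz) hle (neg_nonpos.mpr hβ)

lemma eventually_two_mul_norm_le {m : GaussianInt} (hm : m ≠ 0) :
    ∀ᶠ z : GaussianInt in cofinite, z ≠ 0 ∧
      ∀ q : Residue m, 2 * ‖toComplex q.out‖ ≤ ‖toComplex (m * z)‖ := by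
  have := finite_residue hm
  refine .and (finite_singleton 0).compl_mem_cofinite (eventually_all.mpr fun q ↦ ?_)
  filter_upwards [tendsto_gaussNorm_cofinite.eventually_ge_atTop
    ((2 * ‖toComplex q.out‖) ^ 2)] with z hz
  refine le_of_sq_le_sq (hz.trans ?_) (norm_nonneg _)
  rw [← gaussNorm_eq_sq_norm, map_mul]
  exact le_mul_of_one_le_left (gaussNorm_nonneg z) (one_le_gaussNorm hm)

section Periodic

variable {m : GaussianInt} [Fintype (Residue m)] (c : Residue m → ℂ) (k : ℤ)

/-- The terms of `∑ c z * angularTerm k s z` whose quotient by `m` is `z`. -/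
def residueBlock (z : GaussianInt) (s : ℂ) : ℂ :=
  ∑ q : Residue m, c q * angularTerm k s (m * z + q.out)

lemma differentiable_residueBlock (z : GaussianInt) : Differentiable ℂ (residueBlock c k z) :=
  Differentiable.fun_sum fun _ _ ↦ (differentiable_angularTerm k _).const_mul _

lemma hasSum_residueBlock (hm : m ≠ 0) {s : ℂ} (hs : 1 < s.re) :
    HasSum (fun z ↦ residueBlock c k z s)
      (gaussLSeries (fun z ↦ c (residue m z) * angular k z) s) := by
  obtain ⟨C, hC⟩ : ∃ C, ∀ z, ‖c (residue m z) * angular k z‖ ≤ C := by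
    refine ⟨∑ q, ‖c q‖, fun z ↦ ?_⟩
    rw [norm_mul]
    exact (mul_le_of_le_one_right (norm_nonneg _) (norm_angular_le k z)).trans
      (Finset.single_le_sum (f := fun q ↦ ‖c q‖) (fun q _ ↦ norm_nonneg _) (Finset.mem_univ _))
  have hsum := summable_gaussLSeries (f := fun z ↦ c (residue m z) * angular k z) (by simp) hC hs
  refine (((divResidue hm).hasSum_iff.mpr hsum.hasSum).prod_fiberwise fun z ↦ ?_)
  have hterm (q : Residue m) : c q * angularTerm k s (m * z + q.out) =
      c (residue m (m * z + q.out)) * angular k (m * z + q.out) *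
        (gaussNorm (m * z + q.out) : ℂ) ^ (-s) := by
    rw [residue_mul_add, residue_out, angularTerm, mul_assoc]
  simp only [residueBlock, hterm]
  exact hasSum_fintype _

lemma residueBlock_eq (hc : ∑ q, c q = 0) (z : GaussianInt) (s : ℂ) :
    residueBlock c k z s =
      ∑ q, c q * (angularTerm k s (m * z + q.out) - angularTerm k s (m * z)) := by
  simp only [residueBlock, mul_sub, Finset.sum_sub_distrib, ← Finset.sum_mul, hc, zero_mul,
    sub_zero]

theorem continuesTo_half (hm : m ≠ 0) (hc : ∑ q, c q = 0) :
    ContinuesTo (1 / 2) (gaussLSeries fun z ↦ c (residue m z) * angular k z) := by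
  refine ⟨fun s ↦ ∑' z, residueBlock c k z s, ?_,
    fun s hs ↦ (hasSum_residueBlock c k hm hs).tsum_eq.symm⟩
  refine differentiableOn_tsum_of_eventually_le (differentiable_residueBlock c k) fun σ R hσ ↦
    ⟨∑ q, ‖c q‖ * ((2 * |(k : ℝ)| + 12 * R) * ‖toComplex q.out‖ * 4 ^ R), ?_⟩
  filter_upwards [eventually_two_mul_norm_le hm] with z ⟨hz, hq⟩ s hs hsR
  have hR : 0 ≤ R := (norm_nonneg s).trans hsR
  rw [residueBlock_eq c k hc, Finset.sum_mul]
  refine norm_sum_le_of_le _ fun q _ ↦ ?_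
  rw [norm_mul, mul_assoc]
  gcongr
  calc _ ≤ (2 * |(k : ℝ)| + 12 * ‖s‖) * ‖toComplex q.out‖ * 4 ^ s.re *
          gaussNorm (m * z) ^ (-(s.re + 1 / 2)) :=
        norm_angularTerm_add_sub_le (hq q) (mul_ne_zero hm hz) (by linarith)
    _ ≤ _ := by
        gcongr
        · exact Real.rpow_nonneg (gaussNorm_nonneg _) _
        · norm_num
        · exact (re_le_norm s).trans hsR
        · exact gaussNorm_mul_rpow_neg_le hm hz (by linarith) (by linarith)

lemma residueBlock_add_residueBlock_neg (hc : ∑ q, c q = 0) (z : GaussianInt) (s : ℂ) :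
    residueBlock c 0 z s + residueBlock c 0 (-z) s =
      ∑ q, c q * (angularTerm 0 s (m * z + q.out) + angularTerm 0 s (m * z - q.out) -
        2 * angularTerm 0 s (m * z)) := by
  have heven (w : GaussianInt) : angularTerm 0 s (-w) = angularTerm 0 s w := by
    simp [angularTerm, angular, gaussNorm_eq]
  have hneg (q : Residue m) :
      angularTerm 0 s (m * -z + q.out) = angularTerm 0 s (m * z - q.out) := by
    rw [← heven]
    ring_nf
  simp only [residueBlock, hneg, mul_sub, mul_add, Finset.sum_sub_distrib, Finset.sum_add_distrib,
    ← Finset.sum_mul, hc, zero_mul, sub_zero]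

/-- For even terms the contributions of opposite blocks cancel to second order, whence the larger
half-plane. -/
theorem continuesTo_zero (hm : m ≠ 0) (hc : ∑ q, c q = 0) :
    ContinuesTo 0 (gaussLSeries fun z ↦ c (residue m z) * angular 0 z) := by
  refine ⟨fun s ↦ ∑' z, (residueBlock c 0 z s + residueBlock c 0 (-z) s) / 2, ?_, fun s hs ↦ ?_⟩
  · refine differentiableOn_tsum_of_eventually_le (fun z ↦ ((differentiable_residueBlock c 0 z).add
      (differentiable_residueBlock c 0 (-z))).div_const 2) fun σ R hσ ↦
      ⟨∑ q, ‖c q‖ * (R * ((R + 1) * 4 ^ (R + 3) + 2) * gaussNorm q.out), ?_⟩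
    filter_upwards [eventually_two_mul_norm_le hm] with z ⟨hz, hq⟩ s hs hsR
    have hsR' : ‖s + 1‖ ≤ R + 1 := (norm_add_le _ _).trans (by simpa using hsR)
    have hR : 0 ≤ R := (norm_nonneg s).trans hsR
    rw [norm_div, Complex.norm_ofNat]
    refine (half_le_self (norm_nonneg _)).trans ?_
    rw [residueBlock_add_residueBlock_neg c hc, Finset.sum_mul]
    refine norm_sum_le_of_le _ fun q _ ↦ ?_
    rw [norm_mul, mul_assoc]
    gcongr
    calc _ ≤ ‖s‖ * (‖s + 1‖ * 4 ^ (s.re + 3) + 2) * gaussNorm q.out *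
            gaussNorm (m * z) ^ (-(s.re + 1)) :=
          norm_angularTerm_add_add_sub_le (hq q) (mul_ne_zero hm hz) (by linarith)
      _ ≤ _ := by
          have := gaussNorm_nonneg q.out
          gcongr
          · exact Real.rpow_nonneg (gaussNorm_nonneg _) _
          · norm_num
          · exact (re_le_norm s).trans hsR
          · exact gaussNorm_mul_rpow_neg_le hm hz (by linarith) (by linarith)
  · have hsum := hasSum_residueBlock c 0 hm hs
    have hsum' := (Equiv.neg GaussianInt).hasSum_iff.mpr hsum
    simpa using ((hsum.add hsum').div_const 2).tsum_eq.symm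

end Periodic

end Continuation

section Nonvanishing

open Filter Topology Set Complex
open GaussianInt (toComplex)

section SimplePole

/-- As `s → s₀` inside the half-plane `1 < Re s`, the difference of `F` and `r / (s - s₀)`
converges; for `r = 0` this says that `F` itself has a limit. -/
def HasSimplePole (F : ℂ → ℂ) (s₀ r : ℂ) : Prop :=
  ∃ ℓ, Tendsto (fun s ↦ F s - r / (s - s₀)) (𝓝[{s | 1 < s.re}] s₀) (𝓝 ℓ)

variable {F G : ℂ → ℂ} {s₀ r r' : ℂ}

lemma HasSimplePole.congr (hF : HasSimplePole F s₀ r) (h : F =ᶠ[𝓝[{s | 1 < s.re}] s₀] G) :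
    HasSimplePole G s₀ r :=
  hF.imp fun _ hℓ ↦ hℓ.congr' (h.mono fun s hs ↦ by rw [hs])

lemma HasSimplePole.add (hF : HasSimplePole F s₀ r) (hG : HasSimplePole G s₀ r') :
    HasSimplePole (fun s ↦ F s + G s) s₀ (r + r') := by
  obtain ⟨ℓ, hℓ⟩ := hF
  obtain ⟨ℓ', hℓ'⟩ := hG
  exact ⟨ℓ + ℓ', (hℓ.add hℓ').congr fun s ↦ by ring⟩

lemma HasSimplePole.const_mul (c : ℂ) (hF : HasSimplePole F s₀ r) :
    HasSimplePole (fun s ↦ c * F s) s₀ (c * r) := by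
  obtain ⟨ℓ, hℓ⟩ := hF
  exact ⟨c * ℓ, (hℓ.const_mul c).congr fun s ↦ by ring⟩

lemma hasSimplePole_zero_of_tendsto {ℓ : ℂ} (hF : Tendsto F (𝓝[{s | 1 < s.re}] s₀) (𝓝 ℓ)) :
    HasSimplePole F s₀ 0 :=
  ⟨ℓ, by simpa using hF⟩

lemma tendsto_add_ofReal_nhdsWithin (hs₀ : s₀.re = 1) :
    Tendsto (fun ε : ℝ ↦ s₀ + ε) (𝓝[>] 0) (𝓝[{s | 1 < s.re}] s₀) := by
  refine tendsto_nhdsWithin_iff.mpr ⟨?_, ?_⟩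
  · have : Continuous fun ε : ℝ ↦ s₀ + ε := by fun_prop
    simpa using (this.tendsto 0).mono_left nhdsWithin_le_nhds
  · filter_upwards [self_mem_nhdsWithin] with ε hε
    simpa [hs₀] using hε

lemma HasSimplePole.tendsto_mul (hs₀ : s₀.re = 1) (hF : HasSimplePole F s₀ r) :
    Tendsto (fun ε : ℝ ↦ ε * F (s₀ + ε)) (𝓝[>] 0) (𝓝 r) := by
  obtain ⟨ℓ, hℓ⟩ := hF
  have hε : Tendsto (fun ε : ℝ ↦ (ε : ℂ)) (𝓝[>] 0) (𝓝 0) := by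
    simpa using (continuous_ofReal.tendsto 0).mono_left nhdsWithin_le_nhds
  have := (hε.mul (hℓ.comp (tendsto_add_ofReal_nhdsWithin hs₀))).add_const r
  rw [zero_mul, zero_add] at this
  refine this.congr' ?_
  filter_upwards [self_mem_nhdsWithin] with ε (hε : 0 < ε)
  have : (ε : ℂ) ≠ 0 := ofReal_ne_zero.mpr hε.ne'
  simp only [Function.comp_apply, add_sub_cancel_left]
  field_simp
  ring

lemma ne_of_one_lt_re {s : ℂ} (hs₀ : s₀.re = 1) (hs : 1 < s.re) : s ≠ s₀ := by
  rintro rfl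
  exact hs.ne' hs₀

lemma hasSimplePole_logDeriv {g : ℂ → ℂ} {n : ℤ} (hs₀ : s₀.re = 1) (hg : AnalyticAt ℂ g s₀)
    (hg₀ : g s₀ ≠ 0) (hF : ∀ᶠ s in 𝓝[{s | 1 < s.re}] s₀, F s = (s - s₀) ^ n * g s) :
    HasSimplePole (logDeriv F) s₀ n := by
  have hlim : Tendsto (logDeriv g) (𝓝[{s | 1 < s.re}] s₀) (𝓝 (logDeriv g s₀)) :=
    (hg.deriv.continuousAt.div hg.continuousAt hg₀).tendsto.mono_left nhdsWithin_le_nhds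
  refine ⟨_, hlim.congr' ?_⟩
  filter_upwards [eventually_eventually_nhdsWithin.mpr hF, self_mem_nhdsWithin,
    hg.eventually_analyticAt.filter_mono nhdsWithin_le_nhds,
    (hg.continuousAt.eventually_ne hg₀).filter_mono nhdsWithin_le_nhds] with s hs hsre hgs hgs₀
  rw [isOpen_one_lt_re.nhdsWithin_eq hsre] at hs
  have hne : s - s₀ ≠ 0 := sub_ne_zero.mpr (ne_of_one_lt_re hs₀ hsre)
  have hsub : DifferentiableAt ℂ (fun s ↦ s - s₀) s := by fun_prop
  rw [(logDeriv_congr_nhds hs).self_of_nhds,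
    logDeriv_mul (f := fun s ↦ (s - s₀) ^ n) s (zpow_ne_zero n hne) hgs₀
      (hsub.zpow (Or.inl hne)) hgs.differentiableAt,
    logDeriv_fun_zpow hsub, logDeriv_apply (fun s ↦ s - s₀)]
  simp [div_eq_mul_inv]

end SimplePole

section PrimeSum

variable {f g : GaussianInt → ℂ} {s₀ : ℂ}

lemma hasSimplePole_primeSum_of_finite (hf : ∀ z, ‖f z‖ ≤ 1) (hg : ∀ z, ‖g z‖ ≤ 1)
    (hfg : {p : GaussPrime | f p ≠ g p}.Finite) {r : ℂ} (h : HasSimplePole (primeSum f) s₀ r) :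
    HasSimplePole (primeSum g) s₀ r := by
  let correction (s : ℂ) : ℂ :=
    ∑ p ∈ hfg.toFinset, (g p - f p) * Real.log (gaussNorm p) * (gaussNorm p : ℂ) ^ (-s)
  have hcont : Continuous correction := by
    refine continuous_finsetSum _ fun p _ ↦ continuous_const.mul ?_
    exact continuous_neg.const_cpow (Or.inl (ofReal_ne_zero.mpr (gaussNorm_pos p.2.ne_zero).ne'))
  have hpole := h.add (hasSimplePole_zero_of_tendsto
    ((hcont.tendsto s₀).mono_left nhdsWithin_le_nhds))
  rw [add_zero] at hpole
  refine hpole.congr ?_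
  filter_upwards [self_mem_nhdsWithin] with s hs
  rw [← eq_sub_iff_add_eq', primeSum, primeSum, dirichletSum, dirichletSum,
    ← (summable_primeSum hg hs).tsum_sub (summable_primeSum hf hs), tsum_eq_sum fun p hp ↦ ?_]
  · exact Finset.sum_congr rfl fun p _ ↦ by ring
  · have : f p = g p := by simpa using hp
    rw [this, sub_self]

lemma hasSimplePole_primeSum {f : GaussianInt →*₀ ℂ} (hf : ∀ z, ‖f z‖ ≤ 1) (hs₀ : s₀.re = 1)
    {g : ℂ → ℂ} (hg : AnalyticAt ℂ g s₀) (hg₀ : g s₀ ≠ 0) {n : ℤ}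
    (hL : ∀ᶠ s in 𝓝[{s | 1 < s.re}] s₀, gaussLSeries f s = (s - s₀) ^ n * g s) :
    HasSimplePole (primeSum f) s₀ (-(Nat.card GaussianIntˣ * n)) := by
  have hpole := ((hasSimplePole_logDeriv hs₀ hg hg₀ hL).const_mul (-Nat.card GaussianIntˣ)).add
    ((hasSimplePole_zero_of_tendsto (tendsto_primePowerSum hf s₀)).const_mul (-1))
  rw [mul_zero, add_zero, neg_mul] at hpole
  refine hpole.congr ?_
  filter_upwards [hL, self_mem_nhdsWithin,
    (hg.continuousAt.eventually_ne hg₀).filter_mono nhdsWithin_le_nhds] with s hs hsre hgs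
  have hne : gaussLSeries f s ≠ 0 := by
    rw [hs]
    exact mul_ne_zero (zpow_ne_zero n (sub_ne_zero.mpr (ne_of_one_lt_re hs₀ hsre))) hgs
  rw [logDeriv_apply]
  field_simp
  linear_combination -(card_units_mul_deriv_gaussLSeries f hf hsre)

lemma three_add_four_mul_re_add_re_sq_nonneg {u : ℂ} (hu : ‖u‖ ≤ 1) :
    0 ≤ 3 + 4 * u.re + (u ^ 2).re := by
  have : u.re ^ 2 + u.im ^ 2 ≤ 1 := by
    rw [sq, sq, ← normSq_apply, normSq_eq_norm_sq]
    exact pow_le_one₀ (norm_nonneg u) hu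
  have hsq : (u ^ 2).re = u.re ^ 2 - u.im ^ 2 := by
    simp [sq]
  nlinarith [sq_nonneg (u.re + 1)]

lemma three_four_one_primeSum (hf : ∀ z, ‖f z‖ ≤ 1) (t : ℝ) {σ : ℝ} (hσ : 1 < σ) :
    0 ≤ 3 * (primeSum 1 σ).re + 4 * (primeSum f (σ + t * I)).re +
      (primeSum (f ^ 2) (σ + 2 * t * I)).re := by
  have h1 (z : GaussianInt) : ‖(1 : GaussianInt → ℂ) z‖ ≤ 1 := by simp
  have hf2 (z : GaussianInt) : ‖(f ^ 2) z‖ ≤ 1 := by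
    simpa using pow_le_one₀ (n := 2) (norm_nonneg _) (hf z)
  have hsum := ((hasSum_re (summable_primeSum h1 (s := σ) (by simpa)).hasSum).mul_left 3).add
    ((hasSum_re (summable_primeSum hf (s := σ + t * I) (by simpa)).hasSum).mul_left 4) |>.add
    (hasSum_re (summable_primeSum hf2 (s := σ + 2 * t * I) (by simpa)).hasSum)
  refine hsum.nonneg fun p ↦ ?_
  have hN := gaussNorm_pos p.2.ne_zero
  have hNne : (gaussNorm p : ℂ) ≠ 0 := ofReal_ne_zero.mpr hN.ne'
  set u : ℂ := f p * (gaussNorm p : ℂ) ^ (-(t * I)) with hu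
  set a : ℝ := Real.log (gaussNorm p) * gaussNorm p ^ (-σ) with ha
  have hu1 : ‖u‖ ≤ 1 := by
    rw [hu, norm_mul, norm_ofReal_cpow_neg hN]
    simpa using hf p
  have ha0 : 0 ≤ a := mul_nonneg (log_gaussNorm_prime_nonneg p) (Real.rpow_nonneg hN.le _)
  have hcpow : ((gaussNorm p ^ (-σ) : ℝ) : ℂ) = (gaussNorm p : ℂ) ^ (-(σ : ℂ)) := by
    rw [ofReal_cpow hN.le, ofReal_neg]
  have e₀ : (1 : GaussianInt → ℂ) p * Real.log (gaussNorm p) * (gaussNorm p : ℂ) ^ (-(σ : ℂ)) =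
      (a : ℂ) := by
    rw [ha, ofReal_mul, hcpow, Pi.one_apply, one_mul]
  have e₁ : f p * Real.log (gaussNorm p) * (gaussNorm p : ℂ) ^ (-(σ + t * I)) = a * u := by
    rw [ha, ofReal_mul, hcpow, neg_add, cpow_add _ _ hNne, hu]
    ring
  have e₂ : (f ^ 2) p * Real.log (gaussNorm p) * (gaussNorm p : ℂ) ^ (-(σ + 2 * t * I)) =
      a * u ^ 2 := by
    rw [ha, ofReal_mul, hcpow, neg_add, cpow_add _ _ hNne, hu, mul_pow, ← cpow_nat_mul,
      Pi.pow_apply]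
    ring_nf
  rw [e₀, e₁, e₂, re_ofReal_mul, re_ofReal_mul, ofReal_re]
  nlinarith [mul_nonneg ha0 (three_add_four_mul_re_add_re_sq_nonneg hu1)]

theorem three_four_one (hf : ∀ z, ‖f z‖ ≤ 1) {t r₀ r₁ r₂ : ℝ}
    (h₀ : HasSimplePole (primeSum 1) 1 r₀) (h₁ : HasSimplePole (primeSum f) (1 + t * I) r₁)
    (h₂ : HasSimplePole (primeSum (f ^ 2)) (1 + 2 * t * I) r₂) : 0 ≤ 3 * r₀ + 4 * r₁ + r₂ := by
  have hre {F : ℂ → ℂ} {s₀ : ℂ} {r : ℝ} (hs₀ : s₀.re = 1) (h : HasSimplePole F s₀ r) :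
      Tendsto (fun ε : ℝ ↦ ε * (F (s₀ + ε)).re) (𝓝[>] 0) (𝓝 r) := by
    simpa only [Function.comp_def, re_ofReal_mul, ofReal_re] using
      (continuous_re.tendsto _).comp (h.tendsto_mul hs₀)
  have hlim := (((hre (by simp) h₀).const_mul 3).add ((hre (by simp) h₁).const_mul 4)).add
    (hre (by simp) h₂)
  refine ge_of_tendsto hlim ?_
  filter_upwards [self_mem_nhdsWithin] with ε (hε : 0 < ε)
  have key := three_four_one_primeSum hf t (σ := 1 + ε) (by linarith)
  rw [show ((1 + ε : ℝ) : ℂ) = 1 + ε by push_cast; rfl, add_right_comm 1 (ε : ℂ) (t * I),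
    add_right_comm 1 (ε : ℂ) (2 * t * I)] at key
  nlinarith [mul_nonneg hε.le key]

end PrimeSum

section HalfPlane

variable {f : GaussianInt →*₀ ℂ} (hf : ∀ z, ‖f z‖ ≤ 1) (hu : ∀ u : GaussianIntˣ, f u = 1)

include hf hu

omit hf hu in
open scoped Classical in
lemma tsum_ite_isUnit :
    ∑' z : GaussianInt, (if IsUnit z then 1 else 0 : ℂ) = Nat.card GaussianIntˣ := by
  have hsupp : Function.support (fun z : GaussianInt ↦ (if IsUnit z then 1 else 0 : ℂ)) ⊆
      range Units.val := fun z hz ↦ of_not_not fun h ↦ hz (if_neg h)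
  have := Fintype.ofFinite GaussianIntˣ
  rw [← Units.val_injective.tsum_eq hsupp]
  simp [tsum_fintype, Nat.card_eq_fintype_card]

lemma tendsto_gaussLSeries_atTop :
    Tendsto (fun σ : ℝ ↦ gaussLSeries f σ) atTop (𝓝 (Nat.card GaussianIntˣ)) := by
  classical
  rw [← tsum_ite_isUnit]
  refine tendsto_tsum_of_dominated_convergence (summable_gaussNorm_rpow one_lt_two)
    (fun z ↦ ?_) ?_
  · by_cases hz : IsUnit z
    · obtain ⟨u, rfl⟩ := hz
      simp [hu, gaussNorm_eq_one_iff.mpr u.isUnit]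
    · simp only [if_neg hz]
      rcases eq_or_ne z 0 with rfl | hz0
      · simp
      have hN : 1 < gaussNorm z :=
        (one_le_gaussNorm hz0).lt_of_ne fun h ↦ hz (gaussNorm_eq_one_iff.mp h.symm)
      have hlim := ((tendsto_rpow_atBot_of_base_gt_one _ hN).comp
        tendsto_neg_atTop_atBot).const_mul ‖f z‖
      rw [mul_zero] at hlim
      refine tendsto_zero_iff_norm_tendsto_zero.mpr (hlim.congr fun σ ↦ ?_)
      rw [norm_mul, norm_ofReal_cpow_neg (gaussNorm_pos hz0), ofReal_re, Function.comp_apply]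
  · filter_upwards [eventually_ge_atTop 2] with σ hσ z
    rcases eq_or_ne z 0 with rfl | hz0
    · simp
    rw [norm_mul, norm_ofReal_cpow_neg (gaussNorm_pos hz0), ofReal_re]
    exact (mul_le_of_le_one_left (Real.rpow_nonneg (gaussNorm_nonneg z) _) (hf z)).trans
      (Real.rpow_le_rpow_of_exponent_le (one_le_gaussNorm hz0) (by linarith))

omit hu in
lemma norm_deriv_gaussLSeries_le_of_isCompact {K : Set ℂ} (hK : IsCompact K)
    (hKre : K ⊆ {s | 1 < s.re}) :
    ∃ C, ∀ s ∈ K, ‖deriv (gaussLSeries f) s‖ ≤ C * ‖gaussLSeries f s‖ := by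
  have hcont : ContinuousOn (fun s ↦ primeSum f s + primePowerSum f s) K :=
    (continuousOn_primeSum hf).mono hKre |>.add fun s _ ↦
      (tendsto_primePowerSum hf s).mono_left (nhdsWithin_mono s hKre)
  obtain ⟨C, hC⟩ := hK.exists_bound_of_continuousOn hcont
  refine ⟨C, fun s hs ↦ ?_⟩
  have hcard : (1 : ℝ) ≤ Nat.card GaussianIntˣ := by exact_mod_cast Nat.card_pos
  calc ‖deriv (gaussLSeries f) s‖
      ≤ Nat.card GaussianIntˣ * ‖deriv (gaussLSeries f) s‖ :=
        le_mul_of_one_le_left (norm_nonneg _) hcard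
    _ = ‖(Nat.card GaussianIntˣ : ℂ) * deriv (gaussLSeries f) s‖ := by simp
    _ = ‖gaussLSeries f s‖ * ‖primeSum f s + primePowerSum f s‖ := by
        rw [card_units_mul_deriv_gaussLSeries f hf (hKre hs), norm_neg, norm_mul]
    _ ≤ C * ‖gaussLSeries f s‖ := by
        rw [mul_comm]
        gcongr
        exact hC s hs

/- A zero would propagate along segments through the linear equation `L' = -(Q / w) L`, whereas
`L(σ)` tends to the number of units. -/
theorem gaussLSeries_ne_zero {s : ℂ} (hs : 1 < s.re) : gaussLSeries f s ≠ 0 := fun h0 ↦ by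
  obtain ⟨σ, hσ, hσ1⟩ := (((tendsto_gaussLSeries_atTop hf hu).eventually_ne
    (Nat.cast_ne_zero.mpr Nat.card_pos.ne')).and (eventually_gt_atTop 1)).exists
  let γ : ℝ → ℂ := AffineMap.lineMap s (σ : ℂ)
  have hγ : γ '' Icc 0 1 ⊆ {s | 1 < s.re} := by
    rw [← segment_eq_image_lineMap]
    exact (convex_halfSpace_re_gt 1).segment_subset hs (by simpa)
  have hγ_deriv (τ : ℝ) : HasDerivAt γ (σ - s) τ := AffineMap.hasDerivAt_lineMap
  have hL_deriv {τ : ℝ} (hτ : τ ∈ Icc (0 : ℝ) 1) : HasDerivAt (fun τ ↦ gaussLSeries f (γ τ))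
      (deriv (gaussLSeries f) (γ τ) * (σ - s)) τ :=
    (hasDerivAt_gaussLSeries (map_zero f) hf
      (hγ (mem_image_of_mem γ hτ))).differentiableAt.hasDerivAt.comp τ (hγ_deriv τ)
  obtain ⟨C, hC⟩ := norm_deriv_gaussLSeries_le_of_isCompact hf
    (isCompact_Icc.image (continuous_iff_continuousAt.mpr fun τ ↦ (hγ_deriv τ).continuousAt)) hγ
  have hzero := eq_zero_of_abs_deriv_le_mul_abs_self_of_eq_zero_right (K := C * ‖σ - s‖)
    (fun τ hτ ↦ (hL_deriv hτ).continuousAt.continuousWithinAt)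
    (fun τ hτ ↦ (hL_deriv (Ico_subset_Icc_self hτ)).hasDerivWithinAt) (by simpa [γ] using h0)
    (fun τ hτ ↦ by
      rw [norm_mul, mul_right_comm]
      gcongr
      exact hC _ (mem_image_of_mem γ (Ico_subset_Icc_self hτ)))
    1 (right_mem_Icc.mpr zero_le_one)
  exact hσ (by simpa [γ] using hzero)

lemma exists_hasSimplePole_of_analyticAt {s₀ : ℂ} (hs₀ : s₀.re = 1) {G : ℂ → ℂ}
    (hG : AnalyticAt ℂ G s₀) (hL : gaussLSeries f =ᶠ[𝓝[{s | 1 < s.re}] s₀] G) :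
    ∃ n : ℕ, HasSimplePole (primeSum f) s₀ (-(Nat.card GaussianIntˣ * n)) := by
  have hne : ¬∀ᶠ s in 𝓝 s₀, G s = 0 := fun h ↦ by
    have := (tendsto_add_ofReal_nhdsWithin hs₀).neBot
    obtain ⟨s, hGs, hLs, hs⟩ := ((h.filter_mono nhdsWithin_le_nhds).and
      (hL.and self_mem_nhdsWithin)).exists
    exact gaussLSeries_ne_zero hf hu hs (hLs.trans hGs)
  obtain ⟨n, g, hg, hg₀, hGg⟩ := hG.exists_eventuallyEq_pow_smul_nonzero_iff.mpr hne
  refine ⟨n, hasSimplePole_primeSum hf hs₀ hg hg₀ (n := n) ?_⟩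
  filter_upwards [hL, hGg.filter_mono nhdsWithin_le_nhds] with s hLs hGs
  rw [hLs, hGs, smul_eq_mul, zpow_natCast]

end HalfPlane

section Divergence

lemma not_summable_inv_gaussNorm_of_re_pos :
    ¬Summable fun z : {z : GaussianInt // 0 < z.re} ↦ (gaussNorm z)⁻¹ := fun h ↦ by
  let lattice (q : Σ n : ℕ, Fin (n + 1)) : {z : GaussianInt // 0 < z.re} :=
    ⟨⟨q.1 + 1, q.2⟩, Nat.cast_add_one_pos q.1⟩
  have hinj : Function.Injective lattice := by
    rintro ⟨n, i⟩ ⟨n', i'⟩ h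
    obtain ⟨hre, him⟩ := Zsqrtd.ext_iff.mp (congrArg Subtype.val h)
    obtain rfl : n = n' := by simpa [lattice] using hre
    have : i = i' := Fin.ext (by simpa [lattice] using him)
    rw [this]
  have hrow (n : ℕ) : 1 / 2 * (1 / ((n : ℝ) + 1)) ≤ ∑' i, (gaussNorm (lattice ⟨n, i⟩))⁻¹ := by
    rw [tsum_fintype]
    have hterm (i : Fin (n + 1)) : (2 * ((n : ℝ) + 1) ^ 2)⁻¹ ≤ (gaussNorm (lattice ⟨n, i⟩))⁻¹ := by
      have hi : ((i : ℕ) : ℝ) ≤ n + 1 := by exact_mod_cast i.2.le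
      have hN : gaussNorm (lattice ⟨n, i⟩) = ((n : ℝ) + 1) ^ 2 + (i : ℕ) ^ 2 := by
        rw [gaussNorm_eq]
        simp [lattice]
      rw [hN]
      gcongr
      nlinarith [Nat.cast_nonneg (α := ℝ) (i : ℕ)]
    calc 1 / 2 * (1 / ((n : ℝ) + 1)) = ∑ _i : Fin (n + 1), (2 * ((n : ℝ) + 1) ^ 2)⁻¹ := by
          simp
          field_simp
      _ ≤ _ := Finset.sum_le_sum fun i _ ↦ hterm i
  have hsum := (h.comp_injective hinj).sigma
  refine (summable_nat_add_iff 1).not.mpr Real.not_summable_one_div_natCast ?_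
  refine ((Summable.of_nonneg_of_le (fun n ↦ by positivity) hrow hsum).mul_left 2).congr fun n ↦ ?_
  push_cast
  ring

lemma tendsto_tsum_gaussNorm_rpow_atTop :
    Tendsto (fun σ : ℝ ↦ ∑' z, gaussNorm z ^ (-σ)) (𝓝[>] 1) atTop := by
  have hnonneg (σ : ℝ) (z) : 0 ≤ gaussNorm z ^ (-σ) := Real.rpow_nonneg (gaussNorm_nonneg z) _
  refine tendsto_atTop.mpr fun B ↦ ?_
  obtain ⟨t, ht⟩ : ∃ t : Finset GaussianInt, B < ∑ z ∈ t, gaussNorm z ^ (-1 : ℝ) := by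
    by_contra! hle
    refine not_summable_inv_gaussNorm_of_re_pos
      (((summable_of_sum_le (hnonneg 1) hle).subtype _).congr fun z ↦ ?_)
    rw [Function.comp_apply, Real.rpow_neg_one]
  have hcont : ContinuousAt (fun σ : ℝ ↦ ∑ z ∈ t, gaussNorm z ^ (-σ)) 1 :=
    tendsto_finsetSum _ fun z _ ↦
      (Real.continuousAt_const_rpow' (by norm_num)).comp continuousAt_neg
  filter_upwards [self_mem_nhdsWithin,
    (hcont.eventually (lt_mem_nhds ht)).filter_mono nhdsWithin_le_nhds] with σ hσ hlt
  exact hlt.le.trans ((summable_gaussNorm_rpow hσ).sum_le_tsum t fun z _ ↦ hnonneg σ z)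

end Divergence

section EulerFactor

lemma gaussLSeries_sub_ite_dvd {f : GaussianInt →*₀ ℂ} (hf : ∀ z, ‖f z‖ ≤ 1) {α : GaussianInt}
    (hα : α ≠ 0) {s : ℂ} (hs : 1 < s.re) [DecidablePred (α ∣ ·)] :
    gaussLSeries (fun z ↦ (1 - if α ∣ z then (gaussNorm α : ℂ) else 0) * f z) s =
      (1 - f α * (gaussNorm α : ℂ) ^ (1 - s)) * gaussLSeries f s := by
  have hsum : Summable fun z ↦ lSeriesTerm f s z := summable_gaussLSeries (map_zero f) hf hs
  have hdvd : Summable fun z ↦ (if α ∣ z then (gaussNorm α : ℂ) else 0) * lSeriesTerm f s z := by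
    refine .of_norm_bounded (hsum.norm.mul_left (gaussNorm α)) fun z ↦ ?_
    rw [norm_mul]
    gcongr
    split_ifs <;> simp [abs_of_nonneg, gaussNorm_nonneg]
  have hα' : (gaussNorm α : ℂ) ≠ 0 := ofReal_ne_zero.mpr (gaussNorm_pos hα).ne'
  calc gaussLSeries (fun z ↦ (1 - if α ∣ z then (gaussNorm α : ℂ) else 0) * f z) s
      = ∑' z, (lSeriesTerm f s z -
          (if α ∣ z then (gaussNorm α : ℂ) else 0) * lSeriesTerm f s z) :=
        tsum_congr fun z ↦ by rw [lSeriesTerm_apply]; ring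
    _ = ∑' z, lSeriesTerm f s z - gaussNorm α * lSeriesTerm f s α * ∑' z, lSeriesTerm f s z := by
        rw [hsum.tsum_sub hdvd, tsum_ite_dvd _ hα]
    _ = (1 - f α * (gaussNorm α : ℂ) ^ (1 - s)) * ∑' z, lSeriesTerm f s z := by
        rw [lSeriesTerm_apply, sub_eq_add_neg 1 s, cpow_add _ _ hα', cpow_one]
        ring

lemma ContinuesTo.congr {σ₀ : ℝ} {F G : ℂ → ℂ} (hF : ContinuesTo σ₀ F)
    (h : EqOn F G {s | 1 < s.re}) : ContinuesTo σ₀ G :=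
  hF.imp fun _ hD ↦ ⟨hD.1, h.symm.trans hD.2⟩

open scoped Classical in
/-- The indicator of all Gaussian integers minus `N(α)` times that of the multiples of `α`. It has
mean zero, and multiplies `L`-series by an Euler-type factor. -/
def balancedCoeff (α : GaussianInt) (q : Residue α) : ℂ :=
  1 - if q = 0 then (gaussNorm α : ℂ) else 0

section BalancedCoeff

variable {α : GaussianInt} (hα : α ≠ 0)

lemma sum_balancedCoeff [Fintype (Residue α)] : ∑ q, balancedCoeff α q = 0 := by
  simp only [balancedCoeff]
  rw [Finset.sum_sub_distrib, Fintype.sum_eq_single 0 fun q hq ↦ if_neg hq, if_pos rfl,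
    ← card_residue]
  simp [Nat.card_eq_fintype_card]

include hα

lemma eqOn_gaussLSeries_balancedCoeff (k : ℤ) :
    EqOn (gaussLSeries fun z ↦ balancedCoeff α (residue α z) * angular k z)
      (fun s ↦ (1 - angular k α * (gaussNorm α : ℂ) ^ (1 - s)) * gaussLSeries (angular k) s)
      {s | 1 < s.re} := fun s hs ↦ by
  classical
  simp only [balancedCoeff, residue_eq_zero_iff_dvd]
  exact gaussLSeries_sub_ite_dvd (norm_angular_le k) hα hs

lemma continuesTo_half_mul_gaussLSeries_angular (k : ℤ) :
    ContinuesTo (1 / 2)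
      fun s ↦ (1 - angular k α * (gaussNorm α : ℂ) ^ (1 - s)) * gaussLSeries (angular k) s := by
  have := finite_residue hα
  have := Fintype.ofFinite (Residue α)
  exact (continuesTo_half _ k hα sum_balancedCoeff).congr (eqOn_gaussLSeries_balancedCoeff hα k)

lemma continuesTo_zero_mul_gaussLSeries_angular :
    ContinuesTo 0
      fun s ↦ (1 - angular 0 α * (gaussNorm α : ℂ) ^ (1 - s)) * gaussLSeries (angular 0) s := by
  have := finite_residue hα
  have := Fintype.ofFinite (Residue α)
  exact (continuesTo_zero _ hα sum_balancedCoeff).congr (eqOn_gaussLSeries_balancedCoeff hα 0)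

end BalancedCoeff

end EulerFactor

section Zeta

lemma tendsto_re_gaussLSeries_angular_zero :
    Tendsto (fun σ : ℝ ↦ (gaussLSeries (angular 0) σ).re) (𝓝[>] 1) atTop := by
  refine tendsto_tsum_gaussNorm_rpow_atTop.congr' ?_
  filter_upwards [self_mem_nhdsWithin] with σ hσ
  rw [← ofReal_re (∑' z, _), gaussLSeries, dirichletSum, ofReal_tsum]
  refine congrArg re (tsum_congr fun z ↦ ?_)
  rw [ofReal_cpow (gaussNorm_nonneg z), ofReal_neg]
  rcases eq_or_ne z 0 with rfl | hz
  · have : (-σ : ℂ) ≠ 0 := neg_ne_zero.mpr (ofReal_ne_zero.mpr (one_pos.trans hσ).ne')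
    rw [map_zero, ofReal_zero, zero_cpow this, mul_zero]
  · rw [angular_of_ne_zero 0 hz, zpow_zero, one_mul]

/-- The factor, coming from the multiples of `2`, that cancels the pole at `1` of the zeta function
`gaussLSeries (angular 0)`. -/
def zetaFactor (s : ℂ) : ℂ := 1 - 4 ^ (1 - s)

lemma hasDerivAt_zetaFactor (s : ℂ) :
    HasDerivAt zetaFactor (4 ^ (1 - s) * Real.log 4) s := by
  have h := ((hasDerivAt_id s).const_sub 1).const_cpow (c := 4) (Or.inl (by norm_num))
  rw [ofReal_log (by norm_num)]
  simpa [zetaFactor] using! h.const_sub 1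

lemma differentiable_zetaFactor : Differentiable ℂ zetaFactor := fun s ↦
  (hasDerivAt_zetaFactor s).differentiableAt

lemma zetaFactor_one : zetaFactor 1 = 0 := by simp [zetaFactor]

lemma exists_log_mul_im_eq_of_cpow_eq_one {x : ℝ} (hx : 0 < x) {w : ℂ} (h : (x : ℂ) ^ w = 1) :
    Real.log x * w.re = 0 ∧ ∃ n : ℤ, Real.log x * w.im = n * (2 * Real.pi) := by
  rw [cpow_def_of_ne_zero (ofReal_ne_zero.mpr hx.ne'), ← ofReal_log hx.le, exp_eq_one_iff] at h
  obtain ⟨n, hn⟩ := h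
  refine ⟨?_, n, ?_⟩
  · rw [← re_ofReal_mul, hn]
    simp
  · rw [← im_ofReal_mul, hn]
    simp

lemma re_eq_one_of_zetaFactor_eq_zero {s : ℂ} (h : zetaFactor s = 0) : s.re = 1 := by
  obtain ⟨hre, -⟩ := exists_log_mul_im_eq_of_cpow_eq_one (x := 4) (w := 1 - s) (by norm_num)
    (by exact_mod_cast (sub_eq_zero.mp h).symm)
  have := (mul_eq_zero.mp hre).resolve_left (Real.log_pos (by norm_num)).ne'
  rw [sub_re, one_re] at this
  linarith

lemma eq_one_of_zetaFactor_eq_zero {s : ℂ} (h : zetaFactor s = 0) (hs : |s.im| ≤ 2) : s = 1 := by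
  have hlog : 0 < Real.log 4 := Real.log_pos (by norm_num)
  have hlog' : Real.log 4 < 2 := by
    rw [show (4 : ℝ) = 2 ^ 2 by norm_num, Real.log_pow, Nat.cast_ofNat]
    linarith [Real.log_two_lt_d9]
  obtain ⟨-, n, him⟩ := exists_log_mul_im_eq_of_cpow_eq_one (x := 4) (w := 1 - s) (by norm_num)
    (by exact_mod_cast (sub_eq_zero.mp h).symm)
  rw [sub_im, one_im, zero_sub] at him
  have hn0 : n = 0 := by
    have : |(n : ℝ)| * (2 * Real.pi) < 1 * (2 * Real.pi) := by
      calc |(n : ℝ)| * (2 * Real.pi) = Real.log 4 * |s.im| := by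
            rw [← abs_of_pos Real.two_pi_pos, ← abs_mul, ← him, abs_mul, abs_neg, abs_of_pos hlog]
        _ ≤ Real.log 4 * 2 := by gcongr
        _ < 1 * (2 * Real.pi) := by linarith [Real.pi_gt_three]
    exact Int.abs_lt_one_iff.mp (by exact_mod_cast lt_of_mul_lt_mul_right this Real.two_pi_pos.le)
  rw [hn0, Int.cast_zero, zero_mul] at him
  have him' := (mul_eq_zero.mp him).resolve_left hlog.ne'
  exact Complex.ext (re_eq_one_of_zetaFactor_eq_zero h) (neg_eq_zero.mp him')

lemma dslope_zetaFactor_ne_zero {s : ℂ} (hs : |s.im| ≤ 2) : dslope zetaFactor 1 s ≠ 0 := by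
  rcases eq_or_ne s 1 with rfl | hs1
  · rw [dslope_same, (hasDerivAt_zetaFactor 1).deriv]
    exact mul_ne_zero (by simp) (ofReal_ne_zero.mpr (Real.log_pos (by norm_num)).ne')
  · intro h
    refine hs1 (eq_one_of_zetaFactor_eq_zero ?_ hs)
    have := sub_smul_dslope zetaFactor 1 s
    rw [h, smul_zero, zetaFactor_one, sub_zero] at this
    exact this.symm

lemma zetaFactor_eq (s : ℂ) : zetaFactor s = (s - 1) * dslope zetaFactor 1 s := by
  rw [← smul_eq_mul, sub_smul_dslope, zetaFactor_one, sub_zero]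

lemma differentiable_dslope_zetaFactor : Differentiable ℂ (dslope zetaFactor 1) := by
  rw [← differentiableOn_univ, differentiableOn_dslope univ_mem, differentiableOn_univ]
  exact differentiable_zetaFactor

lemma continuesTo_zero_zetaFactor_mul :
    ContinuesTo 0 fun s ↦ zetaFactor s * gaussLSeries (angular 0) s := by
  have h2 : gaussNorm 2 = 4 := by
    rw [gaussNorm_eq]
    norm_num
  have hang : angular 0 2 = 1 := by simp [angular_of_ne_zero]
  simpa only [zetaFactor, h2, hang, one_mul, ofReal_ofNat] using
    continuesTo_zero_mul_gaussLSeries_angular (α := 2) two_ne_zero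

lemma continuation_zeta_one_ne_zero {D : ℂ → ℂ} (hD : AnalyticAt ℂ D 1)
    (hζ : ∀ s, 1 < s.re → zetaFactor s * gaussLSeries (angular 0) s = D s) : D 1 ≠ 0 := fun h0 ↦ by
  have hlim : Tendsto (gaussLSeries (angular 0)) (𝓝[{s | 1 < s.re}] 1)
      (𝓝 (dslope D 1 1 / dslope zetaFactor 1 1)) := by
    have hcont : ContinuousAt (fun s ↦ dslope D 1 s / dslope zetaFactor 1 s) 1 :=
      (continuousAt_dslope_same.mpr hD.differentiableAt).div
        (continuousAt_dslope_same.mpr differentiable_zetaFactor.differentiableAt)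
        (dslope_zetaFactor_ne_zero (by simp))
    refine (hcont.tendsto.mono_left nhdsWithin_le_nhds).congr' ?_
    filter_upwards [self_mem_nhdsWithin, (differentiable_dslope_zetaFactor.continuous.continuousAt
      |>.eventually_ne (dslope_zetaFactor_ne_zero (by simp))).filter_mono nhdsWithin_le_nhds]
      with s hs hne
    have hs1 : s - 1 ≠ 0 := sub_ne_zero.mpr (ne_of_one_lt_re one_re hs)
    have hDs : (s - 1) * dslope D 1 s = D s := by
      rw [← smul_eq_mul, sub_smul_dslope, h0, sub_zero]
    rw [div_eq_iff hne]
    refine mul_left_cancel₀ hs1 ?_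
    rw [hDs, ← hζ s hs, zetaFactor_eq]
    ring
  have hreal : Tendsto (fun σ : ℝ ↦ (σ : ℂ)) (𝓝[>] 1) (𝓝[{s | 1 < s.re}] 1) :=
    tendsto_nhdsWithin_iff.mpr ⟨(continuous_ofReal.tendsto' 1 1 ofReal_one).mono_left
      nhdsWithin_le_nhds, by filter_upwards [self_mem_nhdsWithin] with σ hσ using hσ⟩
  exact not_tendsto_nhds_of_tendsto_atTop tendsto_re_gaussLSeries_angular_zero _
    ((continuous_re.tendsto _).comp (hlim.comp hreal))

theorem hasSimplePole_primeSum_angular_zero :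
    HasSimplePole (primeSum (angular 0)) 1 (Nat.card GaussianIntˣ) := by
  obtain ⟨D, hD, hζ⟩ := continuesTo_zero_zetaFactor_mul
  have hopen : IsOpen {s : ℂ | 0 < s.re} := isOpen_lt continuous_const continuous_re
  have hD1 : AnalyticAt ℂ D 1 := hD.analyticAt (hopen.mem_nhds (by simp))
  have hne : dslope zetaFactor 1 1 ≠ 0 := dslope_zetaFactor_ne_zero (by simp)
  have hg : AnalyticAt ℂ (fun s ↦ D s / dslope zetaFactor 1 s) 1 :=
    hD1.div (differentiable_dslope_zetaFactor.analyticAt 1) hne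
  have := hasSimplePole_primeSum (norm_angular_le 0) one_re hg
    (div_ne_zero (continuation_zeta_one_ne_zero hD1 hζ) hne) (n := -1) ?_
  · simpa using this
  filter_upwards [self_mem_nhdsWithin, (differentiable_dslope_zetaFactor.continuous.continuousAt
    |>.eventually_ne hne).filter_mono nhdsWithin_le_nhds] with s hs hne
  have hs1 : s - 1 ≠ 0 := sub_ne_zero.mpr (ne_of_one_lt_re one_re hs)
  have hDs : zetaFactor s * gaussLSeries (angular 0) s = D s := hζ hs
  rw [← hDs, zetaFactor_eq, zpow_neg_one]
  field_simp

end Zeta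

section Angular

lemma angular_natCast (k : ℤ) {n : ℕ} (hn : n ≠ 0) : angular k n = 1 := by
  rw [angular_of_ne_zero k (Nat.cast_ne_zero.mpr hn)]
  simp [hn]

lemma eq_zero_of_cpow_eq_one {t : ℝ} (h₄ : (4 : ℂ) ^ (-(t * I)) = 1)
    (h₉ : (9 : ℂ) ^ (-(t * I)) = 1) : t = 0 := by
  obtain ⟨-, a, ha⟩ := exists_log_mul_im_eq_of_cpow_eq_one (x := 4) (by norm_num)
    (by exact_mod_cast h₄)
  obtain ⟨-, b, hb⟩ := exists_log_mul_im_eq_of_cpow_eq_one (x := 9) (by norm_num)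
    (by exact_mod_cast h₉)
  rw [neg_im, im_ofReal_mul, I_im, mul_one] at ha hb
  have hlog₄ : 0 < Real.log 4 := Real.log_pos (by norm_num)
  have hlog₉ : 0 < Real.log 9 := Real.log_pos (by norm_num)
  by_contra ht
  have hlog : b.natAbs * Real.log 4 = a.natAbs * Real.log 9 := by
    have hcross : b * Real.log 4 = a * Real.log 9 := by
      refine mul_right_cancel₀ (mul_ne_zero ht Real.two_pi_pos.ne') ?_
      linear_combination -Real.log 4 * t * hb + Real.log 9 * t * ha
    simpa only [abs_mul, abs_of_pos hlog₄, abs_of_pos hlog₉, ← Int.cast_abs, Int.abs_eq_natAbs,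
      Int.cast_natCast] using congrArg abs hcross
  have hpow : 4 ^ b.natAbs = 9 ^ a.natAbs := by
    rw [← Real.log_pow, ← Real.log_pow] at hlog
    exact_mod_cast Real.log_injOn_pos (by simp) (by simp) hlog
  have hb0 : b.natAbs ≠ 0 := fun h ↦ by
    rw [Int.natAbs_eq_zero.mp h, Int.cast_zero, zero_mul] at hb
    exact mul_ne_zero hlog₉.ne' (neg_ne_zero.mpr ht) hb
  have heven : Even (9 ^ a.natAbs) := hpow ▸ (by decide : Even 4).pow_of_ne_zero hb0
  exact Nat.not_even_iff_odd.mpr (by decide : Odd 9).pow heven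

lemma star_pow_eq_of_angular_eq_one {k : ℤ} {z : GaussianInt} (hz : z ≠ 0) (h : angular k z = 1) :
    star z ^ k.natAbs = z ^ k.natAbs := by
  have hnorm : (‖toComplex z‖ : ℂ) ≠ 0 := by simpa using hz
  have hpow : (toComplex z / ‖toComplex z‖) ^ k.natAbs = 1 := by
    rw [angular_of_ne_zero k hz] at h
    rcases Int.natAbs_eq k with hk | hk
    · rwa [hk, zpow_natCast] at h
    · rwa [hk, zpow_neg, zpow_natCast, inv_eq_one] at h
  rw [div_pow, div_eq_one_iff_eq (pow_ne_zero _ hnorm)] at hpow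
  refine GaussianInt.toComplex_injective ?_
  rw [← star_pow, GaussianInt.toComplex_star, map_pow, hpow, map_pow, conj_ofReal]

lemma angular_two_add_I_ne_one {k : ℤ} (hk : k ≠ 0) : angular k ⟨2, 1⟩ ≠ 1 := fun h ↦ by
  have hpow := star_pow_eq_of_angular_eq_one (by simp [Zsqrtd.ext_iff]) h
  have hcop : IsCoprime (⟨2, 1⟩ : GaussianInt) (star ⟨2, 1⟩) :=
    ⟨⟨1, -1⟩, -1, by simp [Zsqrtd.ext_iff]⟩
  have hunit : IsUnit ((⟨2, 1⟩ : GaussianInt) ^ k.natAbs) :=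
    isCoprime_self.mp (hpow ▸ hcop.pow (m := k.natAbs) (n := k.natAbs))
  have hnorm := gaussNorm_eq_one_iff.mpr
    ((isUnit_pow_iff (Int.natAbs_ne_zero.mpr hk)).mp hunit)
  norm_num [gaussNorm_eq] at hnorm

lemma exists_angular_mul_cpow_ne_one {k : ℤ} {t : ℝ} (h : k ≠ 0 ∨ t ≠ 0) :
    ∃ α ≠ 0, angular k α * (gaussNorm α : ℂ) ^ (-(t * I)) ≠ 1 := by
  by_contra! H
  have hnat {n : ℕ} (hn : n ≠ 0) : ((n ^ 2 : ℕ) : ℂ) ^ (-(t * I)) = 1 := by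
    simpa [angular_natCast k hn, gaussNorm_eq] using H n (Nat.cast_ne_zero.mpr hn)
  have ht : t = 0 := eq_zero_of_cpow_eq_one (by exact_mod_cast hnat two_ne_zero)
    (by exact_mod_cast hnat three_ne_zero)
  have hk : k ≠ 0 := h.resolve_right (not_not.mpr ht)
  refine angular_two_add_I_ne_one hk ?_
  simpa [ht] using H ⟨2, 1⟩ (by simp [Zsqrtd.ext_iff])

end Angular

section HeckeCharacter

variable {m : GaussianInt}

/-- The character `z ↦ χ(z mod m) (z/|z|)ᵏ` of the multiplicative monoid of Gaussian integers. -/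
def heckeChar (χ : MulChar (Residue m) ℂ) (k : ℤ) : GaussianInt →*₀ ℂ where
  toFun z := χ (residue m z) * angular k z
  map_zero' := by rw [map_zero (angular k), mul_zero]
  map_one' := by simp
  map_mul' z w := by
    rw [map_mul, map_mul, map_mul]
    ring

lemma heckeChar_apply (χ : MulChar (Residue m) ℂ) (k : ℤ) (z : GaussianInt) :
    heckeChar χ k z = χ (residue m z) * angular k z := rfl

lemma heckeChar_sq (χ : MulChar (Residue m) ℂ) (k : ℤ) :
    (heckeChar χ k : GaussianInt → ℂ) ^ 2 = heckeChar (χ ^ 2) (2 * k) := by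
  ext z
  rcases eq_or_ne z 0 with rfl | hz
  · simp
  · rw [Pi.pow_apply, heckeChar_apply, heckeChar_apply, MulChar.pow_apply' _ two_ne_zero, mul_pow,
      angular_of_ne_zero _ hz, angular_of_ne_zero _ hz, mul_comm 2 k, zpow_mul, zpow_ofNat]

lemma isUnit_residue_iff {z : GaussianInt} : IsUnit (residue m z) ↔ IsCoprime z m := by
  constructor
  · intro h
    obtain ⟨q, hq⟩ := h.exists_right_inv
    obtain ⟨w, rfl⟩ := Ideal.Quotient.mk_surjective q
    rw [← map_mul, ← map_one (residue m), residue_eq_iff_dvd] at hq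
    obtain ⟨v, hv⟩ := hq
    exact ⟨w, -v, by linear_combination hv⟩
  · rintro ⟨w, v, h⟩
    refine IsUnit.of_mul_eq_one_right (residue m w) ?_
    rw [← map_mul, ← map_one (residue m), residue_eq_iff_dvd]
    exact ⟨-v, by linear_combination h⟩

lemma finite_prime_not_isCoprime (hm : m ≠ 0) : {p : GaussPrime | ¬IsCoprime p.1 m}.Finite := by
  refine ((finite_gaussNorm_le (gaussNorm m)).preimage Subtype.val_injective.injOn).subset
    fun p hp ↦ ?_
  obtain ⟨w, rfl⟩ := (dvd_or_isCoprime _ _ p.2.irreducible).resolve_right hp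
  rw [mem_preimage, mem_ofPred_eq, map_mul]
  exact le_mul_of_one_le_right (gaussNorm_nonneg _) (one_le_gaussNorm (right_ne_zero_of_mul hm))

lemma heckeChar_one_of_isCoprime {z : GaussianInt} (hz : IsCoprime z m) (k : ℤ) :
    heckeChar (1 : MulChar (Residue m) ℂ) k z = angular k z := by
  rw [heckeChar_apply, MulChar.one_apply (isUnit_residue_iff.mpr hz), one_mul]

lemma finite_heckeChar_one_ne_angular (hm : m ≠ 0) (k : ℤ) :
    {p : GaussPrime | angular k p ≠ heckeChar (1 : MulChar (Residue m) ℂ) k p}.Finite :=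
  (finite_prime_not_isCoprime hm).subset fun _ hp hcop ↦
    hp (heckeChar_one_of_isCoprime hcop k).symm

lemma norm_heckeChar_le (hm : m ≠ 0) (χ : MulChar (Residue m) ℂ) (k : ℤ) (z : GaussianInt) :
    ‖heckeChar χ k z‖ ≤ 1 := by
  have hχ : ‖χ (residue m z)‖ ≤ 1 := by
    by_cases h : IsUnit (residue m z)
    · have := finite_residue hm
      have := Fintype.ofFinite (Residue m)ˣ
      refine (norm_eq_one_of_pow_eq_one (n := Fintype.card (Residue m)ˣ) ?_
        Fintype.card_ne_zero).le
      rw [← MulChar.pow_apply' _ Fintype.card_ne_zero, χ.pow_card_eq_one, MulChar.one_apply h]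
    · simp [χ.map_nonunit h]
  rw [heckeChar_apply, norm_mul]
  exact mul_le_one₀ hχ (norm_nonneg _) (norm_angular_le k z)

lemma hasSimplePole_primeSum_heckeChar_one (hm : m ≠ 0) :
    HasSimplePole (primeSum (heckeChar (1 : MulChar (Residue m) ℂ) 0)) 1 (Nat.card GaussianIntˣ) :=
  hasSimplePole_primeSum_of_finite (norm_angular_le 0) (norm_heckeChar_le hm 1 0)
    (finite_heckeChar_one_ne_angular hm 0) hasSimplePole_primeSum_angular_zero

lemma hasSimplePole_primeSum_one : HasSimplePole (primeSum 1) 1 (Nat.card GaussianIntˣ) := by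
  refine hasSimplePole_primeSum_of_finite (norm_angular_le 0) (fun z ↦ by simp)
    (finite_empty.subset fun p hp ↦ hp ?_) hasSimplePole_primeSum_angular_zero
  rw [angular_of_ne_zero 0 p.2.ne_zero, zpow_zero, Pi.one_apply]

lemma exists_hasSimplePole_primeSum_angular {k : ℤ} (hu : ∀ u : GaussianIntˣ, angular k u = 1)
    {t : ℝ} (hkt : k ≠ 0 ∨ t ≠ 0) :
    ∃ n : ℕ, HasSimplePole (primeSum (angular k)) (1 + t * I) (-(Nat.card GaussianIntˣ * n)) := by
  obtain ⟨α, hα, hne⟩ := exists_angular_mul_cpow_ne_one hkt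
  obtain ⟨D, hD, hDL⟩ := continuesTo_half_mul_gaussLSeries_angular hα k
  let factor (s : ℂ) : ℂ := 1 - angular k α * (gaussNorm α : ℂ) ^ (1 - s)
  have hfactor : Differentiable ℂ factor := fun s ↦ by
    have : (gaussNorm α : ℂ) ≠ 0 := ofReal_ne_zero.mpr (gaussNorm_pos hα).ne'
    exact ((((differentiableAt_const 1).sub differentiableAt_id).const_cpow
      (.inl this)).const_mul _).const_sub 1
  have hfactor₀ : factor (1 + t * I) ≠ 0 := sub_ne_zero.mpr fun h ↦ hne (by
    rw [h, sub_add_cancel_left])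
  have hopen : IsOpen {s : ℂ | 1 / 2 < s.re} := isOpen_lt continuous_const continuous_re
  have hD₀ : AnalyticAt ℂ D (1 + t * I) := hD.analyticAt (hopen.mem_nhds (by norm_num))
  refine exists_hasSimplePole_of_analyticAt (norm_angular_le k) hu (by simp)
    (hD₀.div (hfactor.analyticAt _) hfactor₀) ?_
  filter_upwards [self_mem_nhdsWithin, (hfactor.continuous.continuousAt.eventually_ne
    hfactor₀).filter_mono nhdsWithin_le_nhds] with s hs hs₀
  rw [Pi.div_apply, eq_div_iff hs₀, mul_comm]
  exact hDL hs

lemma exists_hasSimplePole_primeSum_heckeChar (hm : m ≠ 0) {χ : MulChar (Residue m) ℂ} {k : ℤ}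
    {t : ℝ} (h : ¬(χ = 1 ∧ k = 0 ∧ t = 0)) :
    ∃ n : ℕ, HasSimplePole (primeSum (heckeChar χ k)) (1 + t * I)
      (-(Nat.card GaussianIntˣ * n)) := by
  by_cases hu : ∀ u : GaussianIntˣ, heckeChar χ k u = 1
  · rcases eq_or_ne χ 1 with rfl | hχ
    · have hu' (u : GaussianIntˣ) : angular k u = 1 := by
        rw [← hu u, heckeChar_one_of_isCoprime ⟨↑u⁻¹, 0, by simp⟩]
      obtain ⟨n, hn⟩ := exists_hasSimplePole_primeSum_angular hu' (t := t)
        (by simpa only [true_and, not_and_or] using h)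
      exact ⟨n, hasSimplePole_primeSum_of_finite (norm_angular_le k) (norm_heckeChar_le hm 1 k)
        (finite_heckeChar_one_ne_angular hm k) hn⟩
    · have := finite_residue hm
      have := Fintype.ofFinite (Residue m)
      obtain ⟨D, hD, hDL⟩ := continuesTo_half χ k hm (MulChar.sum_eq_zero_of_ne_one hχ)
      have hopen : IsOpen {s : ℂ | 1 / 2 < s.re} := isOpen_lt continuous_const continuous_re
      exact exists_hasSimplePole_of_analyticAt (norm_heckeChar_le hm χ k) hu (by simp)
        (hD.analyticAt (hopen.mem_nhds (by norm_num))) (eventually_nhdsWithin_of_forall hDL)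
  · obtain ⟨u, hu⟩ := not_forall.mp hu
    refine ⟨0, 0, tendsto_const_nhds.congr fun s ↦ ?_⟩
    rw [primeSum_eq_zero hu]
    simp

end HeckeCharacter

section Landau

open scoped ComplexOrder

variable {ι : Type*} {a : ι → ℂ} {x : ι → ℝ} (hx : ∀ i, a i = 0 ∨ 1 ≤ x i)
  (hs : ∀ σ : ℝ, 1 < σ → Summable fun i ↦ ‖a i‖ * x i ^ (-σ)) (ha : ∀ i, 0 ≤ a i)

include hx hs ha

lemma iteratedDeriv_dirichletSum_alternating {σ : ℝ} (hσ : 1 < σ) (n : ℕ) :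
    0 ≤ (-1) ^ n * iteratedDeriv n (dirichletSum a x) σ := by
  induction n generalizing a with
  | zero =>
    rw [pow_zero, one_mul, iteratedDeriv_zero]
    refine tsum_nonneg fun i ↦ ?_
    rcases hx i with hi | hi
    · simp [hi]
    · rw [← ofReal_neg, ← ofReal_cpow (zero_le_one.trans hi)]
      exact mul_nonneg (ha i) (zero_le_real.mpr (Real.rpow_nonneg (zero_le_one.trans hi) _))
  | succ n ih =>
    let aLog (i : ι) : ℂ := a i * Real.log (x i)
    have hx' (i : ι) : aLog i = 0 ∨ 1 ≤ x i := (hx i).imp_left fun hi ↦ by simp [aLog, hi]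
    have ha' (i : ι) : 0 ≤ aLog i := by
      rcases hx i with hi | hi
      · simp [aLog, hi]
      · exact mul_nonneg (ha i) (zero_le_real.mpr (Real.log_nonneg hi))
    have hs' (σ : ℝ) (hσ : 1 < σ) : Summable fun i ↦ ‖aLog i‖ * x i ^ (-σ) := by
      refine (summable_mul_log_mul_rpow (fun i ↦ norm_nonneg (a i)) (by simpa using hx) hs
        hσ).congr fun i ↦ ?_
      rcases hx i with hi | hi
      · simp [aLog, hi]
      · rw [norm_mul, norm_real, Real.norm_of_nonneg (Real.log_nonneg hi)]
    have hderiv : deriv (dirichletSum a x) =ᶠ[𝓝 (σ : ℂ)] -dirichletSum aLog x := by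
      filter_upwards [isOpen_one_lt_re.mem_nhds (show (σ : ℂ) ∈ {s : ℂ | 1 < s.re} from hσ)]
        with s hs₁ using (hasDerivAt_dirichletSum hx hs hs₁).deriv
    rw [iteratedDeriv_succ', hderiv.iteratedDeriv_eq, iteratedDeriv_neg, pow_succ]
    simpa using ih hx' hs' ha'

lemma nonneg_of_eqOn_dirichletSum {G : ℂ → ℂ} {r : ℝ}
    (hG : DifferentiableOn ℂ G (Metric.ball 2 r))
    (hFG : EqOn (dirichletSum a x) G {s | 1 < s.re}) {σ : ℝ} (hσ₂ : σ ≤ 2) (hσr : 2 - r < σ) :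
    0 ≤ G σ := by
  have heq : G =ᶠ[𝓝 ((2 : ℝ) : ℂ)] dirichletSum a x := by
    filter_upwards [isOpen_one_lt_re.mem_nhds (by simp)] with s hs₁ using (hFG hs₁).symm
  have hneg : DifferentiableOn ℂ (fun s ↦ G (-s)) (Metric.ball (-2) r) := by
    refine hG.comp differentiable_neg.differentiableOn fun s hs ↦ ?_
    rwa [Metric.mem_ball, dist_eq, ← norm_neg, neg_sub, sub_neg_eq_add, add_comm,
      ← sub_neg_eq_add, ← dist_eq]
  have := hneg.nonneg_of_iteratedDeriv_nonneg (z := -σ) (fun n ↦ ?_) ?_ ?_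
  · simpa using this
  · rw [iteratedDeriv_comp_neg, neg_neg, ← ofReal_ofNat, heq.iteratedDeriv_eq, smul_eq_mul]
    exact iteratedDeriv_dirichletSum_alternating hx hs ha one_lt_two n
  · exact neg_le_neg (by exact_mod_cast hσ₂)
  · rw [Metric.mem_ball, dist_eq, neg_sub_neg, ← ofReal_ofNat, ← ofReal_sub, norm_real,
      Real.norm_of_nonneg (by linarith)]
    linarith

/-- **Landau's theorem**: the Taylor coefficients at `2` alternate in sign, so the continuation
dominates every partial sum to the left of `2`. -/
theorem summable_norm_mul_rpow_of_eqOn_dirichletSum {G : ℂ → ℂ} {r : ℝ}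
    (hG : DifferentiableOn ℂ G (Metric.ball 2 r))
    (hFG : EqOn (dirichletSum a x) G {s | 1 < s.re}) {σ : ℝ} (hσ₂ : σ ≤ 2) (hσr : 2 - r < σ) :
    Summable fun i ↦ ‖a i‖ * x i ^ (-σ) := by
  have hterm (i : ι) : a i * (x i : ℂ) ^ (-(σ : ℂ)) = ((‖a i‖ * x i ^ (-σ) : ℝ) : ℂ) := by
    rcases hx i with hi | hi
    · simp [hi]
    · rw [ofReal_mul, ofReal_cpow (zero_le_one.trans hi), ofReal_neg,
        ← eq_coe_norm_of_nonneg (ha i)]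
  have hsum {s : ℂ} (hs₁ : 1 < s.re) : Summable fun i ↦ a i * (x i : ℂ) ^ (-s) :=
    .of_norm ((hs s.re hs₁).congr fun i ↦ (norm_mul_cpow_neg hx s i).symm)
  have hpartial (T : Finset ι) : 0 ≤ G σ - ∑ i ∈ T, a i * (x i : ℂ) ^ (-(σ : ℂ)) :=
    nonneg_of_eqOn_dirichletSum (ι := {i // i ∉ T}) (a := fun i ↦ a i) (x := fun i ↦ x i)
      (G := fun s ↦ G s - ∑ i ∈ T, a i * (x i : ℂ) ^ (-s)) (fun i ↦ hx i)
      (fun σ hσ ↦ (hs σ hσ).comp_injective Subtype.val_injective) (fun i ↦ ha i)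
      (hG.sub (DifferentiableOn.fun_sum fun i _ s _ ↦
        (hasDerivAt_mul_cpow_neg hx i s).differentiableAt.differentiableWithinAt))
      (fun s hs₁ ↦ eq_sub_of_add_eq' <|
        ((hsum hs₁).sum_add_tsum_subtype_compl T).trans (hFG hs₁)) hσ₂ hσr
  refine summable_of_sum_le (c := (G σ).re) (fun i ↦ ?_) fun T ↦ ?_
  · rcases hx i with hi | hi
    · simp [hi]
    · positivity
  · have hT := (nonneg_iff.mp (hpartial T)).1
    simp only [hterm, ← ofReal_sum, sub_re, ofReal_re] at hT
    linarith

end Landau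

section Quadratic

open scoped ComplexOrder

lemma finite_setOf_dvd {v : GaussianInt} (hv : v ≠ 0) : {d | d ∣ v}.Finite := by
  refine (finite_gaussNorm_le (gaussNorm v)).subset ?_
  rintro d ⟨w, rfl⟩
  rw [mem_ofPred_eq, map_mul]
  exact le_mul_of_one_le_right (gaussNorm_nonneg d) (one_le_gaussNorm (right_ne_zero_of_mul hv))

open scoped Classical in
/-- The sum of `f` over all divisors of `v`, associated divisors being counted separately. -/
def divisorSum (f : GaussianInt → ℂ) (v : GaussianInt) : ℂ := ∑' d, if d ∣ v then f d else 0

lemma divisorSum_eq_sum (f : GaussianInt → ℂ) {v : GaussianInt} (hv : v ≠ 0) :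
    divisorSum f v = ∑ d ∈ (finite_setOf_dvd hv).toFinset, f d := by
  rw [divisorSum, tsum_eq_sum (s := (finite_setOf_dvd hv).toFinset)
    fun d hd ↦ if_neg (by simpa using hd)]
  exact Finset.sum_congr rfl fun d hd ↦ if_pos (by simpa using hd)

lemma exists_eq_pow_mul_of_dvd_pow_mul {p d u : GaussianInt} (hp : Prime p) {i : ℕ}
    (hd : d ∣ p ^ i * u) : ∃ j e, j ≤ i ∧ e ∣ u ∧ p ^ j * e = d := by
  obtain ⟨a, e, ha, he, rfl⟩ := exists_dvd_and_dvd_of_dvd_mul hd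
  obtain ⟨j, hj, hassoc⟩ := (dvd_prime_pow hp i).mp ha
  obtain ⟨c, rfl⟩ := hassoc.symm
  exact ⟨j, c * e, hj, (c.isUnit.mul_left_dvd).mpr he, by ring⟩

lemma divisorSum_prime_pow_mul (f : GaussianInt →*₀ ℂ) {p u : GaussianInt} (hp : Prime p)
    (hpu : ¬p ∣ u) (i : ℕ) :
    divisorSum f (p ^ i * u) = (∑ j ∈ Finset.range (i + 1), f p ^ j) * divisorSum f u := by
  have hu : u ≠ 0 := fun h ↦ hpu (h ▸ dvd_zero p)
  rw [divisorSum_eq_sum f hu, divisorSum_eq_sum f (mul_ne_zero (pow_ne_zero i hp.ne_zero) hu),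
    Finset.sum_mul_sum, ← Finset.sum_product']
  symm
  refine Finset.sum_bij (fun q _ ↦ p ^ q.1 * q.2) (fun q hq ↦ ?_) (fun q hq q' hq' h ↦ ?_)
    (fun d hd ↦ ?_) fun q _ ↦ by rw [map_mul, map_pow]
  · simp only [Finset.mem_product, Finset.mem_range, Set.Finite.mem_toFinset, mem_ofPred_eq] at hq ⊢
    exact mul_dvd_mul (pow_dvd_pow p (by lia)) hq.2
  · simp only [Finset.mem_product, Set.Finite.mem_toFinset, mem_ofPred_eq] at hq hq'
    have hle {j j' : ℕ} {e e' : GaussianInt} (he' : e' ∣ u) (h : p ^ j * e = p ^ j' * e') :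
        j ≤ j' :=
      (pow_dvd_pow_iff hp.ne_zero hp.not_isUnit).mp
        (hp.pow_dvd_of_dvd_mul_right _ (fun hpe ↦ hpu (hpe.trans he')) (h ▸ dvd_mul_right _ _))
    have hj : q.1 = q'.1 := le_antisymm (hle hq'.2 h) (hle hq.2 h.symm)
    rw [hj] at h
    exact Prod.ext hj (mul_left_cancel₀ (pow_ne_zero _ hp.ne_zero) h)
  · obtain ⟨j, e, hj, he, rfl⟩ := exists_eq_pow_mul_of_dvd_pow_mul hp (by simpa using hd)
    exact ⟨(j, e), by simpa using ⟨by lia, he⟩, rfl⟩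

lemma prime_pow_mul_induction {R : Type*} [CommMonoidWithZero R] [UniqueFactorizationMonoid R]
    {P : R → Prop} (hunit : ∀ u, IsUnit u → P u)
    (hprime : ∀ p i u, Prime p → ¬p ∣ u → P u → P (p ^ i * u)) {v : R} (hv : v ≠ 0) : P v := by
  refine wellFounded_dvdNotUnit.induction (C := fun v ↦ v ≠ 0 → P v) v (fun v ih hv ↦ ?_) hv
  by_cases hvu : IsUnit v
  · exact hunit v hvu
  obtain ⟨p, hp, hpv⟩ := WfDvdMonoid.exists_irreducible_factor hvu hv
  obtain ⟨i, u, hpu, rfl⟩ := WfDvdMonoid.max_power_factor hv hp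
  have hi : i ≠ 0 := fun hi ↦ hpu (by simpa [hi] using hpv)
  have hu : u ≠ 0 := right_ne_zero_of_mul hv
  exact hprime p i u hp.prime hpu
    (ih u ⟨hu, p ^ i, mt (isUnit_pow_iff hi).mp hp.not_isUnit, mul_comm _ _⟩ hu)

lemma divisorSum_unit {f : GaussianInt →*₀ ℂ} (hu : ∀ u : GaussianIntˣ, f u = 1) {v : GaussianInt}
    (hv : IsUnit v) : divisorSum f v = Nat.card GaussianIntˣ := by
  rw [divisorSum, ← tsum_ite_isUnit]
  refine tsum_congr fun d ↦ ?_
  by_cases hd : IsUnit d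
  · obtain ⟨u, rfl⟩ := hd
    rw [if_pos u.isUnit, if_pos (u.isUnit.dvd), hu]
  · rw [if_neg hd, if_neg fun h ↦ hd (isUnit_of_dvd_unit h hv)]

section Sign

variable {f : GaussianInt →*₀ ℂ} (hu : ∀ u : GaussianIntˣ, f u = 1)
  (hf : ∀ z, f z = 0 ∨ f z = 1 ∨ f z = -1)

include hu hf

lemma divisorSum_nonneg {v : GaussianInt} (hv : v ≠ 0) : 0 ≤ divisorSum f v := by
  refine prime_pow_mul_induction (P := fun v ↦ 0 ≤ divisorSum f v) (fun v hv ↦ ?_)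
    (fun p i u hp hpu ih ↦ ?_) hv
  · rw [divisorSum_unit hu hv]
    exact Nat.cast_nonneg _
  · rw [divisorSum_prime_pow_mul f hp hpu]
    refine mul_nonneg ?_ ih
    rcases hf p with h | h | h <;> rw [h]
    · simp
    · simpa using add_nonneg i.cast_nonneg zero_le_one
    · rw [neg_one_geom_sum]
      split_ifs <;> simp

lemma one_le_divisorSum_sq {v : GaussianInt} (hv : v ≠ 0) : 1 ≤ divisorSum f (v ^ 2) := by
  refine prime_pow_mul_induction (P := fun v ↦ 1 ≤ divisorSum f (v ^ 2)) (fun v hv ↦ ?_)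
    (fun p i u hp hpu ih ↦ ?_) hv
  · rw [divisorSum_unit hu (hv.pow 2)]
    exact_mod_cast Nat.card_pos
  · rw [mul_pow, ← pow_mul, divisorSum_prime_pow_mul f hp (fun h ↦ hpu (hp.dvd_of_dvd_pow h))]
    refine ih.trans (le_mul_of_one_le_left (zero_le_one.trans ih) ?_)
    rcases hf p with h | h | h <;> rw [h]
    · simp
    · exact_mod_cast (by simp : 1 ≤ ∑ j ∈ Finset.range (i * 2 + 1), 1 ^ j)
    · rw [neg_one_geom_sum, if_neg (by simp [parity_simps])]

end Sign

end Quadratic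

section Convolution

variable {f g : GaussianInt →*₀ ℂ} (hf : ∀ z, ‖f z‖ ≤ 1) (hg : Summable g)

include hf hg

open scoped Classical in
lemma summable_ite_dvd_mul :
    Summable fun q : GaussianInt × GaussianInt ↦ (if q.2 ∣ q.1 then f q.2 else 0) * g q.1 := by
  refine .of_norm (Summable.prod_symm
    (f := fun q : GaussianInt × GaussianInt ↦ ‖(if q.1 ∣ q.2 then f q.1 else 0) * g q.2‖) ?_)
  have hbound (d v : GaussianInt) : ‖(if d ∣ v then f d else 0) * g v‖ ≤ ‖g v‖ := by
    rw [norm_mul]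
    refine mul_le_of_le_one_left (norm_nonneg _) ?_
    split_ifs
    · exact hf d
    · simp
  refine (summable_prod_of_nonneg fun _ ↦ norm_nonneg _).mpr
    ⟨fun d ↦ hg.norm.of_nonneg_of_le (fun _ ↦ norm_nonneg _) (hbound d), ?_⟩
  let normG : GaussianInt →*₀ ℝ := normHom.comp g
  refine .of_nonneg_of_le (fun _ ↦ tsum_nonneg fun _ ↦ norm_nonneg _) (fun d ↦ ?_)
    (hg.norm.mul_right (∑' z, ‖g z‖))
  rcases eq_or_ne d 0 with rfl | hd
  · simp
  have := tsum_ite_dvd normG hd ‖f d‖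
  simp only [norm_mul, apply_ite norm, norm_zero]
  exact this.trans_le (mul_le_mul_of_nonneg_right
    (mul_le_of_le_one_left (norm_nonneg (g d)) (hf d)) (tsum_nonneg fun z ↦ norm_nonneg (g z)))

lemma hasSum_divisorSum_mul :
    HasSum (fun v ↦ divisorSum f v * g v) ((∑' d, f d * g d) * ∑' z, g z) := by
  classical
  have hsum := summable_ite_dvd_mul hf hg
  have hrow (v : GaussianInt) :
      ∑' d, (if d ∣ v then f d else 0) * g v = divisorSum f v * g v := by
    rw [tsum_mul_right, divisorSum]
  have hcolumn (d : GaussianInt) :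
      ∑' v, (if d ∣ v then f d else 0) * g v = f d * g d * ∑' z, g z := by
    rcases eq_or_ne d 0 with rfl | hd
    · simp
    · exact tsum_ite_dvd g hd (f d)
  have htsum : (∑' d, f d * g d) * ∑' z, g z = ∑' v, divisorSum f v * g v := by
    rw [← tsum_mul_right, ← tsum_congr hcolumn, ← tsum_congr hrow]
    exact hsum.tsum_comm
  rw [htsum]
  exact (hsum.prod.congr hrow).hasSum

end Convolution

section DivisorSeries

variable {f : GaussianInt →*₀ ℂ} (hf : ∀ z, ‖f z‖ ≤ 1) {s : ℂ} (hs : 1 < s.re)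

include hf hs

lemma hasSum_divisorSum_mul_angular_zero :
    HasSum (fun v ↦ divisorSum f v * angular 0 v * (gaussNorm v : ℂ) ^ (-s))
      (gaussLSeries f s * gaussLSeries (angular 0) s) := by
  have hg : Summable (lSeriesTerm (angular 0) s) :=
    summable_gaussLSeries (map_zero _) (norm_angular_le 0) hs
  have hterm (d : GaussianInt) : f d * lSeriesTerm (angular 0) s d =
      f d * (gaussNorm d : ℂ) ^ (-s) := by
    rcases eq_or_ne d 0 with rfl | hd
    · simp
    · rw [lSeriesTerm_apply, angular_of_ne_zero 0 hd, zpow_zero, one_mul]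
  have h := hasSum_divisorSum_mul hf hg
  rw [tsum_congr hterm] at h
  simpa only [lSeriesTerm_apply, ← mul_assoc, gaussLSeries, dirichletSum] using h

lemma gaussLSeries_divisorSum_mul_angular_zero :
    gaussLSeries (fun v ↦ divisorSum f v * angular 0 v) s =
      gaussLSeries f s * gaussLSeries (angular 0) s :=
  (hasSum_divisorSum_mul_angular_zero hf hs).tsum_eq

end DivisorSeries

lemma sq_injective_of_re_pos :
    Function.Injective fun z : {z : GaussianInt // 0 < z.re} ↦ (z : GaussianInt) ^ 2 := by
  intro z w h
  rcases sq_eq_sq_iff_eq_or_eq_neg.mp h with h | h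
  · exact Subtype.ext h
  · have := congrArg Zsqrtd.re h
    have hz := z.2
    have hw := w.2
    rw [Zsqrtd.re_neg] at this
    lia

section Quadratic

open scoped ComplexOrder

variable {f : GaussianInt →*₀ ℂ} (hu : ∀ u : GaussianIntˣ, f u = 1)
  (hf : ∀ z, f z = 0 ∨ f z = 1 ∨ f z = -1)

include hu hf

lemma not_summable_norm_divisorSum :
    ¬Summable fun v ↦ ‖divisorSum f v * angular 0 v‖ * gaussNorm v ^ (-(1 / 2) : ℝ) := fun h ↦ by
  refine not_summable_inv_gaussNorm_of_re_pos (.of_nonneg_of_le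
    (fun z ↦ inv_nonneg.mpr (gaussNorm_nonneg z)) (fun z ↦ ?_)
    (h.comp_injective sq_injective_of_re_pos))
  have hz : (z : GaussianInt) ≠ 0 := fun h ↦ by simpa [h] using z.2
  have hnorm : 1 ≤ ‖divisorSum f (z ^ 2 : GaussianInt)‖ :=
    (le_def.mp (one_le_divisorSum_sq hu hf hz)).1.trans (re_le_norm _)
  have hpow : gaussNorm (z ^ 2 : GaussianInt) ^ (-(1 / 2) : ℝ) = (gaussNorm z)⁻¹ := by
    rw [map_pow, ← Real.rpow_natCast, ← Real.rpow_mul (gaussNorm_nonneg z), ← Real.rpow_neg_one]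
    norm_num
  rw [Function.comp_apply, norm_mul, norm_angular 0 (pow_ne_zero 2 hz), mul_one, hpow]
  exact le_mul_of_one_le_left (inv_nonneg.mpr (gaussNorm_nonneg z)) hnorm

lemma divisorSum_mul_angular_zero_nonneg (v : GaussianInt) : 0 ≤ divisorSum f v * angular 0 v := by
  rcases eq_or_ne v 0 with rfl | hv
  · simp
  · simpa [angular_of_ne_zero 0 hv] using divisorSum_nonneg hu hf hv

/- A zero at `1` would cancel the pole of the zeta function, so that by Landau's theorem the
series of `divisorSum f` would converge down to `0`; but its coefficients at squares are at
least `1`. -/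
theorem continuation_one_ne_zero_of_quadratic {D : ℂ → ℂ}
    (hD : DifferentiableOn ℂ D {s | 0 < s.re}) (hfD : EqOn (gaussLSeries f) D {s | 1 < s.re}) :
    D 1 ≠ 0 := fun hD1 ↦ by
  have hf1 (z : GaussianInt) : ‖f z‖ ≤ 1 := by rcases hf z with h | h | h <;> simp [h]
  obtain ⟨D₀, hD₀, hζ⟩ := continuesTo_zero_zetaFactor_mul
  have hnz := eq_zero_or_one_le_gaussNorm (f := fun v ↦ divisorSum f v * angular 0 v) (by simp)
  have hsum (σ : ℝ) (hσ : 1 < σ) :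
      Summable fun v ↦ ‖divisorSum f v * angular 0 v‖ * gaussNorm v ^ (-σ) :=
    (hasSum_divisorSum_mul_angular_zero hf1 (s := σ) hσ).summable.norm.congr
      (norm_mul_cpow_neg hnz σ)
  have hball {s : ℂ} (hs : s ∈ Metric.ball 2 2) : 0 < s.re ∧ |s.im| ≤ 2 := by
    rw [mem_ball_iff_norm] at hs
    have hre := (abs_lt.mp ((abs_re_le_norm (s - 2)).trans_lt hs)).1
    have him := (abs_im_le_norm (s - 2)).trans hs.le
    simp only [sub_re, re_ofNat, sub_im, im_ofNat, sub_zero] at hre him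
    exact ⟨by linarith, him⟩
  have hG : DifferentiableOn ℂ (fun s ↦ D₀ s * dslope D 1 s / dslope zetaFactor 1 s)
      (Metric.ball 2 2) := by
    have hopen : IsOpen {s : ℂ | 0 < s.re} := isOpen_lt continuous_const continuous_re
    have hdslope := (differentiableOn_dslope (hopen.mem_nhds (by simp : (0 : ℝ) < re 1))).mpr hD
    exact ((hD₀.mul hdslope).mono fun s hs ↦ (hball hs).1).div
      differentiable_dslope_zetaFactor.differentiableOn fun s hs ↦
        dslope_zetaFactor_ne_zero (hball hs).2
  refine not_summable_norm_divisorSum hu hf (summable_norm_mul_rpow_of_eqOn_dirichletSum hnz hsum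
    (divisorSum_mul_angular_zero_nonneg hu hf) hG (fun s hs ↦ ?_) (by norm_num) (by norm_num))
  have hζs : zetaFactor s * gaussLSeries (angular 0) s = D₀ s := hζ hs
  have hDs : gaussLSeries f s = (s - 1) * dslope D 1 s := by
    rw [hfD hs, ← smul_eq_mul, sub_smul_dslope, hD1, sub_zero]
  have hne : zetaFactor s ≠ 0 := fun h ↦ hs.ne' (re_eq_one_of_zetaFactor_eq_zero h)
  have hfactor := zetaFactor_eq s
  rw [eq_div_iff (right_ne_zero_of_mul (hfactor ▸ hne))]
  calc _ = gaussLSeries f s * gaussLSeries (angular 0) s * dslope zetaFactor 1 s :=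
        congrArg (· * _) (gaussLSeries_divisorSum_mul_angular_zero hf1 hs)
    _ = D₀ s * dslope D 1 s := by
        rw [← hζs, hfactor, hDs]
        ring

end Quadratic

section HeckeCharacter

variable {m : GaussianInt}

lemma heckeChar_quadratic {χ : MulChar (Residue m) ℂ} (hχ : χ ^ 2 = 1) (z : GaussianInt) :
    heckeChar χ 0 z = 0 ∨ heckeChar χ 0 z = 1 ∨ heckeChar χ 0 z = -1 := by
  rcases eq_or_ne z 0 with rfl | hz
  · simp
  rw [heckeChar_apply, angular_of_ne_zero 0 hz, zpow_zero, mul_one]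
  by_cases hunit : IsUnit (residue m z)
  · refine .inr (sq_eq_one_iff.mp ?_)
    rw [← MulChar.pow_apply' _ two_ne_zero, hχ, MulChar.one_apply hunit]
  · exact .inl (χ.map_nonunit hunit)

lemma hasSimplePole_primeSum_heckeChar_of_quadratic (hm : m ≠ 0) {χ : MulChar (Residue m) ℂ}
    (hχ : χ ≠ 1) (hχ2 : χ ^ 2 = 1) : HasSimplePole (primeSum (heckeChar χ 0)) 1 0 := by
  by_cases hu : ∀ u : GaussianIntˣ, heckeChar χ 0 u = 1
  · have := finite_residue hm
    have := Fintype.ofFinite (Residue m)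
    obtain ⟨D, hD, hDL⟩ := continuesTo_zero χ hm (MulChar.sum_eq_zero_of_ne_one hχ)
    have hopen : IsOpen {s : ℂ | 0 < s.re} := isOpen_lt continuous_const continuous_re
    have := hasSimplePole_primeSum (norm_heckeChar_le hm χ 0) one_re
      (hD.analyticAt (hopen.mem_nhds (by simp)))
      (continuation_one_ne_zero_of_quadratic hu (heckeChar_quadratic hχ2) hD hDL) (n := 0)
      (eventually_nhdsWithin_of_forall fun s hs ↦ by rw [zpow_zero, one_mul]; exact hDL hs)
    simpa using this
  · obtain ⟨u, hu⟩ := not_forall.mp hu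
    refine ⟨0, tendsto_const_nhds.congr fun s ↦ ?_⟩
    rw [primeSum_eq_zero hu]
    simp

theorem hasSimplePole_primeSum_heckeChar_zero (hm : m ≠ 0) {χ : MulChar (Residue m) ℂ} {k : ℤ}
    {t : ℝ} (h : ¬(χ = 1 ∧ k = 0 ∧ t = 0)) :
    HasSimplePole (primeSum (heckeChar χ k)) (1 + t * I) 0 := by
  by_cases hsq : χ ^ 2 = 1 ∧ 2 * k = 0 ∧ 2 * t = 0
  · obtain ⟨hχ2, hk, ht⟩ := hsq
    obtain rfl : k = 0 := by lia
    obtain rfl : t = 0 := by linarith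
    simpa using hasSimplePole_primeSum_heckeChar_of_quadratic hm (by simpa using h) hχ2
  · obtain ⟨n, hn⟩ := exists_hasSimplePole_primeSum_heckeChar hm h
    obtain ⟨n₂, hn₂⟩ := exists_hasSimplePole_primeSum_heckeChar hm hsq
    have hcard : (0 : ℝ) < Nat.card GaussianIntˣ := by exact_mod_cast Nat.card_pos
    have hineq := three_four_one (f := heckeChar χ k) (t := t) (norm_heckeChar_le hm χ k)
      (r₀ := Nat.card GaussianIntˣ) (r₁ := -(Nat.card GaussianIntˣ * n))
      (r₂ := -(Nat.card GaussianIntˣ * n₂))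
      (by exact_mod_cast hasSimplePole_primeSum_one) (by exact_mod_cast hn)
      (by rw [heckeChar_sq]; exact_mod_cast hn₂)
    have : 4 * n + n₂ ≤ 3 := by
      have : (4 * n + n₂ : ℝ) ≤ 3 := le_of_mul_le_mul_left (by linarith) hcard
      exact_mod_cast this
    obtain rfl : n = 0 := by lia
    simpa using hn

open scoped Classical in
theorem extendsToBoundary_primeSum_heckeChar (hm : m ≠ 0) (χ : MulChar (Residue m) ℂ) (k : ℤ) :
    ExtendsToBoundary fun s ↦ primeSum (heckeChar χ k) s -
      (if χ = 1 ∧ k = 0 then (Nat.card GaussianIntˣ : ℂ) else 0) / (s - 1) := by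
  refine extendsToBoundary_of_tendsto ?_ fun s₀ hs₀ ↦ ?_
  · exact (continuousOn_primeSum (norm_heckeChar_le hm χ k)).sub (continuousOn_const.div
      (continuousOn_id.sub continuousOn_const) fun s hs ↦
        sub_ne_zero.mpr (ne_of_one_lt_re one_re hs))
  obtain ⟨t, rfl⟩ : ∃ t : ℝ, s₀ = 1 + t * I := ⟨s₀.im, by rw [← ofReal_one, ← hs₀, re_add_im]⟩
  rcases eq_or_ne t 0 with rfl | ht
  · rw [ofReal_zero, zero_mul, add_zero]
    split_ifs with h
    · obtain ⟨rfl, rfl⟩ := h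
      exact hasSimplePole_primeSum_heckeChar_one hm
    · have := hasSimplePole_primeSum_heckeChar_zero hm (χ := χ) (k := k) (t := 0) (by simpa using h)
      simpa [HasSimplePole] using this
  · obtain ⟨ℓ, hℓ⟩ := hasSimplePole_primeSum_heckeChar_zero hm (χ := χ) (k := k) (t := t)
      fun h ↦ ht h.2.2
    simp only [zero_div, sub_zero] at hℓ
    have hcont : ContinuousAt (fun s : ℂ ↦ (if χ = 1 ∧ k = 0 then
        (Nat.card GaussianIntˣ : ℂ) else 0) / (s - 1)) (1 + t * I) :=
      continuousAt_const.div (by fun_prop) (by simpa using ht)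
    exact ⟨_, hℓ.sub (hcont.tendsto.mono_left nhdsWithin_le_nhds)⟩

end HeckeCharacter

end Nonvanishing

section Equidistribution

open Filter Topology Set MeasureTheory

lemma tendsto_of_topologicalClosure_span_eq_top {β 𝕜 E F : Type*} [NontriviallyNormedField 𝕜]
    [SeminormedAddCommGroup E] [NormedSpace 𝕜 E] [SeminormedAddCommGroup F] [NormedSpace 𝕜 F]
    {l : Filter β} {L : β → E →L[𝕜] F} {L₀ : E →L[𝕜] F} {C : ℝ} (hL : ∀ᶠ b in l, ‖L b‖ ≤ C)
    {S : Set E} (hS : (Submodule.span 𝕜 S).topologicalClosure = ⊤)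
    (h : ∀ f ∈ S, Tendsto (fun b ↦ L b f) l (𝓝 (L₀ f))) (f : E) :
    Tendsto (fun b ↦ L b f) l (𝓝 (L₀ f)) := by
  have hspan (g : E) (hg : g ∈ Submodule.span 𝕜 S) : Tendsto (fun b ↦ L b g) l (𝓝 (L₀ g)) := by
    induction hg using Submodule.span_induction with
    | mem g hg => exact h g hg
    | zero => simpa using tendsto_const_nhds
    | add g₁ g₂ _ _ h₁ h₂ => simpa using h₁.add h₂
    | smul c g _ hg => simpa using hg.const_smul c
  have hf : f ∈ closure (Submodule.span 𝕜 S : Set E) := by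
    rw [← Submodule.topologicalClosure_coe, hS]
    trivial
  rw [Metric.tendsto_nhds]
  intro ε hε
  have hden : 0 < |C| + ‖L₀‖ + 1 := by positivity
  obtain ⟨g, hg, hfg⟩ := Metric.mem_closure_iff.mp hf (ε / 2 / (|C| + ‖L₀‖ + 1)) (by positivity)
  rw [dist_eq_norm, lt_div_iff₀ hden] at hfg
  filter_upwards [hL, Metric.tendsto_nhds.mp (hspan g hg) (ε / 2) (half_pos hε)] with b hb hgb
  rw [dist_eq_norm] at hgb ⊢
  calc ‖L b f - L₀ f‖ = ‖L b (f - g) - L₀ (f - g) + (L b g - L₀ g)‖ := by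
        rw [map_sub, map_sub]
        congr 1
        abel
    _ ≤ ‖L b (f - g)‖ + ‖L₀ (f - g)‖ + ‖L b g - L₀ g‖ :=
        (norm_add_le _ _).trans (add_le_add_left (norm_sub_le _ _) _)
    _ ≤ |C| * ‖f - g‖ + ‖L₀‖ * ‖f - g‖ + ‖L b g - L₀ g‖ := by
        gcongr
        · exact (L b).le_of_opNorm_le (hb.trans (le_abs_self C)) _
        · exact L₀.le_opNorm _
    _ < ε := by nlinarith [norm_nonneg (f - g)]

section Summatory

variable {ι E : Type*} [AddCommMonoid E] [TopologicalSpace E] {x : ι → ℝ} {X : ℝ}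

lemma summable_ite_le_of_finite (hx : {i | x i ≤ X}.Finite) (a : ι → E) :
    Summable fun i ↦ if x i ≤ X then a i else 0 :=
  summable_of_hasFiniteSupport (hx.subset fun i hi ↦ by
    by_contra h
    exact hi (if_neg h))

lemma summatory_eq_sum (hx : {i | x i ≤ X}.Finite) (a : ι → E) :
    summatory a x X = ∑ i ∈ hx.toFinset, a i := by
  rw [summatory, tsum_eq_sum (s := hx.toFinset) fun i hi ↦ if_neg (by simpa using hi)]
  exact Finset.sum_congr rfl fun i hi ↦ if_pos (by simpa using hi)

end Summatory

variable {ι K : Type*} [TopologicalSpace K] [MeasurableSpace K]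

/-- The points `d i`, ordered by their sizes `x i` and counted with the weights `w i`, are
asymptotically distributed like the measure `μ`. -/
def EquidistributedBy (w x : ι → ℝ) (d : ι → K) (μ : Measure K) : Prop :=
  ∀ φ : C(K, ℝ), Tendsto (fun X ↦ summatory (fun i ↦ φ (d i) * w i) x X / X) atTop
    (𝓝 (∫ θ, φ θ ∂μ))

variable [CompactSpace K] [BorelSpace K]

/-- Integration against `μ`, as a continuous linear functional on `C(K, ℂ)`. -/
def integralFunctional (μ : Measure K) [IsFiniteMeasure μ] : C(K, ℂ) →L[ℂ] ℂ :=
  LinearMap.mkContinuous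
    { toFun φ := ∫ θ, φ θ ∂μ
      map_add' φ ψ := integral_add (φ.continuous.integrable_of_hasCompactSupport
        (HasCompactSupport.of_compactSpace _)) (ψ.continuous.integrable_of_hasCompactSupport
        (HasCompactSupport.of_compactSpace _))
      map_smul' c φ := integral_smul c φ }
    (μ.real univ) fun φ ↦ by
      rw [mul_comm]
      exact norm_integral_le_of_norm_le_const (.of_forall φ.norm_coe_le_norm)

variable {w x : ι → ℝ} {d : ι → K} {μ : Measure K} [IsFiniteMeasure μ]

lemma tendsto_summatory_of_topologicalClosure_span_eq_top (hx : ∀ X, {i | x i ≤ X}.Finite)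
    (hw : ∀ i, 0 ≤ w i) {C : ℝ} (hC : ∀ᶠ X in atTop, summatory w x X / X ≤ C)
    {S : Set C(K, ℂ)} (hS : (Submodule.span ℂ S).topologicalClosure = ⊤)
    (h : ∀ φ ∈ S, Tendsto (fun X : ℝ ↦ summatory (fun i ↦ φ (d i) * w i) x X / X) atTop
      (𝓝 (∫ θ, φ θ ∂μ))) (φ : C(K, ℂ)) :
    Tendsto (fun X : ℝ ↦ summatory (fun i ↦ φ (d i) * w i) x X / X) atTop (𝓝 (∫ θ, φ θ ∂μ)) := by
  let L (X : ℝ) : C(K, ℂ) →L[ℂ] ℂ :=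
    ∑ i ∈ (hx X).toFinset, ((w i / X : ℝ) : ℂ) • ContinuousMap.evalCLM ℂ (d i)
  have hL_apply (X : ℝ) (φ : C(K, ℂ)) :
      L X φ = summatory (fun i ↦ φ (d i) * w i) x X / X := by
    simp only [L, summatory_eq_sum (hx X), Finset.sum_div, sum_apply, smul_apply,
      ContinuousMap.evalCLM_apply, smul_eq_mul, Complex.ofReal_div]
    exact Finset.sum_congr rfl fun i _ ↦ by ring
  have hL_norm : ∀ᶠ X in atTop, ‖L X‖ ≤ C := by
    filter_upwards [hC, eventually_gt_atTop 0] with X hX hX0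
    rw [summatory_eq_sum (hx X), Finset.sum_div] at hX
    have hterm (i : ι) : 0 ≤ w i / X := div_nonneg (hw i) hX0.le
    refine ContinuousLinearMap.opNorm_le_bound _ ((Finset.sum_nonneg fun i _ ↦ hterm i).trans hX)
      fun φ ↦ ?_
    simp only [L, sum_apply, smul_apply, ContinuousMap.evalCLM_apply]
    refine (norm_sum_le _ _).trans ((Finset.sum_le_sum fun i _ ↦ ?_).trans
      ((Finset.sum_mul _ _ _).symm.trans_le (mul_le_mul_of_nonneg_right hX (norm_nonneg φ))))
    rw [norm_smul, Complex.norm_of_nonneg (hterm i)]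
    exact mul_le_mul_of_nonneg_left (φ.norm_coe_le_norm _) (hterm i)
  exact (tendsto_of_topologicalClosure_span_eq_top (L₀ := integralFunctional μ) hL_norm hS
    (fun φ hφ ↦ (h φ hφ).congr fun X ↦ (hL_apply X φ).symm) φ).congr (hL_apply · φ)

theorem equidistributedBy_of_topologicalClosure_span_eq_top (hx : ∀ X, {i | x i ≤ X}.Finite)
    (hw : ∀ i, 0 ≤ w i) {C : ℝ} (hC : ∀ᶠ X in atTop, summatory w x X / X ≤ C)
    {S : Set C(K, ℂ)} (hS : (Submodule.span ℂ S).topologicalClosure = ⊤)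
    (h : ∀ φ ∈ S, Tendsto (fun X : ℝ ↦ summatory (fun i ↦ φ (d i) * w i) x X / X) atTop
      (𝓝 (∫ θ, φ θ ∂μ))) :
    EquidistributedBy w x d μ := by
  intro φ
  let φc : C(K, ℂ) := ⟨fun θ ↦ φ θ, Complex.continuous_ofReal.comp φ.continuous⟩
  have hφ := tendsto_summatory_of_topologicalClosure_span_eq_top hx hw hC hS h φc
  simp only [φc, ContinuousMap.coe_mk, integral_complex_ofReal] at hφ
  refine ((Complex.continuous_re.tendsto _).comp hφ).congr fun X ↦ ?_
  simp [summatory_eq_sum (hx X), ← Complex.ofReal_mul, ← Complex.ofReal_sum,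
    ← Complex.ofReal_div]

end Equidistribution

section VaryingSizes

open Filter Topology Set MeasureTheory

variable {ι K : Type*} [TopologicalSpace K] [CompactSpace K]

lemma exists_finset_partition_of_unity [T2Space K] (G : C(K, ℝ)) {ε : ℝ} (hε : 0 < ε) :
    ∃ (t : Finset K) (ρ : K → C(K, ℝ)), (∀ j θ, 0 ≤ ρ j θ) ∧ (∀ θ, ∑ j ∈ t, ρ j θ = 1) ∧
      ∀ j θ, ρ j θ ≠ 0 → |G θ - G j| < ε := by
  obtain ⟨ρ, hρ⟩ := PartitionOfUnity.exists_isSubordinate isClosed_univ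
    (fun j : K ↦ {θ | |G θ - G j| < ε}) (fun j ↦ isOpen_lt (by fun_prop) continuous_const)
    fun θ _ ↦ mem_iUnion.mpr ⟨θ, by simpa using hε⟩
  refine ⟨(ρ.locallyFinite.finite_nonempty_of_compact).toFinset, ρ, ρ.nonneg, fun θ ↦ ?_,
    fun j θ h ↦ hρ j (subset_tsupport _ h)⟩
  rw [← ρ.sum_eq_one (mem_univ θ)]
  refine (finsum_eq_sum_of_support_subset _ fun j hj ↦ ?_).symm
  exact (Finite.mem_toFinset _).mpr ⟨θ, hj⟩

variable {w x : ι → ℝ} {d : ι → K} {G : C(K, ℝ)}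

lemma finite_div_le (hx : ∀ X, {i | x i ≤ X}.Finite) (hG : ∀ θ, 0 < G θ) (X : ℝ) :
    {i | x i / G (d i) ≤ X}.Finite := by
  refine (hx (|X| * ‖G‖)).subset fun i hi ↦ ?_
  calc x i ≤ X * G (d i) := (div_le_iff₀ (hG _)).mp hi
    _ ≤ |X| * ‖G‖ := mul_le_mul (le_abs_self X)
        ((le_abs_self _).trans (G.norm_coe_le_norm _)) (hG _).le (abs_nonneg X)

section Comparison

variable {t : Finset K} {ρ : K → C(K, ℝ)} (hρ₀ : ∀ j θ, 0 ≤ ρ j θ)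
  (hρ₁ : ∀ θ, ∑ j ∈ t, ρ j θ = 1) {c : K → ℝ} (hx : ∀ X, {i | x i ≤ X}.Finite)
  (hw : ∀ i, 0 ≤ w i) (hG : ∀ θ, 0 < G θ) {X : ℝ} (hX : 0 ≤ X)
include hρ₀ hρ₁ hx hw hG hX

lemma sum_summatory_le_summatory_div (hc : ∀ j θ, ρ j θ ≠ 0 → c j ≤ G θ) :
    ∑ j ∈ t, summatory (fun i ↦ ρ j (d i) * w i) x (c j * X) ≤
      summatory w (fun i ↦ x i / G (d i)) X := by
  simp only [summatory]
  rw [← Summable.tsum_finsetSum fun j _ ↦ summable_ite_le_of_finite (hx _) _]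
  refine Summable.tsum_le_tsum (fun i ↦ ?_)
    (summable_sum fun j _ ↦ summable_ite_le_of_finite (hx _) _)
    (summable_ite_le_of_finite (finite_div_le hx hG X) _)
  calc ∑ j ∈ t, (if x i ≤ c j * X then ρ j (d i) * w i else 0)
      ≤ ∑ j ∈ t, ρ j (d i) * if x i / G (d i) ≤ X then w i else 0 :=
        Finset.sum_le_sum fun j _ ↦ ?_
    _ = if x i / G (d i) ≤ X then w i else 0 := by rw [← Finset.sum_mul, hρ₁, one_mul]
  rcases eq_or_ne (ρ j (d i)) 0 with h0 | h0
  · simp [h0]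
  split_ifs with hi hi'
  · rfl
  · refine absurd ((div_le_iff₀' (hG _)).mpr (hi.trans ?_)) hi'
    exact mul_le_mul_of_nonneg_right (hc j _ h0) hX
  · exact mul_nonneg (hρ₀ _ _) (hw i)
  · simp

lemma summatory_div_le_sum_summatory (hc : ∀ j θ, ρ j θ ≠ 0 → G θ ≤ c j) :
    summatory w (fun i ↦ x i / G (d i)) X ≤
      ∑ j ∈ t, summatory (fun i ↦ ρ j (d i) * w i) x (c j * X) := by
  simp only [summatory]
  rw [← Summable.tsum_finsetSum fun j _ ↦ summable_ite_le_of_finite (hx _) _]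
  refine Summable.tsum_le_tsum (fun i ↦ ?_)
    (summable_ite_le_of_finite (finite_div_le hx hG X) _)
    (summable_sum fun j _ ↦ summable_ite_le_of_finite (hx _) _)
  calc (if x i / G (d i) ≤ X then w i else 0)
      = ∑ j ∈ t, ρ j (d i) * if x i / G (d i) ≤ X then w i else 0 := by
        rw [← Finset.sum_mul, hρ₁, one_mul]
    _ ≤ ∑ j ∈ t, (if x i ≤ c j * X then ρ j (d i) * w i else 0) :=
        Finset.sum_le_sum fun j _ ↦ ?_
  rcases eq_or_ne (ρ j (d i)) 0 with h0 | h0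
  · simp [h0]
  split_ifs with hi hi'
  · rfl
  · refine absurd (((div_le_iff₀' (hG _)).mp hi).trans ?_) hi'
    exact mul_le_mul_of_nonneg_right (hc j _ h0) hX
  · simpa using mul_nonneg (hρ₀ _ _) (hw i)
  · simp

end Comparison

variable [MeasurableSpace K] [BorelSpace K] {μ : Measure K} [IsFiniteMeasure μ]

lemma EquidistributedBy.tendsto_sum_summatory (h : EquidistributedBy w x d μ) (t : Finset K)
    (ρ : K → C(K, ℝ)) {c : K → ℝ} (hc : ∀ j, 0 < c j) :
    Tendsto (fun X ↦ (∑ j ∈ t, summatory (fun i ↦ ρ j (d i) * w i) x (c j * X)) / X) atTop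
      (𝓝 (∫ θ, ∑ j ∈ t, ρ j θ * c j ∂μ)) := by
  rw [integral_finsetSum _ fun j _ ↦ ((ρ j).continuous.mul_const _).integrable_of_hasCompactSupport
    (.of_compactSpace _)]
  simp only [integral_mul_const, Finset.sum_div]
  refine tendsto_finsetSum _ fun j _ ↦ ?_
  refine (((h (ρ j)).comp (tendsto_id.const_mul_atTop (hc j))).mul_const (c j)).congr fun X ↦ ?_
  simp only [Function.comp_apply, id]
  rw [div_mul_eq_mul_div, mul_comm (c j) X, mul_div_mul_right _ _ (hc j).ne']

lemma abs_integral_sum_sub_integral_le {t : Finset K} {ρ : K → C(K, ℝ)} (hρ₀ : ∀ j θ, 0 ≤ ρ j θ)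
    (hρ₁ : ∀ θ, ∑ j ∈ t, ρ j θ = 1) {c : K → ℝ} {δ : ℝ}
    (hc : ∀ j θ, ρ j θ ≠ 0 → |c j - G θ| ≤ δ) :
    |∫ θ, ∑ j ∈ t, ρ j θ * c j ∂μ - ∫ θ, G θ ∂μ| ≤ δ * μ.real univ := by
  have hcont : Continuous fun θ ↦ ∑ j ∈ t, ρ j θ * c j := by fun_prop
  rw [← integral_sub (hcont.integrable_of_hasCompactSupport (.of_compactSpace _))
    (G.continuous.integrable_of_hasCompactSupport (.of_compactSpace _)),
    ← Real.norm_eq_abs]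
  refine norm_integral_le_of_norm_le_const (.of_forall fun θ ↦ ?_)
  calc ‖∑ j ∈ t, ρ j θ * c j - G θ‖ = ‖∑ j ∈ t, ρ j θ * (c j - G θ)‖ := by
        simp only [mul_sub, Finset.sum_sub_distrib, ← Finset.sum_mul, hρ₁, one_mul]
    _ ≤ ∑ j ∈ t, ρ j θ * δ := (norm_sum_le _ _).trans (Finset.sum_le_sum fun j _ ↦ ?_)
    _ = δ := by rw [← Finset.sum_mul, hρ₁, one_mul]
  rcases eq_or_ne (ρ j θ) 0 with h0 | h0
  · simp [h0]
  · rw [norm_mul, Real.norm_of_nonneg (hρ₀ j θ)]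
    exact mul_le_mul_of_nonneg_left (hc j θ h0) (hρ₀ j θ)

lemma exists_pos_lt_mul_lt {g : ℝ} (hg : 0 < g) (M : ℝ) {η : ℝ} (hη : 0 < η) :
    ∃ ε > 0, ε < g ∧ M * ε < η := by
  have hlim : Tendsto (fun ε : ℝ ↦ M * ε) (𝓝[>] 0) (𝓝 0) :=
    (Continuous.tendsto' (by fun_prop) _ _ (by simp)).mono_left nhdsWithin_le_nhds
  obtain ⟨ε, hε, hεη⟩ :=
    ((eventually_mem_set.mpr (Ioo_mem_nhdsGT hg)).and (hlim.eventually_lt_const hη)).exists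
  exact ⟨ε, hε.1, hε.2, hεη⟩

-- On each piece of a fine partition of unity `G` is nearly constant, and dividing the sizes by a
-- constant only rescales `X`.
theorem EquidistributedBy.tendsto_summatory_div [T2Space K] (h : EquidistributedBy w x d μ)
    (hx : ∀ X, {i | x i ≤ X}.Finite) (hw : ∀ i, 0 ≤ w i) (hG : ∀ θ, 0 < G θ) :
    Tendsto (fun X ↦ summatory w (fun i ↦ x i / G (d i)) X / X) atTop (𝓝 (∫ θ, G θ ∂μ)) := by
  obtain ⟨g, hg, hgG⟩ := isCompact_univ.exists_forall_le' G.continuous.continuousOn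
    (fun θ _ ↦ hG θ)
  refine tendsto_order.mpr ⟨fun b hb ↦ ?_, fun b hb ↦ ?_⟩
  all_goals
    obtain ⟨ε, hε, hεg, hεb⟩ := exists_pos_lt_mul_lt hg (2 * μ.real univ) (sub_pos.mpr hb)
    obtain ⟨t, ρ, hρ₀, hρ₁, hρG⟩ := exists_finset_partition_of_unity G hε
  · have hc (j θ) (hj : ρ j θ ≠ 0) := abs_lt.mp (hρG j θ hj)
    have hlim := h.tendsto_sum_summatory t ρ (c := fun j ↦ G j - ε)
      fun j ↦ sub_pos.mpr (hεg.trans_le (hgG j trivial))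
    have hinteg := abs_le.mp <| abs_integral_sum_sub_integral_le (μ := μ) (G := G) (δ := 2 * ε)
      (c := fun j ↦ G j - ε) hρ₀ hρ₁ fun j θ hj ↦ abs_le.mpr (by grind)
    filter_upwards [hlim.eventually_const_lt (show b < _ by linarith), eventually_gt_atTop 0]
      with X hX hX0
    refine hX.trans_le (div_le_div_of_nonneg_right ?_ hX0.le)
    exact sum_summatory_le_summatory_div hρ₀ hρ₁ hx hw hG hX0.le fun j θ hj ↦ by grind
  · have hc (j θ) (hj : ρ j θ ≠ 0) := abs_lt.mp (hρG j θ hj)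
    have hlim := h.tendsto_sum_summatory t ρ (c := fun j ↦ G j + ε)
      fun j ↦ add_pos (hG j) hε
    have hinteg := abs_le.mp <| abs_integral_sum_sub_integral_le (μ := μ) (G := G) (δ := 2 * ε)
      (c := fun j ↦ G j + ε) hρ₀ hρ₁ fun j θ hj ↦ abs_le.mpr (by grind)
    filter_upwards [hlim.eventually_lt_const (show _ < b by linarith), eventually_gt_atTop 0]
      with X hX hX0
    refine (div_le_div_of_nonneg_right ?_ hX0.le).trans_lt hX
    exact summatory_div_le_sum_summatory hρ₀ hρ₁ hx hw hG hX0.le fun j θ hj ↦ by grind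

end VaryingSizes

section PrimeDistribution

open Filter Topology Set MeasureTheory Complex
open GaussianInt (toComplex)
open scoped NNReal

lemma sum_mulChar_apply {M : Type*} [CommMonoid M] [Finite M] [Fintype (MulChar M ℂ)]
    [DecidableEq M] (a : M) :
    ∑ χ : MulChar M ℂ, χ a = if a = 1 then (Nat.card Mˣ : ℂ) else 0 := by
  split_ifs with ha
  · simp [ha, ← MulChar.card_eq_card_units_of_hasEnoughRootsOfUnity M ℂ]
  · obtain ⟨ψ, hψ⟩ := MulChar.exists_apply_ne_one_of_hasEnoughRootsOfUnity M ℂ ha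
    refine eq_zero_of_mul_eq_self_left hψ ?_
    simp only [Finset.mul_sum, ← MulChar.mul_apply]
    exact Fintype.sum_bijective _ (Group.mulLeft_bijective ψ) _ _ fun _ ↦ rfl

lemma sum_mulChar_inv_mul {M : Type*} [CommMonoid M] [Finite M] [Fintype (MulChar M ℂ)]
    [DecidableEq M] (u : Mˣ) (b : M) :
    ∑ χ : MulChar M ℂ, χ ↑u⁻¹ * χ b = if b = u then (Nat.card Mˣ : ℂ) else 0 := by
  simp only [← map_mul, sum_mulChar_apply, Units.inv_mul_eq_one, eq_comm]

variable {m : GaussianInt}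

lemma extendsToBoundary_primeSum_one : ExtendsToBoundary fun s ↦
    dirichletSum (fun p : GaussPrime ↦ Real.log (gaussNorm p)) (fun p ↦ gaussNorm p) s -
      (Nat.card GaussianIntˣ : ℝ) / (s - 1) := by
  refine (extendsToBoundary_primeSum_heckeChar one_ne_zero 1 0).congr fun s _ ↦ ?_
  simp only [primeSum, heckeChar_one_of_isCoprime isCoprime_one_right, and_self, if_true,
    ofReal_natCast, angular_of_ne_zero 0 (Subtype.prop _ : Prime _).ne_zero, zpow_zero, one_mul]

open scoped Classical in
lemma tendsto_summatory_heckeChar (hm : m ≠ 0) (χ : MulChar (Residue m) ℂ) (k : ℤ) :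
    Tendsto (fun X : ℝ ↦ summatory (fun p : GaussPrime ↦ heckeChar χ k p * Real.log (gaussNorm p))
      (fun p ↦ gaussNorm p) X / X) atTop
      (𝓝 (if χ = 1 ∧ k = 0 then (Nat.card GaussianIntˣ : ℂ) else 0)) :=
  wiener_ikehara_complex one_le_gaussNorm_prime (fun _ ↦ summable_log_mul_gaussNorm_rpow)
    (norm_mul_log_le fun p ↦ norm_heckeChar_le hm χ k p) extendsToBoundary_primeSum_one
    (extendsToBoundary_primeSum_heckeChar hm χ k)

lemma finite_gaussNorm_prime_le (X : ℝ) : {p : GaussPrime | gaussNorm p ≤ X}.Finite :=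
  (finite_gaussNorm_le X).preimage Subtype.val_injective.injOn

open scoped Classical in
/-- The logarithm of the norm of a Gaussian prime in the residue class of `a` modulo `m`, and zero
on the other Gaussian primes. -/
def classWeight (m a : GaussianInt) (p : GaussPrime) : ℝ :=
  if residue m p = residue m a then Real.log (gaussNorm p) else 0

lemma classWeight_nonneg (m a : GaussianInt) (p : GaussPrime) : 0 ≤ classWeight m a p := by
  unfold classWeight
  split_ifs
  exacts [log_gaussNorm_prime_nonneg p, le_rfl]

lemma angular_mul_classWeight {a : GaussianInt} [Finite (Residue m)]
    [Fintype (MulChar (Residue m) ℂ)] (u : (Residue m)ˣ) (hu : u = residue m a) (k : ℤ)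
    (p : GaussPrime) :
    angular k p * classWeight m a p = (Nat.card (Residue m)ˣ : ℂ)⁻¹ *
      ∑ χ : MulChar (Residue m) ℂ, χ ↑u⁻¹ * (heckeChar χ k p * Real.log (gaussNorm p)) := by
  classical
  have hcard : (Nat.card (Residue m)ˣ : ℂ) ≠ 0 := by exact_mod_cast Nat.card_pos.ne'
  have horth := sum_mulChar_inv_mul u (residue m p)
  simp only [heckeChar_apply, ← mul_assoc]
  rw [← Finset.sum_mul, ← Finset.sum_mul, horth, hu, classWeight]
  split_ifs
  · field_simp
  · simp

lemma tendsto_summatory_angular_mul_classWeight {a : GaussianInt} (hm : m ≠ 0)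
    (ha : IsCoprime a m) (k : ℤ) :
    Tendsto (fun X : ℝ ↦ summatory (fun p : GaussPrime ↦ angular k p * classWeight m a p)
      (fun p ↦ gaussNorm p) X / X) atTop
      (𝓝 (if k = 0 then Nat.card GaussianIntˣ / Nat.card (Residue m)ˣ else 0)) := by
  classical
  have := finite_residue hm
  have := Fintype.ofFinite (MulChar (Residue m) ℂ)
  obtain ⟨u, hu⟩ := isUnit_residue_iff.mpr ha
  have hlim := (tendsto_finsetSum Finset.univ fun χ : MulChar (Residue m) ℂ ↦ fun _ ↦
    (tendsto_summatory_heckeChar hm χ k).const_mul (χ ↑u⁻¹)).const_mul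
      (Nat.card (Residue m)ˣ : ℂ)⁻¹
  convert hlim using 2 with X
  · simp only [angular_mul_classWeight u hu, summatory_eq_sum (finite_gaussNorm_prime_le X)]
    rw [← Finset.mul_sum, Finset.sum_comm, mul_div_assoc, Finset.sum_div]
    simp only [← Finset.mul_sum, mul_div_assoc]
  · by_cases hk : k = 0
    · simp [hk, div_eq_inv_mul]
    · simp [hk]

/-- The direction of a nonzero Gaussian integer, as a point of `ℝ / ℤ`. -/
def direction (z : GaussianInt) : UnitAddCircle := ↑(arg (toComplex z) / (2 * Real.pi))

lemma toCircle_direction {z : GaussianInt} (hz : z ≠ 0) :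
    (AddCircle.toCircle (direction z) : ℂ) = toComplex z / ‖toComplex z‖ := by
  have hnorm : (‖toComplex z‖ : ℂ) ≠ 0 := by
    simpa using GaussianInt.toComplex_eq_zero.not.mpr hz
  rw [direction, AddCircle.toCircle_apply_mk, div_one,
    mul_div_cancel₀ _ Real.two_pi_pos.ne', Circle.coe_exp, eq_div_iff hnorm, mul_comm,
    norm_mul_exp_arg_mul_I]

lemma fourier_direction {z : GaussianInt} (hz : z ≠ 0) (k : ℤ) :
    fourier k (direction z) = angular k z := by
  rw [fourier_apply, AddCircle.toCircle_zsmul, Circle.coe_zpow, toCircle_direction hz,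
    angular_of_ne_zero k hz]

lemma integral_fourier (k : ℤ) :
    ∫ θ : UnitAddCircle, fourier k θ ∂AddCircle.haarAddCircle = if k = 0 then 1 else 0 := by
  split_ifs with hk
  · simp [hk]
  · exact integral_eq_zero_of_add_right_eq_neg (fourier_add_half_inv_index hk one_pos)

variable {a : GaussianInt}

lemma tendsto_summatory_classWeight (hm : m ≠ 0) (ha : IsCoprime a m) :
    Tendsto (fun X ↦ summatory (classWeight m a) (fun p ↦ gaussNorm p) X / X) atTop
      (𝓝 (Nat.card GaussianIntˣ / Nat.card (Residue m)ˣ)) := by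
  have h := (continuous_re.tendsto _).comp (tendsto_summatory_angular_mul_classWeight hm ha 0)
  convert h using 2 with X
  · simp [summatory_eq_sum (finite_gaussNorm_prime_le X),
      angular_of_ne_zero 0 (Subtype.prop _ : Prime _).ne_zero, ← ofReal_sum, ← ofReal_div]
  · simp [← ofReal_natCast, ← ofReal_div]

theorem equidistributedBy_direction (hm : m ≠ 0) (ha : IsCoprime a m) :
    EquidistributedBy (classWeight m a) (fun p ↦ gaussNorm p) (fun p ↦ direction p)
      ((Nat.card GaussianIntˣ / Nat.card (Residue m)ˣ : ℝ≥0) • AddCircle.haarAddCircle) := by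
  refine equidistributedBy_of_topologicalClosure_span_eq_top finite_gaussNorm_prime_le
    (classWeight_nonneg m a)
    ((tendsto_summatory_classWeight hm ha).eventually_le_const (lt_add_one _))
    span_fourier_closure_eq_top ?_
  rintro _ ⟨k, rfl⟩
  convert tendsto_summatory_angular_mul_classWeight hm ha k using 2
  · simp only [fourier_direction (Subtype.prop _ : Prime _).ne_zero]
  · rw [integral_smul_nnreal_measure, integral_fourier]
    split_ifs <;> simp [NNReal.smul_def]

lemma max_sq_re_im_pos (u : Circle) : 0 < max ((u : ℂ).re ^ 2) ((u : ℂ).im ^ 2) := by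
  have h : (u : ℂ).re ^ 2 + (u : ℂ).im ^ 2 = 1 := by
    have := u.normSq_coe
    rwa [normSq_apply, ← sq, ← sq] at this
  have := le_max_left ((u : ℂ).re ^ 2) ((u : ℂ).im ^ 2)
  have := le_max_right ((u : ℂ).re ^ 2) ((u : ℂ).im ^ 2)
  linarith

/-- The ratio of the norm to the square of the sup norm, as a function of the direction: it turns
counting by norm into counting in boxes. -/
def boxRatio : C(UnitAddCircle, ℝ) where
  toFun θ := (max ((AddCircle.toCircle θ : ℂ).re ^ 2) ((AddCircle.toCircle θ : ℂ).im ^ 2))⁻¹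
  continuous_toFun := by
    have h : Continuous fun θ : UnitAddCircle ↦ (AddCircle.toCircle θ : ℂ) :=
      continuous_subtype_val.comp AddCircle.continuous_toCircle
    exact (((continuous_re.comp h).pow 2).max ((continuous_im.comp h).pow 2)).inv₀
      fun θ ↦ (max_sq_re_im_pos _).ne'

lemma boxRatio_pos (θ : UnitAddCircle) : 0 < boxRatio θ := inv_pos.mpr (max_sq_re_im_pos _)

lemma integral_boxRatio_pos : 0 < ∫ θ, boxRatio θ ∂AddCircle.haarAddCircle :=
  boxRatio.continuous.integral_pos_of_hasCompactSupport_nonneg_nonzero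
    (.of_compactSpace _) (fun θ ↦ (boxRatio_pos θ).le) (boxRatio_pos 0).ne'

/-- The square of the sup norm of a Gaussian integer. -/
def boxNorm (z : GaussianInt) : ℝ := max ((z.re : ℝ) ^ 2) ((z.im : ℝ) ^ 2)

lemma gaussNorm_div_boxRatio {z : GaussianInt} (hz : z ≠ 0) :
    gaussNorm z / boxRatio (direction z) = boxNorm z := by
  have hnorm : ‖toComplex z‖ ^ 2 ≠ 0 := by
    simpa using GaussianInt.toComplex_eq_zero.not.mpr hz
  rw [gaussNorm_eq_sq_norm]
  simp only [boxRatio, ContinuousMap.coe_mk, toCircle_direction hz, div_inv_eq_mul, div_ofReal_re,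
    div_ofReal_im, div_pow, max_div_div_right (sq_nonneg ‖toComplex z‖), boxNorm,
    GaussianInt.intCast_re, GaussianInt.intCast_im]
  exact mul_div_cancel₀ _ hnorm

theorem tendsto_summatory_classWeight_boxNorm (hm : m ≠ 0) (ha : IsCoprime a m) :
    Tendsto (fun X ↦ summatory (classWeight m a) (fun p ↦ boxNorm p) X / X) atTop
      (𝓝 (Nat.card GaussianIntˣ / Nat.card (Residue m)ˣ *
        ∫ θ, boxRatio θ ∂AddCircle.haarAddCircle)) := by
  have h := (equidistributedBy_direction hm ha).tendsto_summatory_div finite_gaussNorm_prime_le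
    (classWeight_nonneg m a) boxRatio_pos
  simp only [gaussNorm_div_boxRatio (Subtype.prop _ : Prime _).ne_zero] at h
  rw [integral_smul_nnreal_measure] at h
  simpa [NNReal.smul_def] using h

end PrimeDistribution

section Counting

open Filter Topology Set

lemma tendsto_log_div_log_const_mul_sq {c : ℝ} (hc : 0 < c) :
    Tendsto (fun N : ℝ ↦ Real.log N / Real.log (c * N ^ 2)) atTop (𝓝 (1 / 2)) := by
  have h : Tendsto (fun N : ℝ ↦ (Real.log c / Real.log N + 2)⁻¹) atTop (𝓝 (0 + 2)⁻¹) :=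
    ((Real.tendsto_log_atTop.const_div_atTop _).add_const 2).inv₀ (by norm_num)
  rw [zero_add, ← one_div] at h
  refine h.congr' ?_
  filter_upwards [eventually_gt_atTop 1] with N hN
  have hlog := (Real.log_pos hN).ne'
  rw [Real.log_mul hc.ne' (by positivity), Real.log_pow]
  field_simp
  norm_num

lemma tendsto_log_div_log_div_log_sq :
    Tendsto (fun N : ℝ ↦ Real.log N / Real.log ((N / Real.log N) ^ 2)) atTop (𝓝 (1 / 2)) := by
  have hloglog : Tendsto (fun N : ℝ ↦ Real.log (Real.log N) / Real.log N) atTop (𝓝 0) :=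
    (Real.isLittleO_log_id_atTop.tendsto_div_nhds_zero).comp Real.tendsto_log_atTop
  have h : Tendsto (fun N : ℝ ↦ (2 * (1 - Real.log (Real.log N) / Real.log N))⁻¹) atTop
      (𝓝 (2 * (1 - 0))⁻¹) :=
    ((hloglog.const_sub 1).const_mul 2).inv₀ (by norm_num)
  rw [sub_zero, mul_one, ← one_div] at h
  refine h.congr' ?_
  filter_upwards [eventually_gt_atTop 1] with N hN
  have hlog := Real.log_pos hN
  rw [Real.log_pow, Real.log_div (by positivity) hlog.ne']
  field_simp
  norm_num

lemma tendsto_sq_two_mul_div_log_add_one :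
    Tendsto (fun N : ℝ ↦ (2 * (N / Real.log N) + 1) ^ 2 * Real.log N / N ^ 2) atTop (𝓝 0) := by
  have hlog : Tendsto (fun N : ℝ ↦ Real.log N / N) atTop (𝓝 0) :=
    Real.isLittleO_log_id_atTop.tendsto_div_nhds_zero
  have h : Tendsto (fun N : ℝ ↦ 4 / Real.log N + 4 / N + Real.log N / N * (1 / N)) atTop
      (𝓝 (0 + 0 + 0 * 0)) :=
    ((Real.tendsto_log_atTop.const_div_atTop _).add (tendsto_id.const_div_atTop _)).add
      (hlog.mul (tendsto_id.const_div_atTop _))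
  rw [add_zero, zero_mul, add_zero] at h
  refine h.congr' ?_
  filter_upwards [eventually_gt_atTop 1] with N hN
  have hlog := (Real.log_pos hN).ne'
  field_simp
  ring

-- Elements of size at most `N / log N` are negligible, and on the others the weight is
-- asymptotic to `2 * log N`.
theorem tendsto_mul_log_div_sq_of_tendsto {ϑ π : ℕ → ℝ} {c A : ℝ} (hc : 0 < c)
    (hlower : ∀ᶠ N in atTop, ϑ N ≤ π N * Real.log (c * N ^ 2))
    (hupper : ∀ N, ∀ M : ℝ, 1 < M → (π N - (2 * M + 1) ^ 2) * Real.log (M ^ 2) ≤ ϑ N)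
    (hϑ : Tendsto (fun N ↦ ϑ N / N ^ 2) atTop (𝓝 A)) :
    Tendsto (fun N ↦ π N * Real.log N / N ^ 2) atTop (𝓝 (A / 2)) := by
  have hlow := hϑ.mul ((tendsto_log_div_log_const_mul_sq hc).comp tendsto_natCast_atTop_atTop)
  have hupp := (tendsto_sq_two_mul_div_log_add_one.comp tendsto_natCast_atTop_atTop).add
    (hϑ.mul (tendsto_log_div_log_div_log_sq.comp tendsto_natCast_atTop_atTop))
  rw [zero_add] at hupp
  rw [← mul_one_div A 2]
  have hlog : ∀ᶠ N : ℕ in atTop, 0 < Real.log N :=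
    (Real.tendsto_log_atTop.comp tendsto_natCast_atTop_atTop).eventually_gt_atTop 0
  have hden {f : ℝ → ℝ} (h : Tendsto (fun N ↦ Real.log N / f N) atTop (𝓝 (1 / 2))) :
      ∀ᶠ N : ℕ in atTop, 0 < Real.log N ∧ 0 < f N := by
    filter_upwards [hlog, (h.comp tendsto_natCast_atTop_atTop).eventually_const_lt one_half_pos]
      with N hN hfN
    exact ⟨hN, (div_pos_iff_of_pos_left hN).mp hfN⟩
  refine tendsto_of_tendsto_of_tendsto_of_le_of_le' hlow hupp ?_ ?_
  · filter_upwards [hlower, hden (tendsto_log_div_log_const_mul_sq hc)]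
      with N hN ⟨hlogN, hpos⟩
    simp only [Function.comp_apply]
    rw [div_mul_div_comm, mul_comm ((N : ℝ) ^ 2), ← div_div]
    gcongr
    rw [div_le_iff₀ hpos]
    nlinarith
  · filter_upwards [hden tendsto_log_div_log_div_log_sq]
      with N ⟨hlogN, hpos⟩
    simp only [Function.comp_apply]
    rw [div_mul_div_comm, mul_comm ((N : ℝ) ^ 2), ← div_div, ← add_div]
    gcongr
    rw [← sub_le_iff_le_add', le_div_iff₀ hpos, ← sub_mul]
    have hM : 1 < N / Real.log N := by
      rw [Real.log_pow] at hpos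
      exact (Real.log_pos_iff (by positivity)).mp (pos_of_mul_pos_right hpos (by norm_num))
    have := hupper N _ hM
    nlinarith

/-- The Gaussian primes `x + yi` in the box `|x| ≤ N`, `|y| ≤ N` that are congruent to `a`
modulo `m`. -/
def primesInBox (m a : GaussianInt) (N : ℕ) : Set GaussianInt :=
  {z | Prime z ∧ |z.re| ≤ (N : ℤ) ∧ |z.im| ≤ (N : ℤ) ∧ m ∣ z - a}

lemma boxNorm_le_sq_iff {M : ℝ} (hM : 0 ≤ M) {z : GaussianInt} :
    boxNorm z ≤ M ^ 2 ↔ |(z.re : ℝ)| ≤ M ∧ |(z.im : ℝ)| ≤ M := by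
  rw [boxNorm, max_le_iff, sq_le_sq, sq_le_sq, abs_of_nonneg hM]

lemma boxNorm_le_gaussNorm (z : GaussianInt) : boxNorm z ≤ gaussNorm z := by
  rw [gaussNorm_eq]
  exact max_le (by linarith [sq_nonneg (z.im : ℝ)]) (by linarith [sq_nonneg (z.re : ℝ)])

lemma gaussNorm_le_two_mul_boxNorm (z : GaussianInt) : gaussNorm z ≤ 2 * boxNorm z := by
  rw [gaussNorm_eq, two_mul]
  exact add_le_add (le_max_left _ _) (le_max_right _ _)

lemma finite_boxNorm_le (X : ℝ) : {z : GaussianInt | boxNorm z ≤ X}.Finite :=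
  (finite_gaussNorm_le (2 * X)).subset fun z (hz : boxNorm z ≤ X) ↦
    (gaussNorm_le_two_mul_boxNorm z).trans (by gcongr)

lemma ncard_boxNorm_le_sq {M : ℝ} (hM : 0 ≤ M) :
    ({z : GaussianInt | boxNorm z ≤ M ^ 2}.ncard : ℝ) ≤ (2 * M + 1) ^ 2 := by
  let s : Finset ℤ := Finset.Icc (-⌊M⌋₊ : ℤ) ⌊M⌋₊
  have hmem {x : ℤ} (hx : |(x : ℝ)| ≤ M) : x ∈ s := by
    rw [Finset.mem_Icc, ← abs_le, Int.abs_eq_natAbs, Nat.cast_le]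
    exact Nat.le_floor (by simpa using hx)
  have hmaps : MapsTo (fun z : GaussianInt ↦ (z.re, z.im)) {z | boxNorm z ≤ M ^ 2}
      (s ×ˢ s : Finset (ℤ × ℤ)) := fun z hz ↦ by
    obtain ⟨hre, him⟩ := (boxNorm_le_sq_iff hM).mp hz
    exact Finset.mem_coe.mpr (Finset.mk_mem_product (hmem hre) (hmem him))
  have hinj : InjOn (fun z : GaussianInt ↦ (z.re, z.im)) {z | boxNorm z ≤ M ^ 2} :=
    fun z _ w _ h ↦ Zsqrtd.ext (congrArg Prod.fst h) (congrArg Prod.snd h)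
  have hcard : s.card = 2 * ⌊M⌋₊ + 1 := by
    rw [Int.card_Icc]
    omega
  have hle := ncard_le_ncard_of_injOn _ hmaps hinj (Finset.finite_toSet _)
  rw [ncard_coe_finset, Finset.card_product, hcard, ← sq] at hle
  calc ({z : GaussianInt | boxNorm z ≤ M ^ 2}.ncard : ℝ) ≤ (2 * ⌊M⌋₊ + 1) ^ 2 := by
        exact_mod_cast hle
    _ ≤ (2 * M + 1) ^ 2 := by
        gcongr
        exact Nat.floor_le hM

variable {m a z : GaussianInt} {N : ℕ}

lemma mem_primesInBox_iff :
    z ∈ primesInBox m a N ↔ Prime z ∧ boxNorm z ≤ (N : ℝ) ^ 2 ∧ residue m z = residue m a := by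
  rw [boxNorm_le_sq_iff N.cast_nonneg, residue_eq_iff_dvd, and_assoc]
  exact_mod_cast Iff.rfl

variable (m a N)

lemma finite_primesInBox : (primesInBox m a N).Finite :=
  (finite_boxNorm_le _).subset fun _ hz ↦ (mem_primesInBox_iff.mp hz).2.1

lemma summatory_classWeight_boxNorm :
    summatory (classWeight m a) (fun p ↦ boxNorm p) ((N : ℝ) ^ 2) =
      ∑ z ∈ (finite_primesInBox m a N).toFinset, Real.log (gaussNorm z) := by
  classical
  have hfin : {p : GaussPrime | boxNorm p ≤ (N : ℝ) ^ 2}.Finite :=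
    (finite_boxNorm_le _).preimage Subtype.val_injective.injOn
  rw [summatory_eq_sum hfin]
  simp only [classWeight, ← Finset.sum_filter]
  refine Finset.sum_nbij Subtype.val (fun p hp ↦ ?_) Subtype.val_injective.injOn
    (fun z hz ↦ ?_) fun _ _ ↦ rfl
  · rw [Finset.mem_filter, Finite.mem_toFinset] at hp
    exact (Finite.mem_toFinset _).mpr (mem_primesInBox_iff.mpr ⟨p.2, hp⟩)
  · obtain ⟨hz_prime, hz⟩ := mem_primesInBox_iff.mp ((Finite.mem_toFinset _).mp hz)
    refine ⟨⟨z, hz_prime⟩, ?_, rfl⟩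
    rw [Finset.mem_coe, Finset.mem_filter, Finite.mem_toFinset]
    exact hz

lemma sum_log_gaussNorm_primesInBox_le :
    ∑ z ∈ (finite_primesInBox m a N).toFinset, Real.log (gaussNorm z) ≤
      (primesInBox m a N).ncard * Real.log (2 * N ^ 2) := by
  rw [ncard_eq_toFinset_card _ (finite_primesInBox m a N), ← nsmul_eq_mul]
  refine Finset.sum_le_card_nsmul _ _ _ fun z hz ↦ ?_
  obtain ⟨hprime, hbox, -⟩ := mem_primesInBox_iff.mp ((Finite.mem_toFinset _).mp hz)
  exact Real.log_le_log (gaussNorm_pos hprime.ne_zero)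
    ((gaussNorm_le_two_mul_boxNorm z).trans (by gcongr))

lemma le_sum_log_gaussNorm_primesInBox {M : ℝ} (hM : 1 < M) :
    ((primesInBox m a N).ncard - (2 * M + 1) ^ 2) * Real.log (M ^ 2) ≤
      ∑ z ∈ (finite_primesInBox m a N).toFinset, Real.log (gaussNorm z) := by
  set small := {z : GaussianInt | boxNorm z ≤ M ^ 2}
  have hlarge : ((primesInBox m a N).ncard : ℝ) - (2 * M + 1) ^ 2 ≤
      (primesInBox m a N \ small).ncard := by
    have hdiff : ((primesInBox m a N).ncard : ℝ) ≤
        (primesInBox m a N \ small).ncard + small.ncard := by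
      exact_mod_cast ncard_le_ncard_sdiff_add_ncard _ _ (finite_boxNorm_le _)
    linarith [ncard_boxNorm_le_sq (one_pos.trans hM).le]
  have hfin := (finite_primesInBox m a N).sdiff (t := small)
  calc _ ≤ (primesInBox m a N \ small).ncard * Real.log (M ^ 2) := by
        gcongr
        exact Real.log_nonneg (one_le_pow₀ hM.le)
    _ ≤ ∑ z ∈ hfin.toFinset, Real.log (gaussNorm z) := by
        rw [ncard_eq_toFinset_card _ hfin, ← nsmul_eq_mul]
        refine Finset.card_nsmul_le_sum _ _ _ fun z hz ↦ ?_
        have hz_large : M ^ 2 < boxNorm z := not_le.mp ((Finite.mem_toFinset _).mp hz).2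
        gcongr
        exact hz_large.le.trans (boxNorm_le_gaussNorm z)
    _ ≤ _ := by
        refine Finset.sum_le_sum_of_subset_of_nonneg (Finite.toFinset_mono sdiff_subset)
          fun z hz _ ↦ ?_
        exact log_gaussNorm_prime_nonneg ⟨z, (mem_primesInBox_iff.mp
          ((Finite.mem_toFinset _).mp hz)).1⟩

variable {m a}

theorem tendsto_ncard_primesInBox_mul_log_div_sq (hm : m ≠ 0) (ha : IsCoprime a m) :
    Tendsto (fun N : ℕ ↦ ((primesInBox m a N).ncard : ℝ) * Real.log N / N ^ 2) atTop
      (𝓝 (Nat.card GaussianIntˣ / Nat.card (Residue m)ˣ *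
        (∫ θ, boxRatio θ ∂AddCircle.haarAddCircle) / 2)) := by
  have hsq : Tendsto (fun N : ℕ ↦ (N : ℝ) ^ 2) atTop atTop :=
    (tendsto_pow_atTop two_ne_zero).comp tendsto_natCast_atTop_atTop
  refine tendsto_mul_log_div_sq_of_tendsto two_pos
    (.of_forall (sum_log_gaussNorm_primesInBox_le m a))
    (fun N M hM ↦ le_sum_log_gaussNorm_primesInBox m a N hM) ?_
  simp only [← summatory_classWeight_boxNorm]
  exact (tendsto_summatory_classWeight_boxNorm hm ha).comp hsq

lemma ncard_primesInBox_one (a : GaussianInt) (N : ℕ) : (primesInBox 1 a N).ncard = Bcount N := by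
  simp [primesInBox, Bcount]

theorem stmt18_general (hm : m ≠ 0) (ha : IsCoprime a m) :
    Tendsto (fun N ↦ ((primesInBox m a N).ncard : ℝ) / Bcount N) atTop
      (𝓝 (1 / Nat.card (Residue m)ˣ)) := by
  have := finite_residue hm
  have hunits : (Nat.card GaussianIntˣ : ℝ) ≠ 0 := Nat.cast_ne_zero.mpr Nat.card_pos.ne'
  have hinteg := integral_boxRatio_pos
  have hone := tendsto_ncard_primesInBox_mul_log_div_sq one_ne_zero
    (isCoprime_one_right (x := (0 : GaussianInt)))
  have hcard_one : Nat.card (Residue 1)ˣ = 1 := by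
    have : Subsingleton (Residue 1) := Ideal.Quotient.subsingleton_iff.mpr Ideal.span_singleton_one
    exact Nat.card_unique
  rw [hcard_one] at hone
  have h := (tendsto_ncard_primesInBox_mul_log_div_sq hm ha).div hone (by positivity)
  convert h.congr' ?_ using 2
  · simp only [Nat.cast_one]
    field_simp
  · filter_upwards [eventually_gt_atTop 1] with N hN
    have hlog : 0 < Real.log N := Real.log_pos (by exact_mod_cast hN)
    have hN0 : (N : ℝ) ≠ 0 := by positivity
    simp only [Pi.div_apply, ncard_primesInBox_one]
    field_simp

end Counting

section Modulus

lemma card_ker_mul_card {R S : Type*} [Ring R] [Ring S] {f : R →+* S}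
    (hf : Function.Surjective f) :
    Nat.card (RingHom.ker f) * Nat.card S = Nat.card R := by
  have h := f.toAddMonoidHom.ker.card_mul_index
  rwa [AddSubgroup.index_ker, AddMonoidHom.range_eq_top.mpr hf, AddSubgroup.card_top] at h

lemma card_units_add_card_ker {R S : Type*} [Ring R] [Finite R] [Ring S] {f : R →+* S}
    (hf : ∀ x, IsUnit x ↔ f x ≠ 0) :
    Nat.card Rˣ + Nat.card (RingHom.ker f) = Nat.card R := by
  have hrange : Set.range (Units.val : Rˣ → R) = (RingHom.ker f : Set R)ᶜ := Set.ext hf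
  have hunits : Nat.card Rˣ = (RingHom.ker f : Set R)ᶜ.ncard := by
    rw [← hrange, ← Nat.card_coe_set_eq, Nat.card_range_of_injective Units.val_injective]
  rw [hunits, add_comm]
  exact Set.ncard_add_ncard_compl _

lemma card_units_residue_prime_pow {p : GaussianInt} (hp : Prime p) (k : ℕ) :
    (Nat.card (Residue (p ^ (k + 1)))ˣ : ℝ) = gaussNorm p ^ (k + 1) - gaussNorm p ^ k := by
  have := finite_residue (pow_ne_zero (k + 1) hp.ne_zero)
  have hle : Ideal.span {p ^ (k + 1)} ≤ Ideal.span {p} :=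
    Ideal.span_singleton_le_span_singleton.mpr (dvd_pow_self p k.succ_ne_zero)
  let f : Residue (p ^ (k + 1)) →+* Residue p := Ideal.Quotient.factor hle
  have hunit (x : Residue (p ^ (k + 1))) : IsUnit x ↔ f x ≠ 0 := by
    obtain ⟨z, rfl⟩ := Ideal.Quotient.mk_surjective x
    rw [isUnit_residue_iff, IsCoprime.pow_right_iff k.succ_pos, isCoprime_comm,
      hp.irreducible.coprime_iff_not_dvd, Ideal.Quotient.factor_mk, Ne, residue_eq_zero_iff_dvd]
  have hcard : (Nat.card (Residue (p ^ (k + 1))) : ℝ) = gaussNorm p ^ (k + 1) := by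
    rw [card_residue, map_pow]
  have hker : (Nat.card (RingHom.ker f) : ℝ) = gaussNorm p ^ k := by
    refine mul_right_cancel₀ (gaussNorm_pos hp.ne_zero).ne' ?_
    rw [← pow_succ, ← hcard, ← card_residue]
    exact_mod_cast card_ker_mul_card (Ideal.Quotient.factor_surjective hle)
  rw [← hker, ← hcard, eq_sub_iff_add_eq]
  exact_mod_cast card_units_add_card_ker hunit

lemma gaussNorm_one_add_gi : gaussNorm (1 + gi) = 2 := by
  rw [gaussNorm_eq]
  norm_num [gi]

lemma prime_one_add_gi : Prime (1 + gi) := by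
  have hnorm : Ideal.absNorm (Ideal.span {1 + gi}) = 2 := by
    rw [Ideal.absNorm_span_singleton, algebraNorm_eq_norm]
    decide
  refine Ideal.prime_of_irreducible_absNorm_span (by decide) ?_
  rw [hnorm]
  exact Nat.prime_two

lemma one_add_gi_pow_eight : (1 + gi) ^ 8 = 16 := by
  decide

lemma card_units_residue_sixteen : Nat.card (Residue 16)ˣ = 128 := by
  have h := card_units_residue_prime_pow prime_one_add_gi 7
  rw [one_add_gi_pow_eight, gaussNorm_one_add_gi] at h
  norm_num at h
  exact_mod_cast h

lemma isCoprime_neg_one_sub_six_mul_gi_sixteen : IsCoprime (-1 - 6 * gi) 16 := by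
  rw [← one_add_gi_pow_eight]
  refine IsCoprime.pow_right ⟨-1, -3 * (1 + gi), ?_⟩
  decide

end Modulus

/-- the Gaussian primes congruent to `-1-6i (mod 16)` have relative natural
density `1/128` among all Gaussian primes, counting in boxes `{|x| ≤ N, |y| ≤ N}`. -/
theorem stmt18 :
    Filter.Tendsto (fun N : ℕ => (Acount N : ℝ) / (Bcount N : ℝ)) Filter.atTop
      (nhds (1 / 128)) := by
  have h := stmt18_general (m := 16) (by norm_num) isCoprime_neg_one_sub_six_mul_gi_sixteen
  rwa [card_units_residue_sixteen] at h
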